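/- Let F be a totally real number field and D a quaternion algebra over F which is a division ring and is totally definite, i.e. for every real embedding σ : F → ℝ the ℝ-algebra D ⊗_{F,σ} ℝ is isomorphic to Hamilton's quaternions ℍ. Let * be the canonical (quaternion conjugation) involution of D. Then for any nonzero finite-dimensional right D-module V and any two positive definite (D,*)-Hermitian forms ψ₁, ψ₂ on V, the forms ψ₁^⊕4 and ψ₂^⊕4 are isometric. (This is the Albert type III case of the fourth-power Hermitian form theorem.) -/

import Mathlib

/-!
Why the theorem holds. Diagonalise both forms over `D` (`exists_orthogonal_basis`). The diagonal
entries are fixed by the involution, so they lie in `F`, and positivity of the trace makes them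
totally positive (`totally_positive_of_trace`, `exists_form_self_eq`). It therefore suffices that
every totally positive `a ∈ F` is the multiplier of a similitude of the unit form `Σ x* y` on `D⁴`:
the two forms then become isometric after passing to four copies, one diagonal entry at a time
(`exists_isometry`).

Multipliers form a group (`IsMultiplier.mul`, `IsMultiplier.inv`), and by Pfister's doubling
construction (`IsMultiplier.add`) it contains the nonzero sums of four reduced norms. With
anticommuting trace-zero elements `i`, `j` of reduced norms `α`, `β` it contains all nonzero values
of `Σ x² + α Σ y² + β Σ z²`, each sum being over four variables. Both `α` and `β` are totally
positive because `D` is totally definite (`nrd_pure_pos`), and `i` can be chosen with `α` an integer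
prime to `2` (`exists_coprime_value`, `exists_pure_coprime`).

The arithmetic core, `totally_positive_mem`, is that every totally positive element lies in the
group generated by these values. This would follow from the Hasse-Minkowski theorem; here it is
obtained from an elementary second moment argument. Up to elements of the group, `a` is an
integer close to a square `N₀²` at every real place and `1` modulo a high power of `2`
(`exists_real_approx`, `exists_norm_form`, `exists_sum_four_sq_approx`). Such an `a` is the quotient
of two values `a (1 + 4 m w)` and `1 + 4 m w` (`exists_core`, `value_identity`), where `w` has to
belong to two families at once, one of the shape `μ (x² + β u) + ψ(τ)` with `μ = m / a`, the other
of the shape `m (x² + β u) + ψ'(τ)`; here `u` is a sum of four squares.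

Both families live in a common box and each fills more than half of it, so the two meet
(`exists_image_in_window`, `exists_common_value`). The lower bound for the number of values comes
from Cauchy-Schwarz: a map with few collisions has a large image (`card_sq_le_card_image`). A
collision forces a congruence modulo `2 μ g`, with `g` the difference of the two `x`, and is as
rare as expected because the `ψ(τ)` are equidistributed to those moduli (`exists_equidistributed`,
which rests on the count `card_diff_sq_le` in finite rings, and `collision_count`,
`exists_large_image`). The remaining inputs are a bound for a harmonic sum (`harmonic_sum_le`) and
the positive density of sums of four squares among the integers of `F` (`four_sq_density`).
-/

open MulOpposite TensorProduct

/-- The trace of left multiplication by `x` on the finite-dimensional `ℚ`-algebra `A`. -/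
noncomputable def algTraceQ (A : Type*) [Ring A] [Algebra ℚ A] (x : A) : ℚ :=
  LinearMap.trace ℚ A (LinearMap.mulLeft ℚ x)

/-- `ψ` is a `(D,*)`-Hermitian form on the right `D`-module `V`. -/
def IsHermitianForm (D : Type*) [Ring D] [Algebra ℚ D] (V : Type*) [AddCommGroup V]
    [Module Dᵐᵒᵖ V] (st : D → D) (ψ : V → V → D) : Prop :=
  (∀ v v' w : V, ψ (v + v') w = ψ v w + ψ v' w) ∧
  (∀ v w w' : V, ψ v (w + w') = ψ v w + ψ v w') ∧
  (∀ (a : D) (v w : V), ψ (op a • v) w = st a * ψ v w) ∧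
  (∀ (b : D) (v w : V), ψ v (op b • w) = ψ v w * b) ∧
  (∀ v w : V, ψ w v = st (ψ v w))

/-- `ψ` is a positive definite `(D,*)`-Hermitian form on the right `D`-module `V`. -/
def IsPosDefHermitianForm (D : Type*) [Ring D] [Algebra ℚ D] (V : Type*) [AddCommGroup V]
    [Module Dᵐᵒᵖ V] (st : D → D) (ψ : V → V → D) : Prop :=
  IsHermitianForm D V st ψ ∧ ∀ v : V, v ≠ 0 → 0 < algTraceQ D (ψ v v)

namespace FourthPower
open NumberField Module

/-! ### Integral basis coordinates, cubes and embeddings -/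

section Toolkit
variable {F : Type*} [Field F] [NumberField F]

/-- The index set of the integral basis of `F`; it has `[F : ℚ]` elements. -/
abbrev BIdx (F : Type*) [Field F] [NumberField F] := Free.ChooseBasisIndex ℤ (𝓞 F)

/-- The `i`-th coordinate of `x` in the integral basis, as a real number. -/
noncomputable def crd (x : F) (i : BIdx F) : ℝ := ((integralBasis F).repr x i : ℚ)

lemma card_bIdx : Fintype.card (BIdx F) = finrank ℚ F := by
  rw [Module.finrank_eq_card_basis (integralBasis F)]

lemma crd_add (x y : F) (i) : crd (x + y) i = crd x i + crd y i := by simp [crd]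
lemma crd_sub (x y : F) (i) : crd (x - y) i = crd x i - crd y i := by simp [crd]
lemma crd_neg (x : F) (i) : crd (-x) i = - crd x i := by simp [crd]
lemma crd_rat_mul (q : ℚ) (x : F) (i) : crd ((q : F) * x) i = q * crd x i := by
  have : (q : F) * x = q • x := by rw [Algebra.smul_def]; rfl
  rw [this]; simp [crd]
lemma crd_int (x : 𝓞 F) (i) : crd (x : F) i = ((RingOfIntegers.basis F).repr x i : ℤ) := by
  simp [crd, integralBasis_repr_apply]

lemma crd_ext {x y : F} (h : ∀ i, crd x i = crd y i) : x = y := by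
  apply (integralBasis F).repr.injective
  ext i
  have := h i
  simp only [crd] at this
  exact_mod_cast this

lemma exists_crd_le_house (F : Type*) [Field F] [NumberField F] :
    ∃ C : ℝ, 1 ≤ C ∧ ∀ (x : F) (i : BIdx F), |crd x i| ≤ C * house x := by
  let B := canonicalEmbedding.latticeBasis F
  let T : ((F →+* ℂ) → ℂ) →L[ℂ] (BIdx F → ℂ) :=
    LinearMap.toContinuousLinearMap (B.equivFun : ((F →+* ℂ) → ℂ) →ₗ[ℂ] (BIdx F → ℂ))
  refine ⟨max 1 ‖T‖, le_max_left _ _, fun x i => ?_⟩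
  have h1 : T (canonicalEmbedding F x) i = ((crd x i : ℝ) : ℂ) := by
    have := canonicalEmbedding.integralBasis_repr_apply F x i
    simp only [crd]
    push_cast
    rw [← this]
    rfl
  have h2 : |crd x i| = ‖T (canonicalEmbedding F x) i‖ := by
    rw [h1, Complex.norm_real, Real.norm_eq_abs]
  rw [h2]
  calc _ ≤ ‖T (canonicalEmbedding F x)‖ := norm_le_pi_norm _ _
    _ ≤ ‖T‖ * ‖canonicalEmbedding F x‖ := T.le_opNorm _
    _ ≤ max 1 ‖T‖ * house x := by
      apply mul_le_mul_of_nonneg_right (le_max_right _ _) (norm_nonneg _)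

lemma house_rat_mul (q : ℚ) (x : F) : house ((q : F) * x) = |(q : ℝ)| * house x := by
  have : canonicalEmbedding F ((q : F) * x) = (q : ℂ) • canonicalEmbedding F x := by
    ext s; simp
  rw [house, this, norm_smul]
  simp [house]

lemma house_neg (x : F) : house (-x) = house x := by simp [house]
lemma house_sub_le (x y : F) : house (x - y) ≤ house x + house y := by
  rw [sub_eq_add_neg]; exact (house_add_le _ _).trans_eq (by rw [house_neg])

lemma house_le_of {x : F} {r : ℝ} (hr : ∀ σ : F →+* ℂ, ‖σ x‖ ≤ r) : house x ≤ r :=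
  (canonicalEmbedding.norm_le_iff x r).2 hr

lemma exists_house_le_crd (F : Type*) [Field F] [NumberField F] :
    ∃ C : ℝ, 1 ≤ C ∧ ∀ (x : F) (M : ℝ), (∀ i : BIdx F, |crd x i| ≤ M) → house x ≤ C * M := by
  refine ⟨max 1 (∑ i, house (integralBasis F i)), le_max_left _ _, fun x M h => ?_⟩
  have hx : x = ∑ i, (((integralBasis F).repr x i : ℚ) : F) * integralBasis F i := by
    conv_lhs => rw [← (integralBasis F).sum_repr x]
    refine Finset.sum_congr rfl fun i _ => ?_
    rw [Algebra.smul_def]; rfl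
  have hM : 0 ≤ M := by
    obtain ⟨i⟩ : Nonempty (BIdx F) := (integralBasis F).index_nonempty
    exact (abs_nonneg _).trans (h i)
  calc house x ≤ ∑ i, house ((((integralBasis F).repr x i : ℚ) : F) * integralBasis F i) := by
        conv_lhs => rw [hx]
        exact house_sum_le_sum_house _ _
    _ ≤ ∑ i, M * house (integralBasis F i) := by
        refine Finset.sum_le_sum fun i _ => ?_
        rw [house_rat_mul]
        exact mul_le_mul_of_nonneg_right (h i) (house_nonneg _)
    _ = (∑ i, house (integralBasis F i)) * M := by rw [← Finset.mul_sum, mul_comm]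
    _ ≤ _ := mul_le_mul_of_nonneg_right (le_max_right _ _) hM

/-- The algebraic integer with prescribed coordinates. -/
noncomputable def ofCrd (c : BIdx F → ℤ) : 𝓞 F := (RingOfIntegers.basis F).equivFun.symm c

lemma crd_ofCrd (c : BIdx F → ℤ) (i) : crd (ofCrd c : F) i = c i := by
  rw [crd_int]
  have : (RingOfIntegers.basis F).repr (ofCrd c) =
      (RingOfIntegers.basis F).equivFun (ofCrd c) := rfl
  rw [this, ofCrd, LinearEquiv.apply_symm_apply]

lemma ofCrd_injective : Function.Injective (ofCrd (F := F)) :=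
  (RingOfIntegers.basis F).equivFun.symm.injective

/-- The cube of algebraic integers whose coordinates lie in `{0, …, n - 1}`. -/
noncomputable def cube (F : Type*) [Field F] [NumberField F] (n : ℕ) : Finset (𝓞 F) :=
  (Fintype.piFinset fun _ : BIdx F => (Finset.range n).image ((↑) : ℕ → ℤ)).map
    ⟨ofCrd, ofCrd_injective⟩

lemma card_cube (n : ℕ) : (cube F n).card = n ^ finrank ℚ F := by
  rw [cube, Finset.card_map, Fintype.card_piFinset]
  simp only [Finset.prod_const, Finset.card_univ, card_bIdx]
  rw [Finset.card_image_of_injective _ Nat.cast_injective, Finset.card_range]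

lemma crd_of_mem_cube {n : ℕ} {x : 𝓞 F} (hx : x ∈ cube F n) (i) :
    0 ≤ crd (x : F) i ∧ crd (x : F) i ≤ n := by
  simp only [cube, Finset.mem_map, Fintype.mem_piFinset, Finset.mem_image, Finset.mem_range,
    Function.Embedding.coeFn_mk] at hx
  obtain ⟨c, hc, rfl⟩ := hx
  obtain ⟨k, hk, hk'⟩ := hc i
  rw [crd_ofCrd, ← hk']
  constructor
  · positivity
  · push_cast; exact_mod_cast hk.le

/-- Counting algebraic integers in a box. -/
lemma card_box_le (S : Finset (𝓞 F)) (v : BIdx F → ℝ) (L : ℝ) (hL : 0 ≤ L)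
    (h : ∀ x ∈ S, ∀ i, v i ≤ crd (x : F) i ∧ crd (x : F) i ≤ v i + L) :
    (S.card : ℝ) ≤ (L + 1) ^ finrank ℚ F := by
  classical
  let Q : Finset (BIdx F → ℤ) := Fintype.piFinset fun i => Finset.Icc ⌈v i⌉ ⌊v i + L⌋
  have h1 : S.card ≤ Q.card := by
    refine Finset.card_le_card_of_injOn (fun x i => (RingOfIntegers.basis F).repr x i) ?_ ?_
    · intro x hx
      simp only [Q, Finset.mem_coe, Fintype.mem_piFinset, Finset.mem_Icc]
      intro i
      have := h x hx i
      rw [crd_int] at this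
      exact ⟨Int.ceil_le.2 this.1, Int.le_floor.2 this.2⟩
    · intro x _ y _ hxy
      apply (RingOfIntegers.basis F).repr.injective
      ext i
      exact congrFun hxy i
  calc (S.card : ℝ) ≤ Q.card := by exact_mod_cast h1
    _ = ∏ i : BIdx F, ((Finset.Icc ⌈v i⌉ ⌊v i + L⌋).card : ℝ) := by
      rw [Fintype.card_piFinset]; push_cast; rfl
    _ ≤ ∏ i : BIdx F, (L + 1) := by
      refine Finset.prod_le_prod (fun i _ => by positivity) fun i _ => ?_
      rw [Int.card_Icc]
      have h2 : ((⌊v i + L⌋ + 1 - ⌈v i⌉ : ℤ) : ℝ) ≤ L + 1 := by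
        push_cast
        linarith [Int.floor_le (v i + L), Int.le_ceil (v i)]
      rcases le_total 0 (⌊v i + L⌋ + 1 - ⌈v i⌉) with h3 | h3
      · have : (((⌊v i + L⌋ + 1 - ⌈v i⌉).toNat : ℤ) : ℝ) = ((⌊v i + L⌋ + 1 - ⌈v i⌉ : ℤ) : ℝ) := by
          rw [Int.toNat_of_nonneg h3]
        rw [← Int.cast_natCast, this]; exact h2
      · rw [Int.toNat_of_nonpos h3]; push_cast; linarith
    _ = _ := by rw [Finset.prod_const, Finset.card_univ, card_bIdx]

lemma abs_norm_eq_prod (x : F) : |((Algebra.norm ℚ x : ℚ) : ℝ)| = ∏ σ : F →+* ℂ, ‖σ x‖ := by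
  have h := Algebra.norm_eq_prod_embeddings ℚ ℂ x
  have h1 : ‖algebraMap ℚ ℂ (Algebra.norm ℚ x)‖ = |((Algebra.norm ℚ x : ℚ) : ℝ)| := by
    simp
  rw [← h1, h, norm_prod]
  exact (Fintype.prod_equiv (RingHom.equivRatAlgHom F ℂ) (fun σ : F →+* ℂ => ‖σ x‖)
    (fun σ : F →ₐ[ℚ] ℂ => ‖σ x‖) (fun f => rfl)).symm

/-- The absolute value of the norm from `F` to `ℚ`. -/
noncomputable def nm (x : F) : ℝ := |((Algebra.norm ℚ x : ℚ) : ℝ)|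

lemma nm_mul (x y : F) : nm (x * y) = nm x * nm y := by simp [nm, abs_mul]
lemma nm_one : nm (1 : F) = 1 := by simp [nm]
lemma nm_nonneg (x : F) : 0 ≤ nm x := abs_nonneg _
lemma nm_pos {x : F} (h : x ≠ 0) : 0 < nm x := by
  simp only [nm, abs_pos]; exact_mod_cast (Algebra.norm_ne_zero_iff).2 h
lemma nm_natCast (n : ℕ) : nm (n : F) = (n : ℝ) ^ finrank ℚ F := by
  have : (n : F) = algebraMap ℚ F n := by simp
  rw [nm, this, Algebra.norm_algebraMap]
  push_cast
  rw [abs_of_nonneg (by positivity)]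

lemma nm_le_of (x y : F) (c : ℝ) (h : ∀ σ : F →+* ℂ, ‖σ x‖ ≤ c * ‖σ y‖) :
    nm x ≤ c ^ finrank ℚ F * nm y := by
  rw [nm, nm, abs_norm_eq_prod, abs_norm_eq_prod]
  calc _ ≤ ∏ σ : F →+* ℂ, (c * ‖σ y‖) :=
        Finset.prod_le_prod (fun _ _ => norm_nonneg _) fun σ _ => h σ
    _ = _ := by
      rw [Finset.prod_mul_distrib, Finset.prod_const, Finset.card_univ, Embeddings.card]

lemma nm_int (x : 𝓞 F) : nm (x : F) = (Ideal.absNorm (Ideal.span {x}) : ℕ) := by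
  rw [Ideal.absNorm_span_singleton, nm]
  have : (Algebra.norm ℚ (x : F)) = ((Algebra.norm ℤ x : ℤ) : ℚ) :=
    (Algebra.coe_norm_int x).symm
  rw [this]
  push_cast
  rw [Nat.cast_natAbs]; push_cast; rfl

/-- Every real vector indexed by the embeddings of a totally real field is within a bounded
distance of an algebraic integer. -/
lemma exists_approx (ht : ∀ (σ : F →+* ℂ) (x : F), (σ x).im = 0) :
    ∃ C : ℝ, 0 < C ∧ ∀ v : (F →+* ℂ) → ℝ, ∃ k : 𝓞 F, ∀ σ, |(σ (k : F)).re - v σ| ≤ C := by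
  let B := canonicalEmbedding.latticeBasis F
  refine ⟨∑ i, house (integralBasis F i) + 1, ?_, fun v => ?_⟩
  · have : 0 ≤ ∑ i, house (integralBasis F i) := Finset.sum_nonneg fun _ _ => house_nonneg _
    linarith
  let c : BIdx F → ℝ := fun i => (B.repr (fun σ => (v σ : ℂ)) i).re
  have hv : ∀ σ, v σ = ∑ i, c i * (σ (integralBasis F i)).re := by
    intro σ
    have h1 := congrFun (B.sum_repr (fun σ => (v σ : ℂ))) σ
    have h2 := congrArg Complex.re h1
    rw [Finset.sum_apply, Complex.re_sum] at h2
    simp only [Complex.ofReal_re] at h2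
    rw [← h2]
    refine Finset.sum_congr rfl fun i _ => ?_
    have h3 : B i σ = σ (integralBasis F i) := by
      simp only [B, canonicalEmbedding.latticeBasis_apply]; rfl
    rw [Pi.smul_apply, smul_eq_mul, h3, Complex.mul_re, ht σ]
    simp [c]
  refine ⟨ofCrd fun i => round (c i), fun σ => ?_⟩
  have hk : (ofCrd (fun i => round (c i)) : F) =
      ∑ i, ((round (c i) : ℤ) : F) * integralBasis F i := by
    rw [ofCrd, Basis.equivFun_symm_apply]
    rw [RingOfIntegers.coe_eq_algebraMap, map_sum]
    refine Finset.sum_congr rfl fun i _ => ?_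
    rw [zsmul_eq_mul, map_mul, integralBasis_apply]; simp
  rw [hk, hv σ, map_sum, Complex.re_sum, ← Finset.sum_sub_distrib]
  refine (Finset.abs_sum_le_sum_abs _ _).trans ?_
  refine le_trans (Finset.sum_le_sum (g := fun i => house (integralBasis F i)) fun i _ => ?_)
    (by linarith)
  rw [map_mul, map_intCast, ← Complex.ofReal_intCast, Complex.re_ofReal_mul, ← sub_mul, abs_mul]
  have h1 : |((round (c i) : ℤ) : ℝ) - c i| ≤ 1 := by
    rw [abs_sub_comm]; exact (abs_sub_round _).trans (by norm_num)
  calc _ ≤ 1 * ‖σ (integralBasis F i)‖ :=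
        mul_le_mul h1 (Complex.abs_re_le_norm _) (abs_nonneg _) zero_le_one
    _ ≤ _ := by rw [one_mul]; exact norm_embedding_le_house _ _

end Toolkit

/-! ### Residue classes and lattice point counts -/

section Packing
variable {F : Type*} [Field F] [NumberField F]

/-- The absolute norm of an algebraic integer, as a natural number. -/
noncomputable def nN (x : 𝓞 F) : ℕ := Ideal.absNorm (Ideal.span {x})

lemma nm_eq_nN (x : 𝓞 F) : nm (x : F) = (nN x : ℝ) := nm_int x
lemma dvd_nN (x : 𝓞 F) : x ∣ ((nN x : ℕ) : 𝓞 F) :=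
  Ideal.mem_span_singleton.1 (Ideal.absNorm_mem _)
lemma nN_mul (x y : 𝓞 F) : nN (x * y) = nN x * nN y := by
  simp [nN, ← Ideal.span_singleton_mul_span_singleton]
lemma nN_ne_zero {x : 𝓞 F} (h : x ≠ 0) : nN x ≠ 0 := by
  rw [nN, Ne, Ideal.absNorm_eq_zero_iff, Ideal.span_singleton_eq_bot]; exact h
lemma nN_natCast (n : ℕ) : nN (n : 𝓞 F) = n ^ finrank ℚ F := by
  have := nm_natCast (F := F) n
  have h2 : ((n : 𝓞 F) : F) = n := by simp
  rw [← h2, nm_eq_nN] at this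
  exact_mod_cast this

lemma card_quot_span (x : 𝓞 F) : Nat.card (𝓞 F ⧸ Ideal.span {x}) = nN x := by
  rw [nN, Ideal.absNorm_apply, Submodule.cardQuot_apply]

lemma finite_quot_span {x : 𝓞 F} (h : x ≠ 0) : Finite (𝓞 F ⧸ Ideal.span {x}) := by
  apply Nat.finite_of_card_ne_zero
  rw [card_quot_span]; exact nN_ne_zero h

/-- The denominator of `x` may be taken to be an arbitrarily large natural number. -/
lemma exists_nat_mul_integral (x : F) (M : ℝ) :
    ∃ R : ℕ, 0 < R ∧ M ≤ R ∧ ∃ y : 𝓞 F, (y : F) = R * x := by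
  obtain ⟨a, b, hb, rfl⟩ := IsFractionRing.div_surjective (A := 𝓞 F) x
  have hb0 : b ≠ 0 := nonZeroDivisors.ne_zero hb
  obtain ⟨c, hc⟩ := dvd_nN b
  have h0 := Nat.pos_of_ne_zero (nN_ne_zero hb0)
  refine ⟨nN b * (⌈M⌉₊ + 1), by positivity, ?_, c * a * ((⌈M⌉₊ + 1 : ℕ) : 𝓞 F), ?_⟩
  · have h1 : ⌈M⌉₊ + 1 ≤ nN b * (⌈M⌉₊ + 1) := Nat.le_mul_of_pos_left _ h0
    have h2 : ((⌈M⌉₊ + 1 : ℕ) : ℝ) ≤ (nN b * (⌈M⌉₊ + 1) : ℕ) := by exact_mod_cast h1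
    push_cast at h2 ⊢
    linarith [Nat.le_ceil M]
  · have hbF : algebraMap (𝓞 F) F b ≠ 0 := by simpa using hb0
    have := congrArg (algebraMap (𝓞 F) F) hc
    simp only [map_natCast, map_mul] at this
    push_cast
    rw [this]
    simp only [RingOfIntegers.coe_eq_algebraMap] at *
    field_simp

/-- Every residue class modulo `η` has a representative of size `O(house η)`. -/
lemma exists_small_rep {Cr Cb : ℝ} (hCr : ∀ (x : F) (i : BIdx F), |crd x i| ≤ Cr * house x)
    (hCr1 : 1 ≤ Cr)
    (hCb : ∀ (x : F) (M : ℝ), (∀ i : BIdx F, |crd x i| ≤ M) → house x ≤ Cb * M)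
    (η : 𝓞 F) (hη : η ≠ 0) (r : 𝓞 F) :
    ∃ r' : 𝓞 F, η ∣ r' - r ∧ ∀ i, |crd (r' : F) i| ≤ Cr * Cb * house (η : F) := by
  let f : 𝓞 F := ofCrd fun i => ⌊crd ((r : F) / η) i⌋
  have hη' : (η : F) ≠ 0 := by simpa using hη
  refine ⟨r - η * f, ⟨-f, by ring⟩, fun i => ?_⟩
  have h1 : house ((r : F) / η - f) ≤ Cb * 1 := by
    apply hCb
    intro i
    rw [crd_sub, crd_ofCrd, Int.self_sub_floor, abs_of_nonneg (Int.fract_nonneg _)]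
    exact (Int.fract_lt_one _).le
  have h2 : ((r - η * f : 𝓞 F) : F) = η * ((r : F) / η - f) := by
    push_cast; field_simp
  calc _ ≤ Cr * house ((r - η * f : 𝓞 F) : F) := hCr _ _
    _ ≤ Cr * (house (η : F) * (Cb * 1)) := by
      rw [h2]
      gcongr
      exact (house_mul_le _ _).trans (mul_le_mul_of_nonneg_left h1 (house_nonneg _))
    _ = _ := by ring

/-- A packing bound: the number of algebraic integers `g` with `g / y` in a cube of side `L` is at
most about `|N y| L ^ d`. -/
lemma card_packing {Cr Cb : ℝ} (hCr : ∀ (x : F) (i : BIdx F), |crd x i| ≤ Cr * house x)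
    (hCr1 : 1 ≤ Cr) (hCb1 : 1 ≤ Cb)
    (hCb : ∀ (x : F) (M : ℝ), (∀ i : BIdx F, |crd x i| ≤ M) → house x ≤ Cb * M)
    (y : F) (hy : y ≠ 0) (h : ℝ) (hpos : 0 < h) (hyh : house y⁻¹ ≤ h)
    (G : Finset (𝓞 F)) (v : BIdx F → ℝ) (L : ℝ) (hL : 0 ≤ L)
    (hG : ∀ g ∈ G, ∀ i, v i ≤ crd ((g : F) / y) i ∧ crd ((g : F) / y) i ≤ v i + L) :
    (G.card : ℝ) ≤ nm y * (L + 3 * Cr * Cb * h) ^ finrank ℚ F := by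
  classical
  obtain ⟨R, hR, hRh, η, hη⟩ := exists_nat_mul_integral y⁻¹ h⁻¹
  have hR' : (0 : ℝ) < R := by exact_mod_cast hR
  have hη0 : η ≠ 0 := by
    rintro rfl
    simp at hη
    rcases hη with h | h
    · omega
    · exact hy h
  have hηh : house (η : F) ≤ R * h := by
    rw [hη, house_nat_mul]; gcongr
  choose rep hrep1 hrep2 using exists_small_rep hCr hCr1 hCb η hη0
  have := finite_quot_span hη0
  have := Fintype.ofFinite (𝓞 F ⧸ Ideal.span {η})
  let f : 𝓞 F × (𝓞 F ⧸ Ideal.span {η}) → 𝓞 F := fun p => p.1 * η + rep p.2.out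
  have hf : Function.Injective f := by
    rintro ⟨g, q⟩ ⟨g', q'⟩ h
    simp only [f] at h
    have key : ∀ (g : 𝓞 F) (q : 𝓞 F ⧸ Ideal.span {η}),
        Ideal.Quotient.mk (Ideal.span {η}) (g * η + rep q.out) = q := by
      intro g q
      conv_rhs => rw [← Ideal.Quotient.mk_out q]
      rw [Ideal.Quotient.mk_eq_mk_iff_sub_mem, Ideal.mem_span_singleton]
      have := hrep1 q.out
      have h2 : g * η + rep q.out - q.out = g * η + (rep q.out - q.out) := by ring
      rw [h2]
      exact dvd_add (dvd_mul_left _ _) this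
    have hq : q = q' := by rw [← key g q, ← key g' q', h]
    subst hq
    have := mul_right_cancel₀ hη0 (add_right_cancel h)
    rw [this]
  let S : Finset (𝓞 F) := (G ×ˢ Finset.univ).map ⟨f, hf⟩
  have hS : (S.card : ℝ) = G.card * nm (η : F) := by
    rw [Finset.card_map, Finset.card_product, nm_eq_nN, ← card_quot_span, Nat.card_eq_fintype_card,
      Finset.card_univ]
    push_cast; rfl
  have hbox := card_box_le S (fun i => R * v i - R * (Cr * Cb * h)) (R * L + 2 * R * (Cr * Cb * h))
    (by positivity) (by
      intro x hx i
      simp only [S, Finset.mem_map, Finset.mem_product, Finset.mem_univ, and_true,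
        Function.Embedding.coeFn_mk] at hx
      obtain ⟨⟨g, q⟩, hg, rfl⟩ := hx
      have e1 : ((f (g, q) : 𝓞 F) : F) = ((R : ℚ) : F) * ((g : F) / y) + rep q.out := by
        have e0 : ((f (g, q) : 𝓞 F) : F) = (g : F) * (η : F) + rep q.out := by
          simp only [f]; exact (map_add (algebraMap (𝓞 F) F) _ _).trans (by rw [map_mul])
        rw [e0, hη]; push_cast; field_simp
      rw [e1, crd_add, crd_rat_mul]
      have h1 := hG g hg i
      have h2 := (abs_le.1 (hrep2 q.out i))
      have h3 : Cr * Cb * house (η : F) ≤ R * (Cr * Cb * h) := by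
        calc _ ≤ Cr * Cb * (R * h) := by gcongr
          _ = _ := by ring
      push_cast
      have h4 := mul_le_mul_of_nonneg_left h1.1 hR'.le
      have h5 := mul_le_mul_of_nonneg_left h1.2 hR'.le
      constructor <;> linarith [h2.1, h2.2])
  rw [hS] at hbox
  have hnη : nm (η : F) * nm y = R ^ finrank ℚ F := by
    rw [← nm_mul, hη, mul_assoc, inv_mul_cancel₀ hy, mul_one, nm_natCast]
  have h1 : (1 : ℝ) ≤ R * (Cr * Cb * h) := by
    have : 1 ≤ R * h := by
      rw [inv_le_iff_one_le_mul₀ hpos] at hRh; linarith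
    have h2 : 1 ≤ Cr * Cb := one_le_mul_of_one_le_of_one_le hCr1 hCb1
    calc (1 : ℝ) ≤ (R * h) * (Cr * Cb) := one_le_mul_of_one_le_of_one_le this h2
      _ = _ := by ring
  have h2 : G.card * nm (η : F) ≤ (R : ℝ) ^ finrank ℚ F * (L + 3 * Cr * Cb * h) ^ finrank ℚ F := by
    rw [← mul_pow]
    refine hbox.trans (pow_le_pow_left₀ (by positivity) ?_ _)
    linarith
  rw [← hnη] at h2
  have hp : 0 < nm (η : F) := nm_pos (by simpa using hη0)
  refine le_of_mul_le_mul_right ?_ hp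
  linarith

/-- The harmonic sum `∑ 1 / |N g|` over those `g` which differ from the fixed number `y` by a factor
`1 + t` with `t` in a cube of side `δ` is at most about `δ ^ d`. -/
lemma harmonic_sum_le (F : Type*) [Field F] [NumberField F] (ε : ℝ) (hε : 0 < ε) :
    ∃ δ₀ : ℝ, 0 < δ₀ ∧ ∀ δ : ℝ, 0 < δ → δ ≤ δ₀ → ∃ κ : ℝ, 0 < κ ∧ ∀ (G : Finset (𝓞 F)) (y : F),
      (∀ g ∈ G, ∃ t ζ : F, (g : F) * (1 + t) = y + ζ ∧ (∀ i, 0 ≤ crd t i ∧ crd t i ≤ δ) ∧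
        house ζ ≤ 1 ∧ ∀ σ : F →+* ℂ, κ ≤ ‖σ (g : F)‖) →
      ∑ g ∈ G, 1 / nm (g : F) ≤ δ ^ finrank ℚ F * (1 + ε) := by
  obtain ⟨Cr, hCr1, hCr⟩ := exists_crd_le_house F
  obtain ⟨Cb, hCb1, hCb⟩ := exists_house_le_crd F
  set d := finrank ℚ F
  set c := 11 * Cr * Cb ^ 2
  have hcont : ContinuousAt (fun δ : ℝ => ((1 + c * δ) * ((1 + Cb * δ) / (1 - δ ^ 2))) ^ d) 0 := by
    apply ContinuousAt.pow
    apply ContinuousAt.mul (by fun_prop)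
    apply ContinuousAt.div (by fun_prop) (by fun_prop)
    norm_num
  have hev : ∀ᶠ δ : ℝ in nhds 0, ((1 + c * δ) * ((1 + Cb * δ) / (1 - δ ^ 2))) ^ d < 1 + ε := by
    apply hcont.eventually_lt continuousAt_const
    simp; exact hε
  obtain ⟨r, hr, hball⟩ := Metric.eventually_nhds_iff.1 hev
  refine ⟨min (r / 2) (1 / (2 * Cb)), by positivity, fun δ hδ hδ0 => ?_⟩
  have hδr : δ < r := by linarith [hδ0.trans (min_le_left _ _)]
  have hδb : Cb * δ ≤ 1 / 2 := by
    have := hδ0.trans (min_le_right _ _)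
    calc Cb * δ ≤ Cb * (1 / (2 * Cb)) := by gcongr
      _ = 1 / 2 := by field_simp
  have hδh : δ ≤ 1 / 2 := by nlinarith
  have hmain := hball (y := δ) (by simpa [abs_of_pos hδ] using hδr)
  refine ⟨4 / δ ^ 2, by positivity, fun G y hG => ?_⟩
  have hκ : 16 ≤ 4 / δ ^ 2 := by
    rw [le_div_iff₀ (by positivity)]; nlinarith
  set κ := 4 / δ ^ 2 with hκdef
  rcases G.eq_empty_or_nonempty with rfl | hne
  · simp; positivity
  -- the embeddings of `y` are bounded below
  have hT : ∀ t : F, (∀ i, 0 ≤ crd t i ∧ crd t i ≤ δ) → ∀ σ : F →+* ℂ, ‖σ t‖ ≤ Cb * δ := by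
    intro t ht σ
    refine (norm_embedding_le_house _ _).trans (hCb t δ fun i => ?_)
    rw [abs_of_nonneg (ht i).1]; exact (ht i).2
  have hlow : ∀ t : F, (∀ i, 0 ≤ crd t i ∧ crd t i ≤ δ) → ∀ σ : F →+* ℂ, 1 / 2 ≤ ‖1 + σ t‖ := by
    intro t ht σ
    have h1 := norm_sub_le (1 + σ t) (σ t)
    rw [add_sub_cancel_right, norm_one] at h1
    linarith [hT t ht σ]
  have hylow : ∀ σ : F →+* ℂ, κ / 4 ≤ ‖σ y‖ := by
    intro σ
    obtain ⟨g, hg⟩ := hne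
    obtain ⟨t, ζ, h1, h2, h3, h4⟩ := hG g hg
    have e := congrArg σ h1
    simp only [map_mul, map_add, map_one] at e
    have h5 : ‖σ (g : F)‖ * ‖1 + σ t‖ ≤ ‖σ y‖ + ‖σ ζ‖ := by
      rw [← norm_mul, e]; exact norm_add_le _ _
    have h6 := (norm_embedding_le_house ζ σ).trans h3
    have h7 : κ * (1 / 2) ≤ ‖σ (g : F)‖ * ‖1 + σ t‖ := by
      apply mul_le_mul (h4 σ) (hlow t h2 σ) (by norm_num) (norm_nonneg _)
    linarith
  have hy0 : y ≠ 0 := by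
    rintro rfl
    obtain ⟨σ⟩ : Nonempty (F →+* ℂ) := inferInstance
    have := hylow σ
    simp at this
    linarith
  have hyinv : house y⁻¹ ≤ δ ^ 2 := by
    apply house_le_of
    intro σ
    rw [map_inv₀, norm_inv]
    have h1 := hylow σ
    have : κ / 4 = (δ ^ 2)⁻¹ := by rw [hκdef]; field_simp
    rw [this] at h1
    exact inv_le_of_inv_le₀ (by positivity) h1
  have hζy : ∀ ζ : F, house ζ ≤ 1 → ∀ σ : F →+* ℂ, ‖σ (ζ / y)‖ ≤ δ ^ 2 := by
    intro ζ hζ σ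
    rw [div_eq_mul_inv, map_mul, norm_mul]
    have h1 := (norm_embedding_le_house ζ σ).trans hζ
    have h2 := (norm_embedding_le_house y⁻¹ σ).trans hyinv
    calc _ ≤ 1 * δ ^ 2 := mul_le_mul h1 h2 (norm_nonneg _) zero_le_one
      _ = _ := one_mul _
  set ρ := 4 * Cb ^ 2 * δ ^ 2 with hρ
  have hbox : ∀ g ∈ G, ∀ i, (crd 1 i - δ - Cr * ρ) ≤ crd ((g : F) / y) i ∧
      crd ((g : F) / y) i ≤ (crd 1 i - δ - Cr * ρ) + (δ + 2 * Cr * ρ) := by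
    intro g hg i
    obtain ⟨t, ζ, h1, h2, h3, h4⟩ := hG g hg
    have ht0 : 1 + t ≠ 0 := by
      intro h0
      obtain ⟨σ⟩ : Nonempty (F →+* ℂ) := inferInstance
      have := hlow t h2 σ
      have e := congrArg σ h0
      simp only [map_add, map_one, map_zero] at e
      rw [e] at this; norm_num at this
    set s := (g : F) / y - 1 + t with hs
    have hs' : s = (ζ / y + t ^ 2) / (1 + t) := by
      have : (g : F) = (y + ζ) / (1 + t) := by rw [eq_div_iff ht0, h1]
      rw [hs, this]; field_simp; ring
    have hsh : house s ≤ ρ := by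
      apply house_le_of
      intro σ
      rw [hs', map_div₀, norm_div, div_le_iff₀ (by
        rw [map_add, map_one]; linarith [hlow t h2 σ])]
      rw [map_add, map_pow]
      have a1 := hζy ζ h3 σ
      have a2 := hT t h2 σ
      have a3 := hlow t h2 σ
      rw [map_add σ 1 t, map_one]
      have a4 : ‖σ t ^ 2‖ ≤ (Cb * δ) ^ 2 := by
        rw [norm_pow]; exact pow_le_pow_left₀ (norm_nonneg _) a2 2
      calc _ ≤ ‖σ (ζ / y)‖ + ‖σ t ^ 2‖ := norm_add_le _ _
        _ ≤ δ ^ 2 + (Cb * δ) ^ 2 := add_le_add a1 a4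
        _ ≤ ρ * (1 / 2) := by
          rw [hρ]; nlinarith [mul_pos hδ hδ, mul_le_mul hCb1 hCb1 zero_le_one (by linarith)]
        _ ≤ _ := by gcongr
    have e1 : (g : F) / y = 1 - t + s := by rw [hs]; ring
    have h5 := abs_le.1 ((hCr s i).trans (mul_le_mul_of_nonneg_left hsh (by linarith)))
    rw [e1, crd_add, crd_sub]
    constructor <;> linarith [(h2 i).1, (h2 i).2, h5.1, h5.2]
  have hcard := card_packing hCr hCr1 hCb1 hCb y hy0 (δ ^ 2) (by positivity) hyinv G _
    (δ + 2 * Cr * ρ) (by positivity) hbox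
  have hnm : ∀ g ∈ G, 1 / nm (g : F) ≤ ((1 + Cb * δ) / (1 - δ ^ 2)) ^ d / nm y := by
    intro g hg
    obtain ⟨t, ζ, h1, h2, h3, h4⟩ := hG g hg
    have hd2 : 0 < 1 - δ ^ 2 := by nlinarith
    have hle : nm y ≤ ((1 + Cb * δ) / (1 - δ ^ 2)) ^ d * nm (g : F) := by
      apply nm_le_of
      intro σ
      rw [div_mul_eq_mul_div, le_div_iff₀ hd2]
      have e := congrArg σ h1
      simp only [map_mul, map_add, map_one] at e
      have a1 := hζy ζ h3 σ
      have a2 := hT t h2 σ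
      have a3 : ‖σ y + σ ζ‖ ≤ ‖σ (g : F)‖ * (1 + Cb * δ) := by
        rw [← e, norm_mul]
        gcongr
        exact (norm_add_le _ _).trans (by rw [norm_one]; linarith)
      have a4 : ‖σ ζ‖ ≤ δ ^ 2 * ‖σ y‖ := by
        rw [map_div₀, norm_div, div_le_iff₀] at a1
        · exact a1
        · linarith [hylow σ]
      have a5 := norm_sub_le (σ y + σ ζ) (σ ζ)
      rw [add_sub_cancel_right] at a5
      nlinarith
    have hg0 : (g : F) ≠ 0 := by
      intro h0
      obtain ⟨σ⟩ : Nonempty (F →+* ℂ) := inferInstance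
      have := h4 σ
      rw [h0] at this; simp at this; linarith
    rw [div_le_div_iff₀ (nm_pos hg0) (nm_pos hy0)]
    linarith
  have hyp := nm_pos hy0
  have hd2 : 0 < 1 - δ ^ 2 := by nlinarith
  calc ∑ g ∈ G, 1 / nm (g : F) ≤ ∑ g ∈ G, ((1 + Cb * δ) / (1 - δ ^ 2)) ^ d / nm y :=
        Finset.sum_le_sum hnm
    _ = G.card * (((1 + Cb * δ) / (1 - δ ^ 2)) ^ d / nm y) := by
        rw [Finset.sum_const, nsmul_eq_mul]
    _ ≤ (nm y * (δ + 2 * Cr * ρ + 3 * Cr * Cb * δ ^ 2) ^ d) *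
          (((1 + Cb * δ) / (1 - δ ^ 2)) ^ d / nm y) := by gcongr
    _ = ((δ + 2 * Cr * ρ + 3 * Cr * Cb * δ ^ 2) * ((1 + Cb * δ) / (1 - δ ^ 2))) ^ d := by
        rw [mul_pow]; field_simp
    _ ≤ (δ * ((1 + c * δ) * ((1 + Cb * δ) / (1 - δ ^ 2)))) ^ d := by
        have hq : 0 ≤ (1 + Cb * δ) / (1 - δ ^ 2) := div_nonneg (by positivity) hd2.le
        refine pow_le_pow_left₀ (mul_nonneg (by positivity) hq) ?_ _
        rw [← mul_assoc δ]
        refine mul_le_mul_of_nonneg_right ?_ hq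
        have h9 : Cr * Cb * δ ^ 2 ≤ Cr * Cb ^ 2 * δ ^ 2 := by
          gcongr; nlinarith
        have : c = 11 * Cr * Cb ^ 2 := rfl
        rw [hρ, this]; nlinarith
    _ ≤ _ := by
        rw [mul_pow]
        gcongr
end Packing

/-! ### Degenerate integers, and multiples that are sums of four squares -/

section Counting
variable {F : Type*} [Field F] [NumberField F]

lemma house_natCast (n : ℕ) : house (n : F) = n := by
  have := house_intCast (K := F) (n : ℤ)
  simpa using this

/-- Algebraic integers of size `O(K)` having a conjugate of bounded size are rare. -/
lemma card_degenerate_le (F : Type*) [Field F] [NumberField F] (c κ ε : ℝ) (hc : 0 < c) (hκ : 0 < κ)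
    (hε : 0 < ε) :
    ∃ K₀ : ℝ, ∀ K : ℝ, K₀ ≤ K → ∀ S : Finset (𝓞 F),
      (∀ g ∈ S, house (g : F) ≤ c * K + 1 ∧ ∃ σ : F →+* ℂ, ‖σ (g : F)‖ ≤ κ) →
      (S.card : ℝ) ≤ ε * K ^ finrank ℚ F := by
  classical
  obtain ⟨Cr, hCr1, hCr⟩ := exists_crd_le_house F
  set d := finrank ℚ F with hd
  set C := 2 * (Cr * (c + 1)) + 1 with hC
  have hC0 : 0 < C := by positivity
  set n : ℕ := ⌈d * C ^ d / ε⌉₊ + 1 with hn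
  set k : ℕ := ⌈κ⌉₊ with hk
  have hkκ : κ ≤ k := Nat.le_ceil κ
  refine ⟨1 + 3 * k * n, fun K hK S hS => ?_⟩
  have hK1 : 1 ≤ K := by
    have : (0 : ℝ) ≤ 3 * k * n := by positivity
    linarith
  have hσ : ∀ σ : F →+* ℂ,
      (n : ℝ) * (S.filter fun g : 𝓞 F => ‖σ (g : F)‖ ≤ κ).card ≤ (C * K) ^ d := by
    intro σ
    set A := S.filter fun g : 𝓞 F => ‖σ (g : F)‖ ≤ κ with hA
    let f : 𝓞 F × ℕ → 𝓞 F := fun p => p.1 + ((3 * k * p.2 : ℕ) : 𝓞 F)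
    have hf : Set.InjOn f (A ×ˢ Finset.range n : Finset (𝓞 F × ℕ)) := by
      rintro ⟨g, j⟩ h1 ⟨g', j'⟩ h2 h
      simp only [hA, Finset.mem_coe, Finset.mem_product, Finset.mem_filter] at h1 h2
      simp only [f] at h
      have e := congrArg (fun x : 𝓞 F => σ (x : F)) h
      simp only [map_add, map_natCast] at e
      have e2 : σ (g : F) - σ (g' : F) = ((3 * k * j' - 3 * k * j : ℝ) : ℂ) := by
        push_cast at e ⊢; linear_combination e
      have e3 := norm_sub_le (σ (g : F)) (σ (g' : F))
      rw [e2, Complex.norm_real, Real.norm_eq_abs] at e3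
      have e4 : (3 * k * j' - 3 * k * j : ℝ) = 3 * k * ((j' - j : ℤ) : ℝ) := by push_cast; ring
      have hjj : j = j' := by
        by_contra hne
        have h5 : (1 : ℝ) ≤ |((j' - j : ℤ) : ℝ)| := by
          have h6 : (j' : ℤ) - j ≠ 0 := by omega
          have h7 := Int.one_le_abs h6
          rw [← Int.cast_abs]
          exact_mod_cast h7
        rw [e4, abs_mul, abs_of_nonneg (by positivity : (0 : ℝ) ≤ 3 * k)] at e3
        have : 3 * (k : ℝ) * 1 ≤ 3 * k * |((j' - j : ℤ) : ℝ)| := by gcongr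
        linarith [h1.1.2, h2.1.2]
      subst hjj
      rw [add_right_cancel h]
    have hcard : ((A ×ˢ Finset.range n).image f).card = A.card * n := by
      rw [Finset.card_image_of_injOn hf, Finset.card_product, Finset.card_range]
    have hb := card_box_le ((A ×ˢ Finset.range n).image f) (fun _ => -(Cr * ((c + 1) * K)))
      (2 * (Cr * ((c + 1) * K))) (by positivity) (by
        intro x hx i
        simp only [Finset.mem_image, Finset.mem_product, Prod.exists, Finset.mem_range] at hx
        obtain ⟨g, j, ⟨hg, hj⟩, rfl⟩ := hx
        have h1 := (hS g (Finset.mem_filter.1 hg).1).1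
        have h2 : house ((f (g, j) : 𝓞 F) : F) ≤ (c + 1) * K := by
          have : ((f (g, j) : 𝓞 F) : F) = g + ((3 * k * j : ℕ) : F) :=
            (map_add (algebraMap (𝓞 F) F) _ _).trans (by rw [map_natCast])
          rw [this]
          refine (house_add_le _ _).trans ?_
          rw [house_natCast]
          have : ((3 * k * j : ℕ) : ℝ) ≤ 3 * k * n := by
            push_cast; gcongr
          linarith
        have h3 := abs_le.1 ((hCr _ i).trans (mul_le_mul_of_nonneg_left h2 (by linarith)))
        constructor <;> linarith [h3.1, h3.2])
    rw [hcard] at hb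
    push_cast at hb
    rw [mul_comm]
    refine hb.trans (pow_le_pow_left₀ (by positivity) ?_ _)
    rw [hC]; nlinarith
  have hsub : S ⊆ Finset.univ.biUnion fun σ : F →+* ℂ =>
      S.filter fun g : 𝓞 F => ‖σ (g : F)‖ ≤ κ := by
    intro g hg
    obtain ⟨σ, h⟩ := (hS g hg).2
    exact Finset.mem_biUnion.2 ⟨σ, Finset.mem_univ _, Finset.mem_filter.2 ⟨hg, h⟩⟩
  have h1 : (S.card : ℝ) ≤ ∑ σ : F →+* ℂ, ((S.filter fun g : 𝓞 F => ‖σ (g : F)‖ ≤ κ).card : ℝ) := by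
    exact_mod_cast (Finset.card_le_card hsub).trans Finset.card_biUnion_le
  have hn0 : (0 : ℝ) < n := by rw [hn]; positivity
  have h2 : (S.card : ℝ) ≤ ∑ σ : F →+* ℂ, (C * K) ^ d / n :=
    h1.trans (Finset.sum_le_sum fun σ _ => by rw [le_div_iff₀ hn0, mul_comm]; exact hσ σ)
  rw [Finset.sum_const, Finset.card_univ, Embeddings.card, nsmul_eq_mul] at h2
  refine h2.trans ?_
  rw [mul_pow, ← mul_div_assoc, div_le_iff₀ hn0]
  have h3 : d * C ^ d / ε ≤ n := by
    rw [hn]; push_cast; linarith [Nat.le_ceil (d * C ^ d / ε)]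
  rw [div_le_iff₀ hε] at h3
  have := mul_le_mul_of_nonneg_right h3 (by positivity : 0 ≤ K ^ d)
  linarith

/-- Modulo an odd number, `-1` is a sum of two squares: it is so of a prime `≡ 1 mod 4`. -/
lemma exists_dvd_one_add_sq (M : ℕ) (hM : Odd M) : ∃ y z : ℤ, (M : ℤ) ∣ 1 + (y ^ 2 + z ^ 2) := by
  have hM0 : M ≠ 0 := by rintro rfl; simp at hM
  obtain ⟨p, -, hp, hmod⟩ := Nat.forall_exists_prime_gt_and_zmodEq 0 (q := 4 * M)
    (a := 2 * (M : ℤ) ^ 2 - 1) (by omega)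
    ⟨2 * (M : ℤ) ^ 2 - 1, (M : ℤ) - (M : ℤ) ^ 3, by push_cast; ring⟩
  have hd := hmod.symm.dvd
  have hd4 : (4 : ℤ) ∣ 2 * (M : ℤ) ^ 2 - 1 - p := by
    have := hmod.dvd; push_cast at this; exact (Dvd.intro _ rfl).trans this
  have hdM : (M : ℤ) ∣ 2 * (M : ℤ) ^ 2 - 1 - p := by
    have := hmod.dvd; push_cast at this; exact (Dvd.intro_left _ rfl).trans this
  obtain ⟨t, rfl⟩ := hM
  have hp4 : p % 4 ≠ 3 := by
    obtain ⟨w, hw⟩ := hd4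
    push_cast at hw
    have : (p : ℤ) = 4 * (2 * t ^ 2 + 2 * t - w) + 1 := by linear_combination -hw
    omega
  have := Fact.mk hp
  obtain ⟨a, b, hab⟩ := Nat.Prime.sq_add_sq hp4
  refine ⟨a, b, ?_⟩
  have : (a : ℤ) ^ 2 + (b : ℤ) ^ 2 = p := by exact_mod_cast hab
  rw [this]
  obtain ⟨w, hw⟩ := hdM
  exact ⟨2 * ((2 * t + 1 : ℕ) : ℤ) - w, by linear_combination -hw⟩

/-- `u` is a sum of four squares. -/
def IsSumFourSq {R : Type*} [CommRing R] (u : R) : Prop :=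
  ∃ p q r s : R, u = p ^ 2 + q ^ 2 + r ^ 2 + s ^ 2

lemma sum_four_sq_eq_zero (ht : ∀ (σ : F →+* ℂ) (x : F), (σ x).im = 0) {p q r s : F}
    (h : p ^ 2 + q ^ 2 + r ^ 2 + s ^ 2 = 0) : p = 0 ∧ q = 0 ∧ r = 0 ∧ s = 0 := by
  obtain ⟨σ⟩ : Nonempty (F →+* ℂ) := inferInstance
  have h1 : ∀ x : F, (σ (x ^ 2)).re = (σ x).re ^ 2 := by
    intro x; rw [map_pow, pow_two, Complex.mul_re, ht]; ring
  have h2 : ∀ x : F, (σ x).re = 0 → x = 0 := by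
    intro x hx
    apply σ.injective
    rw [map_zero]
    exact Complex.ext hx (ht σ x)
  have h3 := congrArg (fun x => (σ x).re) h
  simp only [map_add, Complex.add_re, h1, map_zero, Complex.zero_re] at h3
  refine ⟨h2 _ ?_, h2 _ ?_, h2 _ ?_, h2 _ ?_⟩ <;>
  · rw [← sq_eq_zero_iff]
    nlinarith [sq_nonneg (σ p).re, sq_nonneg (σ q).re, sq_nonneg (σ r).re, sq_nonneg (σ s).re]

lemma odd_card_of_isUnit_two (R : Type*) [CommRing R] [Finite R] (h : IsUnit (2 : R)) :
    Odd (Nat.card R) := by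
  rw [← Nat.not_even_iff_odd, even_iff_two_dvd]
  intro h2
  have := Fact.mk Nat.prime_two
  obtain ⟨x, hx⟩ := exists_prime_addOrderOf_dvd_card' (G := R) 2 h2
  have h3 : (2 : ℕ) • x = 0 := by rw [← hx]; exact addOrderOf_nsmul_eq_zero x
  rw [nsmul_eq_mul] at h3
  have : x = 0 := by
    apply h.mul_left_cancel; rw [mul_zero]; exact_mod_cast h3
  rw [this] at hx
  simp at hx

lemma odd_nN {x : 𝓞 F} (hx : x ≠ 0) (h : IsCoprime x 2) : Odd (nN x) := by
  rw [← card_quot_span]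
  have := finite_quot_span hx
  apply odd_card_of_isUnit_two
  obtain ⟨a, b, hab⟩ := h
  refine IsUnit.of_mul_eq_one (Ideal.Quotient.mk _ b) ?_
  have h2 : (2 : 𝓞 F ⧸ Ideal.span {x}) = Ideal.Quotient.mk _ 2 := rfl
  rw [h2, ← map_mul, ← map_one (Ideal.Quotient.mk _), Ideal.Quotient.mk_eq_mk_iff_sub_mem,
    Ideal.mem_span_singleton]
  exact ⟨-a, by linear_combination hab⟩

/-- By the pigeonhole principle, every odd `n` has a small nonzero multiple which is a sum of four
squares. -/
lemma exists_multiple_four_sq (ht : ∀ (σ : F →+* ℂ) (x : F), (σ x).im = 0) {Cb : ℝ}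
    (hCb : ∀ (x : F) (M : ℝ), (∀ i : BIdx F, |crd x i| ≤ M) → house x ≤ Cb * M)
    (n : 𝓞 F) (hn : n ≠ 0) (hodd : IsCoprime n 2) (k : ℕ) (hk : house (n : F) < (k : ℝ) ^ 2) :
    ∃ b : 𝓞 F, b ≠ 0 ∧ IsSumFourSq (n * b) ∧ house ((n * b : 𝓞 F) : F) ≤ 4 * (Cb * k) ^ 2 := by
  classical
  obtain ⟨g₁, g₂, hg⟩ := exists_dvd_one_add_sq (nN n) (odd_nN hn hodd)
  have hg' : n ∣ 1 + ((g₁ : 𝓞 F) ^ 2 + (g₂ : 𝓞 F) ^ 2) := by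
    refine (dvd_nN n).trans ?_
    obtain ⟨w, hw⟩ := hg
    refine ⟨(w : 𝓞 F), ?_⟩
    have := congrArg (Int.cast : ℤ → 𝓞 F) hw
    push_cast at this
    exact this
  have hfin := finite_quot_span hn
  have := Fintype.ofFinite (𝓞 F ⧸ Ideal.span {n})
  let Q := cube F k
  let S := (Q ×ˢ Q) ×ˢ (Q ×ˢ Q)
  let mk := Ideal.Quotient.mk (Ideal.span {n})
  let f : (𝓞 F × 𝓞 F) × (𝓞 F × 𝓞 F) → (𝓞 F ⧸ Ideal.span {n}) × (𝓞 F ⧸ Ideal.span {n}) :=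
    fun p => (mk (p.2.1 - (g₁ * p.1.1 + g₂ * p.1.2)), mk (p.2.2 - (g₂ * p.1.1 - g₁ * p.1.2)))
  have hcard : (Finset.univ : Finset ((𝓞 F ⧸ Ideal.span {n}) × (𝓞 F ⧸ Ideal.span {n}))).card
      < S.card := by
    rw [Finset.card_univ, Fintype.card_prod, ← Nat.card_eq_fintype_card, card_quot_span]
    simp only [S, Q, Finset.card_product, card_cube]
    have h1 : (nN n : ℝ) < (k ^ finrank ℚ F * k ^ finrank ℚ F : ℕ) := by
      rw [← nm_eq_nN, nm, abs_norm_eq_prod]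
      calc _ ≤ ∏ σ : F →+* ℂ, house (n : F) :=
            Finset.prod_le_prod (fun _ _ => norm_nonneg _) fun σ _ => norm_embedding_le_house _ _
        _ = house (n : F) ^ finrank ℚ F := by
            rw [Finset.prod_const, Finset.card_univ, Embeddings.card]
        _ < ((k : ℝ) ^ 2) ^ finrank ℚ F :=
            pow_lt_pow_left₀ hk (house_nonneg _) (finrank_pos).ne'
        _ = _ := by push_cast; ring
    have h1' : nN n < k ^ finrank ℚ F * k ^ finrank ℚ F := by exact_mod_cast h1
    exact Nat.mul_lt_mul'' h1' h1'
  obtain ⟨x, hx, y, hy, hne, hxy⟩ :=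
    Finset.exists_ne_map_eq_of_card_lt_of_maps_to hcard (f := f) (fun _ _ => Finset.mem_univ _)
  simp only [S, Finset.mem_product] at hx hy
  simp only [f, Prod.mk.injEq, mk, Ideal.Quotient.mk_eq_mk_iff_sub_mem,
    Ideal.mem_span_singleton] at hxy
  set p₁ := x.1.1 - y.1.1
  set p₂ := x.1.2 - y.1.2
  set r₁ := x.2.1 - y.2.1
  set r₂ := x.2.2 - y.2.2
  have hd1 : n ∣ r₁ - (g₁ * p₁ + g₂ * p₂) := by
    convert hxy.1 using 1; simp only [p₁, p₂, r₁]; ring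
  have hd2 : n ∣ r₂ - (g₂ * p₁ - g₁ * p₂) := by
    convert hxy.2 using 1; simp only [p₁, p₂, r₂]; ring
  have hdvd : n ∣ p₁ ^ 2 + p₂ ^ 2 + r₁ ^ 2 + r₂ ^ 2 := by
    have e : p₁ ^ 2 + p₂ ^ 2 + r₁ ^ 2 + r₂ ^ 2 =
      (1 + ((g₁ : 𝓞 F) ^ 2 + (g₂ : 𝓞 F) ^ 2)) * (p₁ ^ 2 + p₂ ^ 2) +
      (r₁ - (g₁ * p₁ + g₂ * p₂)) * (r₁ + (g₁ * p₁ + g₂ * p₂)) +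
      (r₂ - (g₂ * p₁ - g₁ * p₂)) * (r₂ + (g₂ * p₁ - g₁ * p₂)) := by ring
    rw [e]
    exact dvd_add (dvd_add (hg'.mul_right _) (hd1.mul_right _)) (hd2.mul_right _)
  obtain ⟨b, hb⟩ := hdvd
  have hsmall : ∀ u ∈ Q, ∀ v ∈ Q, house ((u - v : 𝓞 F) : F) ≤ Cb * k := by
    intro u hu v hv
    apply hCb
    intro i
    have h1 := crd_of_mem_cube hu i
    have h2 := crd_of_mem_cube hv i
    have : ((u - v : 𝓞 F) : F) = u - v := map_sub (algebraMap (𝓞 F) F) _ _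
    rw [this, crd_sub, abs_le]
    constructor <;> linarith [h1.1, h1.2, h2.1, h2.2]
  refine ⟨b, ?_, ⟨p₁, p₂, r₁, r₂, hb.symm⟩, ?_⟩
  · rintro rfl
    rw [mul_zero] at hb
    have hb' := congrArg (algebraMap (𝓞 F) F) hb
    simp only [map_add, map_pow, map_zero] at hb'
    obtain ⟨a1, a2, a3, a4⟩ := sum_four_sq_eq_zero ht hb'
    have hz : ∀ u v : 𝓞 F, algebraMap (𝓞 F) F (u - v) = 0 → u = v := by
      intro u v h
      rw [map_eq_zero_iff _ (RingOfIntegers.coe_injective)] at h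
      exact sub_eq_zero.1 h
    exact hne (Prod.ext (Prod.ext (hz _ _ a1) (hz _ _ a2)) (Prod.ext (hz _ _ a3) (hz _ _ a4)))
  · rw [← hb]
    have hsq : ∀ u ∈ Q, ∀ v ∈ Q, house (((u - v : 𝓞 F) : F) ^ 2) ≤ (Cb * k) ^ 2 := fun u hu v hv =>
      (house_pow_le _ _).trans (pow_le_pow_left₀ (house_nonneg _) (hsmall u hu v hv) 2)
    have e : ((p₁ ^ 2 + p₂ ^ 2 + r₁ ^ 2 + r₂ ^ 2 : 𝓞 F) : F) =
        (p₁ : F) ^ 2 + (p₂ : F) ^ 2 + (r₁ : F) ^ 2 + (r₂ : F) ^ 2 := by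
      simp only [RingOfIntegers.coe_eq_algebraMap, map_add, map_pow]
    rw [e]
    refine (house_add_le _ _).trans ?_
    have := (house_add_le ((p₁ : F) ^ 2 + (p₂ : F) ^ 2) ((r₁ : F) ^ 2))
    have := (house_add_le ((p₁ : F) ^ 2) ((p₂ : F) ^ 2))
    linarith [hsq _ hx.1.1 _ hy.1.1, hsq _ hx.1.2 _ hy.1.2, hsq _ hx.2.1 _ hy.2.1,
      hsq _ hx.2.2 _ hy.2.2]
end Counting

/-! ### Positive density of sums of four squares -/

section Density
variable {F : Type*} [Field F] [NumberField F]

/-- Sums of four squares of algebraic integers have positive lower density. -/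
lemma four_sq_density (ht : ∀ (σ : F →+* ℂ) (x : F), (σ x).im = 0) :
    ∃ c₀ : ℝ, 0 < c₀ ∧ ∃ U₀ : ℝ, ∀ U : ℝ, U₀ ≤ U → ∃ S : Finset (𝓞 F),
      (∀ u ∈ S, IsSumFourSq u ∧ house (u : F) ≤ U) ∧ c₀ * U ^ finrank ℚ F ≤ S.card := by
  classical
  obtain ⟨Cr, hCr1, hCr⟩ := exists_crd_le_house F
  obtain ⟨Cb, hCb1, hCb⟩ := exists_house_le_crd F
  set d := finrank ℚ F with hd
  set T : ℕ := ⌈Cb⌉₊ with hT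
  have hTC : Cb ≤ T := Nat.le_ceil _
  have hT1 : (1 : ℝ) ≤ T := hCb1.trans hTC
  set NB : ℕ := ⌈(2 * (Cr * (48 * Cb ^ 2)) + 1) ^ d⌉₊ with hNB
  have hNB1 : (0 : ℝ) < NB := lt_of_lt_of_le (by positivity) (Nat.le_ceil _)
  refine ⟨(1 / (384 * T * Cb ^ 2)) ^ d / NB, by positivity, (96 * T * Cb) ^ 2, fun U hU => ?_⟩
  have hU0 : 0 ≤ U := le_trans (by positivity) hU
  set r := √U / (2 * Cb) with hr
  have hr48 : 48 * T ≤ r := by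
    rw [hr, le_div_iff₀ (by positivity)]
    have := Real.le_sqrt_of_sq_le hU
    linarith
  have hrU : 4 * Cb ^ 2 * r ^ 2 = U := by
    rw [hr, div_pow, Real.sq_sqrt hU0]; field_simp; ring
  set k : ℕ := ⌊r⌋₊ with hk
  have hkr : (k : ℝ) ≤ r := Nat.floor_le (by linarith)
  have hkr2 : r / 2 ≤ k := by linarith [Nat.lt_floor_add_one r]
  have hk24 : (24 : ℝ) * T ≤ k := by linarith
  set s : ℕ := k ^ 2 / (12 * T) with hs
  have hT0 : 0 < 12 * T := by
    have : 1 ≤ T := by exact_mod_cast hT1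
    omega
  have hs1 : (12 : ℝ) * T * s ≤ k ^ 2 := by
    have : 12 * T * s ≤ k ^ 2 := Nat.mul_div_le _ _
    exact_mod_cast this
  have hs2 : (k : ℝ) ^ 2 ≤ 24 * T * s := by
    have : k ^ 2 < 12 * T * (s + 1) := Nat.lt_mul_div_succ _ hT0
    have h2 : (k : ℝ) ^ 2 < 12 * T * (s + 1) := by exact_mod_cast this
    nlinarith
  have hk0 : (24 : ℝ) ≤ k := by linarith
  have hs0 : (0 : ℝ) < s := by
    by_contra h
    have : (s : ℝ) = 0 := le_antisymm (not_lt.1 h) (by positivity)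
    rw [this] at hs2
    nlinarith
  let n : 𝓞 F → 𝓞 F := fun j => ((4 * T * s + 1 : ℕ) : 𝓞 F) + 2 * j
  have hnF : ∀ j, ((n j : 𝓞 F) : F) = ((4 * T * s + 1 : ℕ) : F) + 2 * (j : F) := by
    intro j
    simp only [n, RingOfIntegers.coe_eq_algebraMap, map_add, map_mul, map_natCast, map_ofNat]
  have hj : ∀ j ∈ cube F s, house ((2 : F) * j) ≤ 2 * T * s := by
    intro j hj
    have h1 : house (j : F) ≤ Cb * s := hCb _ _ fun i => by
      rw [abs_of_nonneg (crd_of_mem_cube hj i).1]; exact (crd_of_mem_cube hj i).2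
    have h2 := house_nat_mul (j : F) 2
    push_cast at h2
    rw [h2]
    have : Cb * s ≤ T * s := by gcongr
    linarith
  have hnlow : ∀ j ∈ cube F s, ∀ σ : F →+* ℂ, 2 * T * s ≤ ‖σ (n j : F)‖ := by
    intro j hj' σ
    rw [hnF, map_add, map_natCast]
    have h1 := (norm_embedding_le_house ((2 : F) * j) σ).trans (hj j hj')
    have h2 := norm_sub_le (((4 * T * s + 1 : ℕ) : ℂ) + σ (2 * j)) (σ (2 * j))
    rw [add_sub_cancel_right, Complex.norm_natCast] at h2
    push_cast at h2 ⊢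
    linarith
  have hnup : ∀ j ∈ cube F s, house (n j : F) < (k : ℝ) ^ 2 := by
    intro j hj'
    rw [hnF]
    refine (house_add_le _ _).trans_lt ?_
    rw [house_natCast]
    have := hj j hj'
    push_cast
    nlinarith
  have hn0 : ∀ j ∈ cube F s, n j ≠ 0 := by
    intro j hj' h0
    obtain ⟨σ⟩ : Nonempty (F →+* ℂ) := inferInstance
    have := hnlow j hj' σ
    rw [h0] at this
    simp only [map_zero, norm_zero] at this
    have h3 : (0 : ℝ) < 2 * T * s := by positivity
    linarith
  have hodd : ∀ j, IsCoprime (n j) 2 := by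
    intro j
    refine ⟨1, -(2 * T * s + j), ?_⟩
    simp only [n]; push_cast; ring
  choose! b hb0 hbsq hbh using fun j (hj' : j ∈ cube F s) =>
    exists_multiple_four_sq ht hCb (n j) (hn0 j hj') (hodd j) k (hnup j hj')
  have hbhouse : ∀ j ∈ cube F s, house (b j : F) ≤ 48 * Cb ^ 2 := by
    intro j hj'
    apply house_le_of
    intro σ
    have h1 := (norm_embedding_le_house ((n j * b j : 𝓞 F) : F) σ).trans (hbh j hj')
    have h2 : ((n j * b j : 𝓞 F) : F) = (n j : F) * (b j : F) := map_mul (algebraMap (𝓞 F) F) _ _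
    rw [h2, map_mul, norm_mul] at h1
    have h3 := hnlow j hj' σ
    have h4 : 2 * T * s * ‖σ (b j : F)‖ ≤ 4 * (Cb * k) ^ 2 :=
      (mul_le_mul_of_nonneg_right h3 (norm_nonneg _)).trans h1
    have h5 : 4 * (Cb * k) ^ 2 ≤ 2 * T * s * (48 * Cb ^ 2) := by
      rw [mul_pow]; nlinarith [mul_le_mul_of_nonneg_left hs2 (by positivity : 0 ≤ Cb ^ 2)]
    exact le_of_mul_le_mul_left (h4.trans h5) (by positivity)
  let f : 𝓞 F → 𝓞 F := fun j => n j * b j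
  have hfib : ∀ q ∈ (cube F s).image f, ((cube F s).filter fun j => f j = q).card ≤ NB := by
    intro q hq
    have hinj : Set.InjOn b ((cube F s).filter fun j => f j = q : Finset (𝓞 F)) := by
      intro j h1 j' h2 h
      simp only [Finset.mem_coe, Finset.mem_filter] at h1 h2
      have e : n j * b j = n j' * b j := by
        have := h1.2.trans h2.2.symm
        simp only [f] at this
        rw [this, h]
      have e2 := mul_right_cancel₀ (hb0 j h1.1) e
      simp only [n] at e2
      exact mul_left_cancel₀ two_ne_zero (add_left_cancel e2)
    rw [← Finset.card_image_of_injOn hinj]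
    have := card_box_le (((cube F s).filter fun j => f j = q).image b)
      (fun _ => -(Cr * (48 * Cb ^ 2))) (2 * (Cr * (48 * Cb ^ 2))) (by positivity) (by
        intro x hx i
        simp only [Finset.mem_image, Finset.mem_filter] at hx
        obtain ⟨j, ⟨hj', -⟩, rfl⟩ := hx
        have h3 := abs_le.1 ((hCr _ i).trans
          (mul_le_mul_of_nonneg_left (hbhouse j hj') (by linarith)))
        constructor <;> linarith [h3.1, h3.2])
    exact_mod_cast this.trans (Nat.le_ceil _)
  refine ⟨(cube F s).image f, ?_, ?_⟩
  · intro u hu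
    simp only [Finset.mem_image] at hu
    obtain ⟨j, hj', rfl⟩ := hu
    refine ⟨hbsq j hj', (hbh j hj').trans ?_⟩
    rw [← hrU, mul_pow, mul_assoc 4]
    gcongr
  · have h1 := Finset.card_le_mul_card_image (f := f) (cube F s) NB hfib
    rw [card_cube] at h1
    have h2 : (s : ℝ) ^ d ≤ NB * ((cube F s).image f).card := by exact_mod_cast h1
    rw [div_mul_eq_mul_div, div_le_iff₀ hNB1, mul_comm ((((cube F s).image f).card) : ℝ), ← mul_pow]
    refine le_trans (pow_le_pow_left₀ (by positivity) ?_ _) h2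
    rw [div_mul_eq_mul_div, one_mul, div_le_iff₀ (by positivity), ← hrU]
    have h6 : r ^ 2 ≤ 4 * k ^ 2 := by nlinarith
    have h7 : r ^ 2 ≤ 96 * T * s := by linarith
    have := mul_le_mul_of_nonneg_left h7 (by positivity : 0 ≤ 4 * Cb ^ 2)
    linarith
end Density

/-! ### Differences of sums of four squares in finite rings -/

section FiniteRings

lemma card_preimage {A B : Type*} [AddCommGroup A] [AddCommGroup B] [Finite A]
    (f : A →+ B) (hf : Function.Surjective f) (P : B → Prop) :
    Nat.card {a // P (f a)} * Nat.card B = Nat.card A * Nat.card {b // P b} := by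
  let s := Function.surjInv hf
  have hs : ∀ b, f (s b) = b := Function.surjInv_eq hf
  have e : ∀ P : B → Prop, Nat.card {a // P (f a)} = Nat.card {b // P b} * Nat.card f.ker := by
    intro P
    rw [← Nat.card_prod]
    refine Nat.card_congr
      { toFun := fun a => (⟨f a.1, a.2⟩, ⟨a.1 - s (f a.1), by simp [AddMonoidHom.mem_ker, hs]⟩)
        invFun := fun p => ⟨p.2.1 + s p.1.1, by
          rw [map_add, hs, p.2.2, zero_add]; exact p.1.2⟩
        left_inv := fun a => by simp
        right_inv := fun p => by
          obtain ⟨⟨b, hb⟩, ⟨k, hk⟩⟩ := p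
          rw [AddMonoidHom.mem_ker] at hk
          ext <;> simp [hs, hk] }
  have h1 := e P
  have h2 := e (fun _ => True)
  rw [Nat.card_congr (Equiv.subtypeUnivEquiv (fun _ => trivial)),
    Nat.card_congr (Equiv.subtypeUnivEquiv (fun _ => trivial))] at h2
  rw [h1, h2]; ring

lemma card_fiber_mul_card_range_le {A B : Type*} [AddCommGroup A] [AddCommGroup B] [Finite A]
    (f : A →+ B) (b : B) : Nat.card {a // f a = b} * Nat.card f.range ≤ Nat.card A := by
  have h := card_preimage f.rangeRestrict f.rangeRestrict_surjective (fun x => (x : B) = b)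
  have h1 : Nat.card {x : f.range // (x : B) = b} ≤ 1 := by
    rw [← Nat.card_unique (α := Unit)]
    apply Nat.card_le_card_of_injective (fun _ => ())
    rintro ⟨x, hx⟩ ⟨y, hy⟩ _
    exact Subtype.ext (Subtype.ext (hx.trans hy.symm))
  calc _ = Nat.card A * Nat.card {x : f.range // (x : B) = b} := h
    _ ≤ Nat.card A * 1 := Nat.mul_le_mul_left _ h1
    _ = _ := mul_one _

variable {R : Type*} [CommRing R] [Finite R]

/-- The number of solutions of `κ ∑ (bᵢ² - b'ᵢ²) = c` in eight variables over a finite ring in which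
`2` and `κ` are units. -/
lemma card_diff_sq_le (h2 : IsUnit (2 : R)) (κ : R) (hκ : IsUnit κ) (c : R) [Fintype (Ideal R)] :
    (Nat.card {p : (Fin 4 → R) × (Fin 4 → R) // κ * ∑ i, (p.1 i ^ 2 - p.2 i ^ 2) = c} : ℝ) ≤
      (Nat.card R : ℝ) ^ 7 * ∑ I : Ideal R, (1 / (Nat.card (R ⧸ I) : ℝ)) ^ 3 := by
  classical
  have := Fintype.ofFinite R
  set N : ℝ := ((Nat.card R : ℕ) : ℝ) with hN
  have hN0 : 0 < N := by rw [hN]; exact_mod_cast Nat.card_pos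
  let L : (Fin 4 → R) → (Fin 4 → R) →+ R := fun h =>
    { toFun := fun t => κ * ∑ i, h i * t i
      map_zero' := by simp
      map_add' := fun x y => by simp [mul_add, Finset.sum_add_distrib] }
  -- substitute `h = b - b'`, `t = b + b'`
  have step1 : Nat.card {p : (Fin 4 → R) × (Fin 4 → R) // κ * ∑ i, (p.1 i ^ 2 - p.2 i ^ 2) = c} ≤
      Nat.card (Σ h : Fin 4 → R, {t // L h t = c}) := by
    refine Nat.card_le_card_of_injective
      (fun p => ⟨p.1.1 - p.1.2, p.1.1 + p.1.2, ?_⟩) ?_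
    · refine Eq.trans ?_ p.2
      change κ * ∑ i, (p.1.1 - p.1.2) i * (p.1.1 + p.1.2) i = _
      congr 1
      refine Finset.sum_congr rfl fun i _ => ?_
      simp only [Pi.sub_apply, Pi.add_apply]; ring
    · rintro ⟨⟨b, b'⟩, hb⟩ ⟨⟨a, a'⟩, ha⟩ h
      simp only [Sigma.mk.injEq] at h
      obtain ⟨h3, h4⟩ := h
      have h5 : b + b' = a + a' := by
        have : ∀ (x y : Fin 4 → R) (hx : x = y) (u : {t // L x t = c}) (v : {t // L y t = c}),
            u ≍ v → u.1 = v.1 := by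
          rintro x _ rfl u v h; rw [eq_of_heq h]
        exact this _ _ h3 _ _ h4
      have h6 : b = a := by
        funext i
        have e1 := congrFun h3 i
        have e2 := congrFun h5 i
        simp only [Pi.sub_apply, Pi.add_apply] at e1 e2
        apply h2.mul_left_cancel
        linear_combination e1 + e2
      subst h6
      have h7 : b' = a' := add_left_cancel h5
      subst h7
      rfl
  rw [Nat.card_sigma] at step1
  let Ih : (Fin 4 → R) → Ideal R := fun h => Ideal.span (Set.range h)
  have hcardI : ∀ I : Ideal R, (Nat.card I : ℝ) * Nat.card (R ⧸ I) = N := by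
    intro I
    have := Submodule.card_eq_card_quotient_mul_card I
    rw [hN, this]; push_cast; ring
  have step2 : ∀ h, (Nat.card {t // L h t = c} : ℝ) ≤ N ^ 4 / Nat.card (Ih h) := by
    intro h
    have h1 := card_fiber_mul_card_range_le (L h) c
    have h3 : Nat.card (Ih h) = Nat.card (L h).range := by
      refine Nat.card_congr (Equiv.setCongr ?_)
      ext x
      simp only [SetLike.mem_coe, AddMonoidHom.mem_range, Ih]
      rw [Ideal.mem_span_range_iff_exists_fun]
      obtain ⟨u, rfl⟩ := hκ
      constructor
      · rintro ⟨t, rfl⟩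
        refine ⟨fun i => ↑u⁻¹ * t i, ?_⟩
        change ↑u * ∑ i, h i * (↑u⁻¹ * t i) = _
        rw [Finset.mul_sum]
        refine Finset.sum_congr rfl fun i _ => ?_
        linear_combination (h i * t i) * u.mul_inv
      · rintro ⟨t, rfl⟩
        refine ⟨fun i => u * t i, ?_⟩
        change _ = ↑u * ∑ i, h i * t i
        rw [Finset.mul_sum]
        exact Finset.sum_congr rfl fun i _ => by ring
    rw [← h3, Nat.card_fun, Nat.card_fin] at h1
    rw [le_div_iff₀ (by exact_mod_cast Nat.card_pos)]
    rw [hN]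
    exact_mod_cast h1
  calc _ ≤ ∑ h, (Nat.card {t // L h t = c} : ℝ) := by exact_mod_cast step1
    _ ≤ ∑ h, N ^ 4 / Nat.card (Ih h) := Finset.sum_le_sum fun h _ => step2 h
    _ = ∑ I : Ideal R, ∑ h with Ih h = I, N ^ 4 / Nat.card (Ih h) := by
        rw [Finset.sum_fiberwise]
    _ ≤ ∑ I : Ideal R, (Nat.card I : ℝ) ^ 4 * (N ^ 4 / Nat.card I) := by
        refine Finset.sum_le_sum fun I _ => ?_
        have e : ∑ h with Ih h = I, N ^ 4 / Nat.card (Ih h) =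
            ∑ h with Ih h = I, N ^ 4 / Nat.card I :=
          Finset.sum_congr rfl fun h hh => by rw [(Finset.mem_filter.1 hh).2]
        rw [e, Finset.sum_const, nsmul_eq_mul]
        refine mul_le_mul_of_nonneg_right ?_ (by positivity)
        have h1 : (Finset.univ.filter fun h => Ih h = I).card ≤ Nat.card (Fin 4 → I) := by
          rw [← Fintype.card_subtype, ← Nat.card_eq_fintype_card]
          exact Nat.card_le_card_of_injective
            (fun h : {h // Ih h = I} => fun i => (⟨h.1 i, by
              have h5 : h.1 i ∈ Ih h.1 := Ideal.subset_span ⟨i, rfl⟩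
              rwa [h.2] at h5⟩ : I))
            (fun a b hab => Subtype.ext (funext fun i => congrArg Subtype.val (congrFun hab i)))
        rw [Nat.card_fun, Nat.card_fin] at h1
        exact_mod_cast h1
    _ = _ := by
        rw [Finset.mul_sum]
        refine Finset.sum_congr rfl fun I _ => ?_
        have h1 := hcardI I
        have h3 : (0 : ℝ) < Nat.card I := by exact_mod_cast Nat.card_pos
        have h4 : (0 : ℝ) < Nat.card (R ⧸ I) := by exact_mod_cast Nat.card_pos
        rw [← h1]; field_simp
end FiniteRings

/-! ### Counting ideals -/

section Ideals
variable {F : Type*} [Field F] [NumberField F]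

lemma exists_count_ideals_le (F : Type*) [Field F] [NumberField F] :
    ∃ C : ℝ, 0 < C ∧ ∃ n₀ : ℕ, ∀ n : ℕ, n₀ ≤ n →
      (Nat.card {I : Ideal (𝓞 F) // Ideal.absNorm I ≤ n} : ℝ) ≤ C * n := by
  have h := NumberField.Ideal.tendsto_norm_le_div_atTop F
  set κ := ((2 ^ InfinitePlace.nrRealPlaces F * (2 * Real.pi) ^ InfinitePlace.nrComplexPlaces F *
    Units.regulator F * classNumber F) / (Units.torsionOrder F * Real.sqrt |discr F|))
  have h1 := h.eventually (gt_mem_nhds (show κ < |κ| + 1 by linarith [le_abs_self κ]))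
  obtain ⟨s₀, hs⟩ := Filter.eventually_atTop.1 h1
  refine ⟨|κ| + 1, by positivity, ⌈s₀⌉₊ + 1, fun n hn => ?_⟩
  have h2 : s₀ ≤ n := (Nat.le_ceil _).trans (by exact_mod_cast (by omega : ⌈s₀⌉₊ ≤ n))
  have hn0 : (0 : ℝ) < n := by exact_mod_cast (by omega : 0 < n)
  have h3 := (hs n h2).le
  rw [div_le_iff₀ hn0] at h3
  simpa using h3

/-- The tail of `∑ N(I)⁻³` is small. -/
lemma exists_tail_le (F : Type*) [Field F] [NumberField F] (ε : ℝ) (hε : 0 < ε) :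
    ∃ B : ℕ, ∀ S : Finset (Ideal (𝓞 F)), (∀ I ∈ S, B < Ideal.absNorm I) →
      ∑ I ∈ S, (1 / (Ideal.absNorm I : ℝ)) ^ 3 ≤ ε := by
  classical
  obtain ⟨C, hC, n₀, hcount⟩ := exists_count_ideals_le F
  have hsum : Summable (fun n : ℕ => C * (1 / (n : ℝ) ^ 2)) :=
    (Real.summable_one_div_nat_pow.2 (by norm_num)).mul_left C
  have htail := tendsto_sum_nat_add (fun n : ℕ => C * (1 / (n : ℝ) ^ 2))
  obtain ⟨B, hB⟩ := Filter.eventually_atTop.1 (htail.eventually (gt_mem_nhds hε))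
  refine ⟨B + n₀, fun S hS => ?_⟩
  set B' := B + n₀ with hB'
  have hB1 := (hB B' (by omega)).le
  set M := S.sup Ideal.absNorm with hM
  calc ∑ I ∈ S, (1 / (Ideal.absNorm I : ℝ)) ^ 3
      = ∑ n ∈ Finset.Icc (B' + 1) M, ∑ I ∈ S with Ideal.absNorm I = n,
          (1 / (Ideal.absNorm I : ℝ)) ^ 3 := by
        rw [Finset.sum_fiberwise_of_maps_to]
        intro I hI
        rw [Finset.mem_Icc]
        exact ⟨hS I hI, Finset.le_sup (f := Ideal.absNorm) hI⟩
    _ ≤ ∑ n ∈ Finset.Icc (B' + 1) M, C * (1 / (n : ℝ) ^ 2) := by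
        refine Finset.sum_le_sum fun n hn => ?_
        rw [Finset.mem_Icc] at hn
        have e : ∑ I ∈ S with Ideal.absNorm I = n, (1 / (Ideal.absNorm I : ℝ)) ^ 3 =
            ∑ I ∈ S with Ideal.absNorm I = n, (1 / (n : ℝ)) ^ 3 :=
          Finset.sum_congr rfl fun I hI => by rw [(Finset.mem_filter.1 hI).2]
        rw [e, Finset.sum_const, nsmul_eq_mul]
        have hn0 : (0 : ℝ) < n := by exact_mod_cast (by omega : 0 < n)
        have h1 : ((S.filter fun I => Ideal.absNorm I = n).card : ℝ) ≤ C * n := by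
          refine le_trans ?_ (hcount n (by omega))
          have hfin : Finite {I : Ideal (𝓞 F) // Ideal.absNorm I ≤ n} :=
            (Ideal.finite_setOfPred_absNorm_le n)
          rw [← Fintype.card_coe, ← Nat.card_eq_fintype_card]
          exact_mod_cast Nat.card_le_card_of_injective
            (fun I : (S.filter fun I => Ideal.absNorm I = n : Finset _) =>
              (⟨I.1, (Finset.mem_filter.1 I.2).2.le⟩ : {I : Ideal (𝓞 F) // Ideal.absNorm I ≤ n}))
            (fun a b h => Subtype.ext (by simpa using h))
        calc _ ≤ C * n * (1 / (n : ℝ)) ^ 3 := by gcongr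
          _ = _ := by field_simp
    _ ≤ ∑' k : ℕ, C * (1 / ((k + B' : ℕ) : ℝ) ^ 2) := by
        have hs2 : Summable (fun k : ℕ => C * (1 / ((k + B' : ℕ) : ℝ) ^ 2)) :=
          (summable_nat_add_iff (f := fun n : ℕ => C * (1 / (n : ℝ) ^ 2)) B').2 hsum
        have e : ∑ n ∈ Finset.Icc (B' + 1) M, C * (1 / (n : ℝ) ^ 2) =
            ∑ k ∈ (Finset.Icc (B' + 1) M).image (fun n => n - B'),
              C * (1 / ((k + B' : ℕ) : ℝ) ^ 2) := by
          rw [Finset.sum_image]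
          · refine Finset.sum_congr rfl fun n hn => ?_
            rw [Finset.mem_Icc] at hn
            rw [Nat.sub_add_cancel (by omega)]
          · intro a ha b hb hab
            simp only [Finset.mem_coe, Finset.mem_Icc] at ha hb hab
            omega
        rw [e]
        exact hs2.sum_le_tsum _ (fun _ _ => by positivity)
    _ ≤ ε := hB1
end Ideals

/-! ### Families of values equidistributed modulo divisors -/

section Equidistribution
universe u
variable {F : Type u} [Field F] [NumberField F]

lemma finite_ideal (R : Type*) [CommRing R] [Finite R] : Finite (Ideal R) :=
  Finite.of_injective (fun I : Ideal R => (I : Set R)) SetLike.coe_injective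

/-- `B` is so large that the ideals of norm above `B` contribute at most `ε` to `∑ N(I)⁻³`. -/
def TailBound (F : Type*) [Field F] [NumberField F] (B : ℕ) (ε : ℝ) : Prop :=
  ∀ S : Finset (Ideal (𝓞 F)), (∀ I ∈ S, B < Ideal.absNorm I) →
      ∑ I ∈ S, (1 / (Ideal.absNorm I : ℝ)) ^ 3 ≤ ε

lemma sum_ideals_quot_le {B : ℕ} {ε : ℝ} (hB : TailBound F B ε) (J : Ideal (𝓞 F))
    [Fintype (Ideal (𝓞 F ⧸ J))]
    (h : ∀ I : Ideal (𝓞 F), J ≤ I → I ≠ ⊤ → B < Ideal.absNorm I) :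
    ∑ I : Ideal (𝓞 F ⧸ J), (1 / (Nat.card ((𝓞 F ⧸ J) ⧸ I) : ℝ)) ^ 3 ≤ 1 + ε := by
  classical
  let φ : Ideal (𝓞 F ⧸ J) → Ideal (𝓞 F) := fun I => I.comap (Ideal.Quotient.mk J)
  have hφ : Function.Injective φ :=
    Ideal.comap_injective_of_surjective _ Ideal.Quotient.mk_surjective
  have hc : ∀ I, Nat.card ((𝓞 F ⧸ J) ⧸ I) = Ideal.absNorm (φ I) := by
    intro I
    rw [Ideal.absNorm_apply, Submodule.cardQuot_apply]
    let g : 𝓞 F →+* (𝓞 F ⧸ J) ⧸ I := (Ideal.Quotient.mk I).comp (Ideal.Quotient.mk J)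
    have hg : Function.Surjective g :=
      Ideal.Quotient.mk_surjective.comp Ideal.Quotient.mk_surjective
    have hk : RingHom.ker g = φ I := by
      ext x
      simp [g, φ, RingHom.mem_ker, Ideal.Quotient.eq_zero_iff_mem]
    rw [← hk]
    exact (Nat.card_congr (RingHom.quotientKerEquivOfSurjective hg).toEquiv).symm
  have hle : ∀ I, J ≤ φ I := fun I => by
    intro x hx
    simp only [φ, Ideal.mem_comap]
    rw [Ideal.Quotient.eq_zero_iff_mem.2 hx]; exact zero_mem _
  rw [← Finset.add_sum_erase _ _ (Finset.mem_univ (⊤ : Ideal (𝓞 F ⧸ J)))]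
  refine add_le_add ?_ ?_
  · rw [hc]
    simp [φ]
  · calc _ = ∑ I ∈ ((Finset.univ.erase (⊤ : Ideal (𝓞 F ⧸ J))).image φ),
            (1 / (Ideal.absNorm I : ℝ)) ^ 3 := by
          rw [Finset.sum_image (fun a _ b _ hab => hφ hab)]
          exact Finset.sum_congr rfl fun I _ => by rw [hc]
      _ ≤ ε := by
          refine hB _ fun I hI => ?_
          obtain ⟨I', hI', rfl⟩ := Finset.mem_image.1 hI
          refine h _ (hle I') fun ht => (Finset.mem_erase.1 hI').1 (hφ ?_)
          rw [ht]; simp [φ]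

lemma exists_coprime_part (m P : ℕ) (hP : 0 < P) :
    ∃ J E : ℕ, 0 < E ∧ Nat.Coprime E m ∧ P ∣ m ^ J * E := by
  induction P using Nat.strong_induction_on with
  | _ P ih =>
    by_cases h : Nat.Coprime P m
    · exact ⟨0, P, hP, h, by simp⟩
    · obtain ⟨P', hP'⟩ := Nat.gcd_dvd_left P m
      have hg0 : 0 < Nat.gcd P m := Nat.gcd_pos_of_pos_left _ hP
      have hg : 1 < Nat.gcd P m := lt_of_le_of_ne hg0 (Ne.symm h)
      have hP'0 : 0 < P' := by
        rcases Nat.eq_zero_or_pos P' with h0 | h0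
        · rw [h0, mul_zero] at hP'; omega
        · exact h0
      have hlt : P' < P := by rw [hP']; nlinarith
      obtain ⟨J, E, hE, hc, hd⟩ := ih P' hlt hP'0
      refine ⟨J + 1, E, hE, hc, ?_⟩
      rw [hP', pow_succ, mul_comm (m ^ J) m, mul_assoc]
      exact mul_dvd_mul (Nat.gcd_dvd_right _ _) hd

lemma isUnit_mk_of_isCoprime {R : Type*} [CommRing R] {x y : R} (h : IsCoprime x y) (I : Ideal R)
    (hy : y ∈ I) :
    IsUnit (Ideal.Quotient.mk I x) := by
  obtain ⟨u, v, huv⟩ := h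
  refine IsUnit.of_mul_eq_one (Ideal.Quotient.mk I u) ?_
  rw [← map_mul, ← map_one (Ideal.Quotient.mk I), Ideal.Quotient.eq]
  have : x * u - 1 = -v * y := by linear_combination huv
  rw [this]; exact Ideal.mul_mem_left _ _ hy

/-- Solutions of `P s - P s' - c ∈ I` when `P` is a permutation. -/
lemma card_linear_part {R : Type*} [CommRing R] [Finite R] (P : R → R)
    (hP : Function.Injective P) (I : Ideal R) (c : R) :
    Nat.card {p : R × R // P p.1 - P p.2 - c ∈ I} * Nat.card (R ⧸ I) = Nat.card R ^ 2 := by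
  have hb : Function.Bijective P := Finite.injective_iff_bijective.1 hP
  let e := Equiv.ofBijective P hb
  have h1 : Nat.card {p : R × R // P p.1 - P p.2 - c ∈ I} =
      Nat.card {p : R × R // p.1 - p.2 - c ∈ I} :=
    Nat.card_congr ((Equiv.prodCongr e e).subtypeEquiv (fun p => by simp [e]))
  let f : R × R →+ R ⧸ I :=
    { toFun := fun p => Ideal.Quotient.mk I (p.1 - p.2)
      map_zero' := by simp
      map_add' := fun p q => by
        rw [← map_add]; congr 1; simp only [Prod.fst_add, Prod.snd_add]; ring }
  have hf : Function.Surjective f := fun x => by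
    obtain ⟨y, rfl⟩ := Ideal.Quotient.mk_surjective x
    exact ⟨(y, 0), by simp [f]⟩
  have h2 := card_preimage f hf (fun x => x = Ideal.Quotient.mk I c)
  have h3 : Nat.card {b : R ⧸ I // b = Ideal.Quotient.mk I c} = 1 := by
    simp
  rw [h3, Nat.card_prod, mul_one] at h2
  rw [h1, sq, ← h2]
  congr 1
  refine Nat.card_congr (Equiv.subtypeEquivRight fun p => ?_)
  exact (Ideal.Quotient.eq (I := I) (x := p.1 - p.2) (y := c)).symm

/-- The local part of the construction: a finite family of values `ψ τ` which is almost uniformly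
distributed, in the sense of differences, modulo each member `2μg` of a prescribed finite
family. -/
lemma exists_equidistributed {B : ℕ} {ε : ℝ} (hB : TailBound F B ε) (m : ℕ)
    (hm : 0 < m) (h2m : 2 ∣ m) (hmB : ∀ p : ℕ, p.Prime → p ≤ B → p ∣ m) (a Q Bl μ α wc : 𝓞 F)
    (hBl : IsCoprime Bl (m : 𝓞 F)) (hμ : μ ≠ 0) (hμα : μ * α ∣ (m : 𝓞 F) ^ 2)
    (G : Finset (𝓞 F)) (hG : ∀ g ∈ G, g ≠ 0) :
    ∃ (T : Type u) (_ : Fintype T) (_ : Nonempty T) (s : T → 𝓞 F) (b : T → Fin 4 → 𝓞 F)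
      (E J : ℕ) (ψ : T → 𝓞 F),
      (∀ τ, ψ τ = E * (s τ * Bl + m * a * E * (s τ) ^ 2 * (1 + Q)) +
        μ * α * m ^ (2 * J) * ∑ i, (b τ i) ^ 2 + wc) ∧
      ∀ g ∈ G, ∀ c : 𝓞 F,
        (Nat.card {p : T × T // 2 * μ * g ∣ ψ p.1 - ψ p.2 - c} : ℝ) * nN (2 * μ * g) ≤
          (1 + ε) * (Fintype.card T : ℝ) ^ 2 := by
  classical
  have hG' : ∀ g ∈ G, 2 * μ * g ≠ 0 := fun g hg =>
    mul_ne_zero (mul_ne_zero two_ne_zero hμ) (hG g hg)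
  obtain ⟨J, E, hE, hEm, hdvd⟩ := exists_coprime_part m (∏ g ∈ G, nN (2 * μ * g))
    (Finset.prod_pos fun g hg => Nat.pos_of_ne_zero (nN_ne_zero (hG' g hg)))
  have hm0 : (m : 𝓞 F) ^ J ≠ 0 := pow_ne_zero _ (by exact_mod_cast hm.ne')
  have hE0 : (E : 𝓞 F) ≠ 0 := by exact_mod_cast hE.ne'
  have hcopE : IsCoprime (E : 𝓞 F) (m : 𝓞 F) := by
    have := (Nat.isCoprime_iff_coprime.2 hEm).map (Int.castRingHom (𝓞 F))
    simpa using this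
  set I₁ : Ideal (𝓞 F) := Ideal.span {(m : 𝓞 F) ^ J} with hI₁
  set I₂ : Ideal (𝓞 F) := Ideal.span {(E : 𝓞 F)} with hI₂
  have : Finite (𝓞 F ⧸ I₁) := finite_quot_span hm0
  have : Finite (𝓞 F ⧸ I₂) := finite_quot_span hE0
  have hs1 : Function.Surjective (Ideal.Quotient.mk I₁) := Ideal.Quotient.mk_surjective
  have hs2 : Function.Surjective (Ideal.Quotient.mk I₂) := Ideal.Quotient.mk_surjective
  let s₁ := Function.surjInv hs1
  let s₂ := Function.surjInv hs2
  have hs₁ : ∀ x, Ideal.Quotient.mk I₁ (s₁ x) = x := Function.surjInv_eq hs1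
  have hs₂ : ∀ x, Ideal.Quotient.mk I₂ (s₂ x) = x := Function.surjInv_eq hs2
  let T := (𝓞 F ⧸ I₁) × (Fin 4 → 𝓞 F ⧸ I₂)
  let _ : Fintype T := Fintype.ofFinite T
  let ψ : T → 𝓞 F := fun τ => E * (s₁ τ.1 * Bl + m * a * E * (s₁ τ.1) ^ 2 * (1 + Q)) +
        μ * α * m ^ (2 * J) * ∑ i, (s₂ (τ.2 i)) ^ 2 + wc
  refine ⟨T, inferInstance, inferInstance, fun τ => s₁ τ.1, fun τ i => s₂ (τ.2 i), E, J, ψ,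
    fun τ => rfl, ?_⟩
  intro g hg c
  set f := 2 * μ * g with hf
  have hf0 : f ≠ 0 := hG' g hg
  have hfd : f ∣ (m : 𝓞 F) ^ J * E := by
    have h1 : nN f ∣ m ^ J * E := (Finset.dvd_prod_of_mem _ hg).trans hdvd
    have h3 : ((nN f : ℕ) : 𝓞 F) ∣ ((m ^ J * E : ℕ) : 𝓞 F) := Nat.cast_dvd_cast h1
    push_cast at h3
    exact (dvd_nN f).trans h3
  have hcopJ : IsCoprime (E : 𝓞 F) ((m : 𝓞 F) ^ J) := hcopE.pow_right
  set 𝔞 : Ideal (𝓞 F) := Ideal.span {f, (m : 𝓞 F) ^ J} with h𝔞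
  set 𝔟 : Ideal (𝓞 F) := Ideal.span {f, (E : 𝓞 F)} with h𝔟
  have hf𝔞 : f ∈ 𝔞 := Ideal.subset_span (by simp)
  have hf𝔟 : f ∈ 𝔟 := Ideal.subset_span (by simp)
  have hm𝔞 : (m : 𝓞 F) ^ J ∈ 𝔞 := Ideal.subset_span (by simp)
  have hE𝔟 : (E : 𝓞 F) ∈ 𝔟 := Ideal.subset_span (by simp)
  have hI1le : I₁ ≤ 𝔞 := by rw [hI₁, Ideal.span_singleton_le_iff_mem]; exact hm𝔞
  have hI2le : I₂ ≤ 𝔟 := by rw [hI₂, Ideal.span_singleton_le_iff_mem]; exact hE𝔟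
  have hfin : Finite (𝓞 F ⧸ Ideal.span {f}) := finite_quot_span hf0
  have hspan𝔞 : Ideal.span {f} ≤ 𝔞 := by rw [Ideal.span_singleton_le_iff_mem]; exact hf𝔞
  have hspan𝔟 : Ideal.span {f} ≤ 𝔟 := by rw [Ideal.span_singleton_le_iff_mem]; exact hf𝔟
  have hfin𝔞 : Finite (𝓞 F ⧸ 𝔞) := Finite.of_surjective _ (Ideal.Quotient.factor_surjective hspan𝔞)
  have hfin𝔟 : Finite (𝓞 F ⧸ 𝔟) := Finite.of_surjective _ (Ideal.Quotient.factor_surjective hspan𝔟)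
  -- `𝔞 ∩ 𝔟 = (f)`, as `m ^ J` and `E` are coprime and `f ∣ m ^ J * E`
  have hnorm : nN f ≤ Nat.card (𝓞 F ⧸ 𝔞) * Nat.card (𝓞 F ⧸ 𝔟) := by
    rw [← card_quot_span, ← Nat.card_prod]
    refine Nat.card_le_card_of_injective
      ((Ideal.Quotient.factor hspan𝔞).prod (Ideal.Quotient.factor hspan𝔟)) ?_
    rw [injective_iff_map_eq_zero]
    intro x hx
    obtain ⟨y, rfl⟩ := Ideal.Quotient.mk_surjective x
    simp only [RingHom.prod_apply, Ideal.Quotient.factor_mk, Prod.mk_eq_zero,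
      Ideal.Quotient.eq_zero_iff_mem] at hx
    rw [Ideal.Quotient.eq_zero_iff_mem, Ideal.mem_span_singleton]
    obtain ⟨u, v, huv⟩ := hcopJ
    obtain ⟨p, q, hpq⟩ := Ideal.mem_span_pair.1 hx.1
    obtain ⟨p', q', hpq'⟩ := Ideal.mem_span_pair.1 hx.2
    obtain ⟨k, hk⟩ := hfd
    refine ⟨u * E * p + u * q * k + v * m ^ J * p' + v * q' * k, ?_⟩
    linear_combination (-y) * huv - (u * E) * hpq - (v * m ^ J) * hpq' + (u * q + v * q') * hk
  -- the condition modulo `𝔞`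
  let P : 𝓞 F ⧸ I₁ → 𝓞 F ⧸ I₁ := fun x =>
    Ideal.Quotient.mk I₁ (E * (s₁ x * Bl + m * a * E * (s₁ x) ^ 2 * (1 + Q)))
  have hPinj : Function.Injective P := by
    intro x y hxy
    have hu1 : IsUnit (Ideal.Quotient.mk I₁ (E : 𝓞 F)) :=
      isUnit_mk_of_isCoprime hcopJ I₁ (Ideal.mem_span_singleton_self _)
    have hu2 : IsUnit (Ideal.Quotient.mk I₁ (Bl + m * (a * E * (s₁ x + s₁ y) * (1 + Q)))) := by
      refine isUnit_mk_of_isCoprime (IsCoprime.pow_right (n := J) ?_) I₁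
        (Ideal.mem_span_singleton_self _)
      exact IsCoprime.add_mul_left_left hBl _
    have h0 : Ideal.Quotient.mk I₁ (s₁ x - s₁ y) = 0 := by
      apply hu1.mul_left_cancel
      apply hu2.mul_left_cancel
      rw [mul_zero, mul_zero, ← map_mul, ← map_mul]
      have h5 : Ideal.Quotient.mk I₁ (E * (s₁ x * Bl + m * a * E * (s₁ x) ^ 2 * (1 + Q)) -
          E * (s₁ y * Bl + m * a * E * (s₁ y) ^ 2 * (1 + Q))) = 0 := by
        rw [map_sub]; exact sub_eq_zero.2 hxy
      rw [← h5]; congr 1; ring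
    rw [map_sub, hs₁, hs₁] at h0
    exact sub_eq_zero.1 h0
  have hcount1 : Nat.card {p : (𝓞 F ⧸ I₁) × (𝓞 F ⧸ I₁) //
      P p.1 - P p.2 - Ideal.Quotient.mk I₁ c ∈ 𝔞.map (Ideal.Quotient.mk I₁)} *
        Nat.card (𝓞 F ⧸ 𝔞) = Nat.card (𝓞 F ⧸ I₁) ^ 2 := by
    rw [← card_linear_part P hPinj (𝔞.map (Ideal.Quotient.mk I₁)) (Ideal.Quotient.mk I₁ c)]
    congr 1
    exact (Nat.card_congr (DoubleQuot.quotQuotEquivQuotOfLE hI1le).toEquiv).symm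
  -- the condition modulo `𝔟`
  have : Fintype (Ideal (𝓞 F ⧸ 𝔟)) := @Fintype.ofFinite _ (finite_ideal _)
  let R := 𝓞 F ⧸ 𝔟
  let κ : R := Ideal.Quotient.mk 𝔟 (μ * α * m ^ (2 * J))
  have hmE : IsCoprime (m : 𝓞 F) (E : 𝓞 F) := hcopE.symm
  have h2R : IsUnit (2 : R) := by
    have h : IsCoprime (2 : 𝓞 F) (E : 𝓞 F) := by
      refine hmE.of_isCoprime_of_dvd_left ?_
      have := Nat.cast_dvd_cast (α := 𝓞 F) h2m
      simpa using this
    have := isUnit_mk_of_isCoprime h 𝔟 hE𝔟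
    rwa [map_ofNat (Ideal.Quotient.mk 𝔟) 2] at this
  have hκ : IsUnit κ := by
    refine isUnit_mk_of_isCoprime (y := (E : 𝓞 F)) ?_ 𝔟 hE𝔟
    exact IsCoprime.mul_left (hmE.pow_left.of_isCoprime_of_dvd_left hμα) hmE.pow_left
  have hideal : ∀ I : Ideal (𝓞 F), 𝔟 ≤ I → I ≠ ⊤ → B < Ideal.absNorm I := by
    intro I hI hItop
    by_contra hcon
    push Not at hcon
    have hEI : (E : 𝓞 F) ∈ I := hI hE𝔟
    have hn0 : Ideal.absNorm I ≠ 0 := by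
      rw [Ne, Ideal.absNorm_eq_zero_iff]
      rintro rfl
      exact hE0 (by simpa using hEI)
    have hcop : Nat.Coprime (Ideal.absNorm I) E := by
      refine Nat.coprime_of_dvd fun p hp h1 h3 => ?_
      have h4 : p ∣ m := hmB p hp ((Nat.le_of_dvd (Nat.pos_of_ne_zero hn0) h1).trans hcon)
      exact hp.one_lt.ne' (Nat.dvd_one.1 (hEm ▸ Nat.dvd_gcd h3 h4))
    have hc2 : IsCoprime ((Ideal.absNorm I : ℕ) : 𝓞 F) (E : 𝓞 F) := by
      have := (Nat.isCoprime_iff_coprime.2 hcop).map (Int.castRingHom (𝓞 F))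
      simpa using this
    obtain ⟨u, v, huv⟩ := hc2
    refine hItop ((Ideal.eq_top_iff_one _).2 ?_)
    rw [← huv]
    exact I.add_mem (I.mul_mem_left _ (Ideal.absNorm_mem I)) (I.mul_mem_left _ hEI)
  have hcount2 : (Nat.card {p : (Fin 4 → 𝓞 F ⧸ I₂) × (Fin 4 → 𝓞 F ⧸ I₂) //
      κ * ∑ i, ((Ideal.Quotient.factor hI2le (p.1 i)) ^ 2 -
        (Ideal.Quotient.factor hI2le (p.2 i)) ^ 2) = Ideal.Quotient.mk 𝔟 (c)} : ℝ) *
        Nat.card (𝓞 F ⧸ 𝔟) ≤ (1 + ε) * (Nat.card (𝓞 F ⧸ I₂) : ℝ) ^ 8 := by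
    let φ : (Fin 4 → 𝓞 F ⧸ I₂) × (Fin 4 → 𝓞 F ⧸ I₂) →+ (Fin 4 → R) × (Fin 4 → R) :=
      { toFun := fun p => (fun i => Ideal.Quotient.factor hI2le (p.1 i),
          fun i => Ideal.Quotient.factor hI2le (p.2 i))
        map_zero' := by ext <;> simp
        map_add' := fun p q => by ext <;> simp }
    have hφ : Function.Surjective φ := by
      rintro ⟨x, y⟩
      choose x' hx' using fun i => Ideal.Quotient.factor_surjective hI2le (x i)
      choose y' hy' using fun i => Ideal.Quotient.factor_surjective hI2le (y i)
      exact ⟨(x', y'), by ext i <;> simp [φ, hx', hy']⟩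
    have h1 := card_preimage φ hφ
      (fun p => κ * ∑ i, (p.1 i ^ 2 - p.2 i ^ 2) = Ideal.Quotient.mk 𝔟 c)
    have h3 := card_diff_sq_le h2R κ hκ (Ideal.Quotient.mk 𝔟 c)
    have h4 := sum_ideals_quot_le hB 𝔟 hideal
    have hR : (0 : ℝ) < Nat.card R := by exact_mod_cast Nat.card_pos
    have h5 := h3.trans (mul_le_mul_of_nonneg_left h4 (by positivity))
    have e1 : Nat.card ((Fin 4 → R) × (Fin 4 → R)) = Nat.card R ^ 8 := by
      rw [Nat.card_prod, Nat.card_fun, Nat.card_fin]; ring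
    have e2 : Nat.card ((Fin 4 → 𝓞 F ⧸ I₂) × (Fin 4 → 𝓞 F ⧸ I₂)) = Nat.card (𝓞 F ⧸ I₂) ^ 8 := by
      rw [Nat.card_prod, Nat.card_fun, Nat.card_fin]; ring
    rw [e1, e2] at h1
    have h6 : (Nat.card {p : (Fin 4 → 𝓞 F ⧸ I₂) × (Fin 4 → 𝓞 F ⧸ I₂) //
      κ * ∑ i, ((Ideal.Quotient.factor hI2le (p.1 i)) ^ 2 -
        (Ideal.Quotient.factor hI2le (p.2 i)) ^ 2) = Ideal.Quotient.mk 𝔟 (c)} : ℝ) *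
        (Nat.card R : ℝ) ^ 8 = (Nat.card (𝓞 F ⧸ I₂) : ℝ) ^ 8 *
          Nat.card {p : (Fin 4 → R) × (Fin 4 → R) //
            κ * ∑ i, (p.1 i ^ 2 - p.2 i ^ 2) = Ideal.Quotient.mk 𝔟 c} := by
      exact_mod_cast h1
    have h7 : (0 : ℝ) < (Nat.card R : ℝ) ^ 7 := by positivity
    rw [← mul_le_mul_iff_left₀ h7]
    calc _ = (Nat.card {p : (Fin 4 → 𝓞 F ⧸ I₂) × (Fin 4 → 𝓞 F ⧸ I₂) //
            κ * ∑ i, ((Ideal.Quotient.factor hI2le (p.1 i)) ^ 2 -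
            (Ideal.Quotient.factor hI2le (p.2 i)) ^ 2) = Ideal.Quotient.mk 𝔟 (c)} : ℝ) *
            (Nat.card R : ℝ) ^ 8 := by ring
      _ = _ := h6
      _ ≤ (Nat.card (𝓞 F ⧸ I₂) : ℝ) ^ 8 * ((Nat.card R : ℝ) ^ 7 * (1 + ε)) :=
          mul_le_mul_of_nonneg_left h5 (by positivity)
      _ = _ := by ring
  -- combine
  have hcomb : Nat.card {p : T × T // f ∣ ψ p.1 - ψ p.2 - c} ≤
      Nat.card {p : (𝓞 F ⧸ I₁) × (𝓞 F ⧸ I₁) //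
      P p.1 - P p.2 - Ideal.Quotient.mk I₁ c ∈ 𝔞.map (Ideal.Quotient.mk I₁)} *
      Nat.card {p : (Fin 4 → 𝓞 F ⧸ I₂) × (Fin 4 → 𝓞 F ⧸ I₂) //
      κ * ∑ i, ((Ideal.Quotient.factor hI2le (p.1 i)) ^ 2 -
        (Ideal.Quotient.factor hI2le (p.2 i)) ^ 2) = Ideal.Quotient.mk 𝔟 (c)} := by
    rw [← Nat.card_prod]
    refine Nat.card_le_card_of_injective
      (fun p => (⟨(p.1.1.1, p.1.2.1), ?_⟩, ⟨(p.1.1.2, p.1.2.2), ?_⟩)) ?_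
    · obtain ⟨⟨⟨x, b⟩, ⟨x', b'⟩⟩, hp⟩ := p
      have h1 : ψ (x, b) - ψ (x', b') - c ∈ 𝔞 := Ideal.mem_of_dvd _ hp hf𝔞
      have h3 : ψ (x, b) - ψ (x', b') - c -
          (μ * α * m ^ J * (∑ i, (s₂ (b i)) ^ 2 - ∑ i, (s₂ (b' i)) ^ 2)) * m ^ J ∈ 𝔞 :=
        𝔞.sub_mem h1 (𝔞.mul_mem_left _ hm𝔞)
      have h4 := Ideal.mem_map_of_mem (Ideal.Quotient.mk I₁) h3
      change P x - P x' - Ideal.Quotient.mk I₁ c ∈ _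
      simp only [P]
      rw [← map_sub, ← map_sub]
      convert h4 using 2
      simp only [ψ]
      ring
    · obtain ⟨⟨⟨x, b⟩, ⟨x', b'⟩⟩, hp⟩ := p
      have h1 : ψ (x, b) - ψ (x', b') - c ∈ 𝔟 := Ideal.mem_of_dvd _ hp hf𝔟
      have h3 : ψ (x, b) - ψ (x', b') - c -
          ((s₁ x * Bl + m * a * E * (s₁ x) ^ 2 * (1 + Q)) -
            (s₁ x' * Bl + m * a * E * (s₁ x') ^ 2 * (1 + Q))) * E ∈ 𝔟 :=
        𝔟.sub_mem h1 (𝔟.mul_mem_left _ hE𝔟)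
      have hfac : ∀ z : 𝓞 F ⧸ I₂, Ideal.Quotient.factor hI2le z =
          Ideal.Quotient.mk 𝔟 (s₂ z) := fun z => by
        conv_lhs => rw [← hs₂ z]
        exact Ideal.Quotient.factor_mk _ _
      change κ * ∑ i, ((Ideal.Quotient.factor hI2le (b i)) ^ 2 -
        (Ideal.Quotient.factor hI2le (b' i)) ^ 2) = _
      simp only [hfac, κ, ← map_pow, ← map_sub, ← map_sum, ← map_mul]
      rw [Ideal.Quotient.eq]
      convert h3 using 1
      simp only [ψ, Finset.sum_sub_distrib]
      ring
    · rintro ⟨⟨⟨x, b⟩, ⟨x', b'⟩⟩, hp⟩ ⟨⟨⟨y, d⟩, ⟨y', d'⟩⟩, hq⟩ h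
      simp only [Prod.mk.injEq, Subtype.mk.injEq] at h
      obtain ⟨⟨rfl, rfl⟩, rfl, rfl⟩ := h
      rfl
  have hT : Fintype.card T = Nat.card (𝓞 F ⧸ I₁) * Nat.card (𝓞 F ⧸ I₂) ^ 4 := by
    rw [← Nat.card_eq_fintype_card, Nat.card_prod, Nat.card_fun, Nat.card_fin]
  set n₁ := Nat.card {p : (𝓞 F ⧸ I₁) × (𝓞 F ⧸ I₁) //
      P p.1 - P p.2 - Ideal.Quotient.mk I₁ c ∈ 𝔞.map (Ideal.Quotient.mk I₁)}
  set n₂ := Nat.card {p : (Fin 4 → 𝓞 F ⧸ I₂) × (Fin 4 → 𝓞 F ⧸ I₂) //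
      κ * ∑ i, ((Ideal.Quotient.factor hI2le (p.1 i)) ^ 2 -
        (Ideal.Quotient.factor hI2le (p.2 i)) ^ 2) = Ideal.Quotient.mk 𝔟 (c)}
  calc (Nat.card {p : T × T // f ∣ ψ p.1 - ψ p.2 - c} : ℝ) * nN f
      ≤ (n₁ * n₂ : ℕ) * ((Nat.card (𝓞 F ⧸ 𝔞) * Nat.card (𝓞 F ⧸ 𝔟) : ℕ) : ℝ) := by
        gcongr
    _ = ((n₁ * Nat.card (𝓞 F ⧸ 𝔞) : ℕ) : ℝ) * (n₂ * Nat.card (𝓞 F ⧸ 𝔟)) := by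
        push_cast; ring
    _ ≤ ((n₁ * Nat.card (𝓞 F ⧸ 𝔞) : ℕ) : ℝ) * ((1 + ε) * (Nat.card (𝓞 F ⧸ I₂) : ℝ) ^ 8) := by
        gcongr
    _ = _ := by rw [hcount1, hT]; push_cast; ring
end Equidistribution

/-! ### Collisions and the second moment -/

section SecondMoment
universe u
variable {F : Type u} [Field F] [NumberField F]

/-- Cauchy–Schwarz: a map with few collisions has a large image. -/
lemma card_sq_le_card_image {Ω O : Type*} [DecidableEq O] (S : Finset Ω) (Φ : Ω → O) :
    S.card ^ 2 ≤ (S.image Φ).card * ((S ×ˢ S).filter (fun p => Φ p.1 = Φ p.2)).card := by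
  have h1 : S.card = ∑ w ∈ S.image Φ, (S.filter fun x => Φ x = w).card :=
    Finset.card_eq_sum_card_image Φ S
  have h2 : ((S ×ˢ S).filter (fun p => Φ p.1 = Φ p.2)).card =
      ∑ w ∈ S.image Φ, (S.filter fun x => Φ x = w).card ^ 2 := by
    rw [Finset.card_eq_sum_card_fiberwise (f := fun p => Φ p.1) (t := S.image Φ)]
    · refine Finset.sum_congr rfl fun w _ => ?_
      rw [sq, ← Finset.card_product]
      congr 1
      ext ⟨x, y⟩
      simp only [Finset.mem_filter, Finset.mem_product]
      constructor
      · rintro ⟨⟨⟨hx, hy⟩, h⟩, h'⟩; exact ⟨⟨hx, h'⟩, hy, h ▸ h'⟩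
      · rintro ⟨⟨hx, h⟩, hy, h'⟩; exact ⟨⟨⟨hx, hy⟩, h.trans h'.symm⟩, h⟩
    · intro p hp
      simp only [Finset.coe_filter, Finset.mem_product, Set.mem_ofPred_eq] at hp
      exact Finset.mem_coe.2 (Finset.mem_image_of_mem _ hp.1.1)
  rw [h2, h1]
  exact sq_sum_le_card_mul_sum_sq

/-- Counting the collisions of `(x, u, τ) ↦ μ (x² + β u) + ψ τ`, with `x` in a translated cube,
according to the difference `g` of the two values of `x`. -/
lemma collision_count (T : Type*) [Fintype T] (ψ : T → 𝓞 F) (μ β : 𝓞 F) (hμ : μ ≠ 0)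
    (hβ : β ≠ 0) (C : 𝓞 F) (X 𝒰 Deg : Finset (𝓞 F)) (Gnd : 𝓞 F → 𝓞 F → Finset (𝓞 F)) (M H : ℝ)
    (hM : 0 ≤ M) [DecidableEq (𝓞 F)]
    (hsplit : ∀ j ∈ X, ∀ j' ∈ X, ∀ u ∈ 𝒰, ∀ u' ∈ 𝒰, ∀ τ τ' : T,
      μ * ((C + j) ^ 2 + β * u) + ψ τ = μ * ((C + j') ^ 2 + β * u') + ψ τ' →
        j - j' ∈ Deg ∨ j - j' ∈ Gnd u u')
    (hcount : ∀ u ∈ 𝒰, ∀ u' ∈ 𝒰, ∀ g ∈ Gnd u u', g ≠ 0 ∧ ∀ c : 𝓞 F,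
      (Nat.card {p : T × T // 2 * μ * g ∣ ψ p.1 - ψ p.2 - c} : ℝ) ≤ M * (1 / nm (g : F)))
    (hsum : ∀ u ∈ 𝒰, ∀ u' ∈ 𝒰, ∑ g ∈ Gnd u u', 1 / nm (g : F) ≤ H) :
    ((((X ×ˢ 𝒰 ×ˢ (Finset.univ : Finset T)) ×ˢ (X ×ˢ 𝒰 ×ˢ (Finset.univ : Finset T))).filter
      (fun p => μ * ((C + p.1.1) ^ 2 + β * p.1.2.1) + ψ p.1.2.2 =
        μ * ((C + p.2.1) ^ 2 + β * p.2.2.1) + ψ p.2.2.2)).card : ℝ) ≤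
      Deg.card * X.card * 𝒰.card * (Fintype.card T : ℝ) ^ 2 + (𝒰.card : ℝ) ^ 2 * (M * H) := by
  classical
  set Ω := X ×ˢ 𝒰 ×ˢ (Finset.univ : Finset T) with hΩ
  set P := (Ω ×ˢ Ω).filter (fun p => μ * ((C + p.1.1) ^ 2 + β * p.1.2.1) + ψ p.1.2.2 =
        μ * ((C + p.2.1) ^ 2 + β * p.2.2.1) + ψ p.2.2.2) with hP
  have hmem : ∀ p ∈ P, (p.1.1 ∈ X ∧ p.1.2.1 ∈ 𝒰) ∧ (p.2.1 ∈ X ∧ p.2.2.1 ∈ 𝒰) ∧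
      μ * ((C + p.1.1) ^ 2 + β * p.1.2.1) + ψ p.1.2.2 =
        μ * ((C + p.2.1) ^ 2 + β * p.2.2.1) + ψ p.2.2.2 := by
    intro p hp
    simp only [hP, hΩ, Finset.mem_filter, Finset.mem_product, Finset.mem_univ, and_true] at hp
    exact ⟨hp.1.1, hp.1.2, hp.2⟩
  rw [← Finset.card_filter_add_card_filter_not (s := P) (fun p => p.1.1 - p.2.1 ∈ Deg)]
  push_cast
  refine add_le_add ?_ ?_
  · have h : (P.filter (fun p => p.1.1 - p.2.1 ∈ Deg)).card ≤
        (Deg ×ˢ X ×ˢ 𝒰 ×ˢ (Finset.univ : Finset (T × T))).card := by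
      refine Finset.card_le_card_of_injOn
        (fun p => (p.1.1 - p.2.1, p.2.1, p.1.2.1, (p.1.2.2, p.2.2.2))) ?_ ?_
      · intro p hp
        rw [Finset.mem_coe, Finset.mem_filter] at hp
        have := hmem p hp.1
        simp [hp.2, this.2.1.1, this.1.2]
      · rintro ⟨⟨j, u, τ⟩, ⟨j', u', τ'⟩⟩ hp ⟨⟨k, v, ρ⟩, ⟨k', v', ρ'⟩⟩ hq h
        rw [Finset.mem_coe, Finset.mem_filter] at hp hq
        have e1 := (hmem _ hp.1).2.2
        have e2 := (hmem _ hq.1).2.2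
        simp only [Prod.mk.injEq] at h e1 e2 ⊢
        obtain ⟨h1, rfl, rfl, rfl, rfl⟩ := h
        have hj : j = k := sub_left_injective h1
        subst hj
        have hu : u' = v' := by
          apply mul_left_cancel₀ (mul_ne_zero hμ hβ)
          linear_combination e2 - e1
        simp [hu]
    rw [Finset.card_product, Finset.card_product, Finset.card_product, Finset.card_univ,
      Fintype.card_prod] at h
    calc _ ≤ ((Deg.card * (X.card * (𝒰.card * (Fintype.card T * Fintype.card T))) : ℕ) : ℝ) := by
          exact_mod_cast h
      _ = _ := by push_cast; ring
  · let S := fun (q : 𝓞 F × 𝓞 F) (g : 𝓞 F) => (Finset.univ : Finset (T × T)).filter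
      (fun p => 2 * μ * g ∣ ψ p.1 - ψ p.2 - (μ * g ^ 2 - μ * β * (q.2 - q.1)))
    have h : (P.filter (fun p => p.1.1 - p.2.1 ∉ Deg)).card ≤
        ((𝒰 ×ˢ 𝒰).sigma fun q => (Gnd q.1 q.2).sigma fun g => S q g).card := by
      refine Finset.card_le_card_of_injOn
        (fun p => ⟨(p.1.2.1, p.2.2.1), ⟨p.1.1 - p.2.1, (p.2.2.2, p.1.2.2)⟩⟩) ?_ ?_
      · rintro ⟨⟨j, u, τ⟩, ⟨j', u', τ'⟩⟩ hp
        rw [Finset.mem_coe, Finset.mem_filter] at hp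
        obtain ⟨⟨hj, hu⟩, ⟨hj', hu'⟩, e⟩ := hmem _ hp.1
        have hnd := (hsplit j hj j' hj' u hu u' hu' τ τ' e).resolve_left hp.2
        simp only [Finset.coe_sigma, Set.mem_sigma_iff, Finset.mem_coe, Finset.mem_product, S,
          Finset.mem_filter, Finset.mem_univ, true_and]
        refine ⟨⟨hu, hu'⟩, hnd, C + j', ?_⟩
        simp only at e
        linear_combination (-1 : 𝓞 F) * e
      · rintro ⟨⟨j, u, τ⟩, ⟨j', u', τ'⟩⟩ hp ⟨⟨k, v, ρ⟩, ⟨k', v', ρ'⟩⟩ hq h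
        rw [Finset.mem_coe, Finset.mem_filter] at hp hq
        obtain ⟨⟨hj, hu⟩, ⟨hj', hu'⟩, e1⟩ := hmem _ hp.1
        have e2 := (hmem _ hq.1).2.2
        have hnd := (hsplit j hj j' hj' u hu u' hu' τ τ' e1).resolve_left hp.2
        have hg0 := (hcount u hu u' hu' _ hnd).1
        simp only [Sigma.mk.injEq, Prod.mk.injEq] at h
        obtain ⟨⟨rfl, rfl⟩, h⟩ := h
        rw [heq_eq_eq, Sigma.mk.injEq] at h
        obtain ⟨h1, h2⟩ := h
        rw [heq_eq_eq, Prod.mk.injEq] at h2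
        obtain ⟨rfl, rfl⟩ := h2
        simp only at e1 e2
        have hjk : j' = k' := by
          apply mul_left_cancel₀ (mul_ne_zero (mul_ne_zero two_ne_zero hμ) hg0)
          have : j = k - k' + j' := by rw [← h1]; ring
          subst this
          linear_combination e1 - e2
        subst hjk
        have : j = k := sub_left_injective h1
        subst this
        rfl
    have hS : ∀ q ∈ 𝒰 ×ˢ 𝒰, (∑ g ∈ Gnd q.1 q.2, ((S q g).card : ℝ)) ≤ M * H := by
      intro q hq
      rw [Finset.mem_product] at hq
      calc _ ≤ ∑ g ∈ Gnd q.1 q.2, M * (1 / nm (g : F)) := by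
            refine Finset.sum_le_sum fun g hg => ?_
            have := (hcount _ hq.1 _ hq.2 g hg).2 (μ * g ^ 2 - μ * β * (q.2 - q.1))
            rw [Nat.card_eq_fintype_card, Fintype.card_subtype] at this
            exact this
        _ ≤ M * H := by
            rw [← Finset.mul_sum]
            exact mul_le_mul_of_nonneg_left (hsum _ hq.1 _ hq.2) hM
    calc _ ≤ ((((𝒰 ×ˢ 𝒰).sigma fun q => (Gnd q.1 q.2).sigma fun g => S q g).card : ℕ) : ℝ) := by
          exact_mod_cast h
      _ = ∑ q ∈ 𝒰 ×ˢ 𝒰, ∑ g ∈ Gnd q.1 q.2, ((S q g).card : ℝ) := by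
          rw [Finset.card_sigma]; push_cast
          exact Finset.sum_congr rfl fun q _ => by rw [Finset.card_sigma]; push_cast; rfl
      _ ≤ ∑ q ∈ 𝒰 ×ˢ 𝒰, M * H := Finset.sum_le_sum hS
      _ = _ := by
          rw [Finset.sum_const, Finset.card_product, nsmul_eq_mul]; push_cast; ring

end SecondMoment

/-! ### Families with a large set of values -/

section LargeImage
universe u
variable {F : Type u} [Field F] [NumberField F]

lemma exists_finset_house_le (A : ℝ) :
    ∃ S : Finset (𝓞 F), ∀ g : 𝓞 F, g ∈ S ↔ house (g : F) ≤ A := by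
  have h : {g : 𝓞 F | house (g : F) ≤ A}.Finite := by
    have h1 := Embeddings.finite_of_norm_le F ℂ A
    refine (h1.preimage (f := fun g : 𝓞 F => (g : F))
      (RingOfIntegers.coe_injective.injOn)).subset ?_
    intro g hg
    exact ⟨g.isIntegral_coe, fun φ => (norm_embedding_le_house _ φ).trans hg⟩
  exact ⟨h.toFinset, fun g => by simp⟩

/-- The difference `g` of the `x`-components in a collision satisfies `g (1 + t) = y + ζ` with `t`
in a small box, `y` depending only on the `u`-components, and `ζ` bounded. -/
lemma collision_diff {μ β j j' u u' p p' : 𝓞 F} {C : ℕ} {δ K X : ℝ} (hμ : μ ≠ 0)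
    (hC0 : (0 : ℝ) < C) (hXC : X ≤ C) (hK : 0 ≤ K)
    (hCb' : ∀ t : F, (∀ i, |crd t i| ≤ δ) → house t ≤ 1 / 2)
    (hj : ∀ i, 0 ≤ crd (j : F) i ∧ crd (j : F) i ≤ δ * C)
    (hj' : ∀ i, 0 ≤ crd (j' : F) i ∧ crd (j' : F) i ≤ δ * C)
    (hu : house (u : F) ≤ K * X) (hu' : house (u' : F) ≤ K * X)
    (hp : house (((p' - p : 𝓞 F) : F) / (μ : F)) ≤ C)
    (e : μ * (((C : 𝓞 F) + j) ^ 2 + β * u) + p = μ * (((C : 𝓞 F) + j') ^ 2 + β * u') + p') :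
    (∃ t ζ : F, ((j - j' : 𝓞 F) : F) * (1 + t) =
      ((1 / (2 * C) : ℚ) : F) * ((β * (u' - u) : 𝓞 F) : F) + ζ ∧
      (∀ i, 0 ≤ crd t i ∧ crd t i ≤ δ) ∧ house ζ ≤ 1) ∧
    house ((j - j' : 𝓞 F) : F) ≤ 2 * (house (β : F) * K) + 2 := by
  have hμF : (μ : F) ≠ 0 := by
    intro h; exact hμ (RingOfIntegers.coe_injective (by simpa using h))
  have hCF : ((C : ℕ) : F) ≠ 0 := by
    have : C ≠ 0 := by intro h; rw [h] at hC0; simp at hC0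
    exact_mod_cast this
  set y : F := ((1 / (2 * C) : ℚ) : F) * ((β * (u' - u) : 𝓞 F) : F) with hy
  set t : F := ((1 / (2 * C) : ℚ) : F) * ((j + j' : 𝓞 F) : F) with ht
  set z : F := ((p' - p : 𝓞 F) : F) / (μ : F) with hz
  set ζ : F := ((1 / (2 * C) : ℚ) : F) * z with hζd
  have hr : ((1 / (2 * C) : ℚ) : ℝ) = 1 / (2 * C) := by push_cast; ring
  have hr0 : (0 : ℝ) < 1 / (2 * C) := by positivity
  have e0 : ((j + j' : 𝓞 F) : F) = (j : F) + (j' : F) := map_add (algebraMap (𝓞 F) F) _ _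
  have e1 : ((j - j' : 𝓞 F) : F) = (j : F) - (j' : F) := map_sub (algebraMap (𝓞 F) F) _ _
  have e2 : ((p' - p : 𝓞 F) : F) = (p' : F) - (p : F) := map_sub (algebraMap (𝓞 F) F) _ _
  have e3 : ((β * (u' - u) : 𝓞 F) : F) = (β : F) * ((u' : F) - (u : F)) := by
    simp only [RingOfIntegers.coe_eq_algebraMap, map_mul, map_sub]
  have e4 : ((1 / (2 * C) : ℚ) : F) = 1 / (2 * (C : F)) := by push_cast; ring
  have heq : ((j - j' : 𝓞 F) : F) * (1 + t) = y + ζ := by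
    have e' := congrArg (algebraMap (𝓞 F) F) e
    simp only [map_add, map_mul, map_pow, map_natCast, ← RingOfIntegers.coe_eq_algebraMap] at e'
    rw [hζd, hz, ht, hy, e0, e1, e2, e3, e4]
    field_simp
    linear_combination e'
  have htc : ∀ i, 0 ≤ crd t i ∧ crd t i ≤ δ := by
    intro i
    have h1 := hj i
    have h2 := hj' i
    have h3 : crd t i = 1 / (2 * C) * (crd (j : F) i + crd (j' : F) i) := by
      rw [ht, crd_rat_mul, hr, e0, crd_add]
    rw [h3]
    constructor
    · exact mul_nonneg hr0.le (add_nonneg h1.1 h2.1)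
    · calc _ ≤ 1 / (2 * (C : ℝ)) * (δ * C + δ * C) :=
            mul_le_mul_of_nonneg_left (add_le_add h1.2 h2.2) hr0.le
        _ = δ := by field_simp; ring
  have hζ : house ζ ≤ 1 := by
    rw [hζd, house_rat_mul, hr, abs_of_pos hr0, one_div_mul_eq_div, div_le_one (by positivity)]
    linarith
  refine ⟨⟨t, ζ, heq, htc, hζ⟩, house_le_of fun σ => ?_⟩
  have h1 : ‖σ ((j - j' : 𝓞 F) : F)‖ * ‖1 + σ t‖ ≤ house y + 1 := by
    rw [← norm_mul, ← map_one σ, ← map_add, ← map_mul, heq, map_add]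
    exact (norm_add_le _ _).trans (add_le_add (norm_embedding_le_house _ _)
      ((norm_embedding_le_house _ _).trans hζ))
  have h2 : ‖σ t‖ ≤ 1 / 2 := by
    refine (norm_embedding_le_house _ _).trans (hCb' t fun i => ?_)
    rw [abs_of_nonneg (htc i).1]; exact (htc i).2
  have h3 : 1 / 2 ≤ ‖1 + σ t‖ := by
    have := norm_sub_norm_le (1 : ℂ) (-(σ t))
    rw [sub_neg_eq_add, norm_neg, norm_one] at this
    linarith
  have hb0 : 0 ≤ house (β : F) := house_nonneg _
  have h4 : house y ≤ house (β : F) * K := by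
    rw [hy, house_rat_mul, hr, abs_of_pos hr0]
    have h5 : house ((β * (u' - u) : 𝓞 F) : F) ≤ house (β : F) * (2 * (K * X)) := by
      rw [e3]
      refine (house_mul_le _ _).trans (mul_le_mul_of_nonneg_left ?_ hb0)
      have := house_sub_le (u' : F) (u : F)
      linarith
    rw [one_div_mul_eq_div, div_le_iff₀ (by positivity)]
    refine h5.trans ?_
    have h6 : house (β : F) * K * (2 * (X : ℝ)) ≤ house (β : F) * K * (2 * C) :=
      mul_le_mul_of_nonneg_left (by linarith) (by positivity)
    linarith
  have h5 : ‖σ ((j - j' : 𝓞 F) : F)‖ * (1 / 2) ≤ house y + 1 :=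
    (mul_le_mul_of_nonneg_left h3 (norm_nonneg _)).trans h1
  linarith

set_option maxHeartbeats 400000 in
/-- A value with many representations `w = μ (x² + β u) + ψ τ` is exceptional: if the values `ψ τ`
are equidistributed with respect to the relevant moduli, the number of represented `w` is, up to a
factor close to one, the largest it could be. -/
lemma exists_large_image (ht : ∀ (σ : F →+* ℂ) (x : F), (σ x).im = 0) (ε : ℝ) (hε : 0 < ε) :
    ∃ δ₀ : ℝ, 0 < δ₀ ∧ ∀ q : ℕ, 0 < q → 1 / (q : ℝ) ≤ δ₀ → ∀ μ β : 𝓞 F, μ ≠ 0 → β ≠ 0 →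
      ∀ N₀ : ℕ, 0 < N₀ → ∃ K : ℕ, 0 < K ∧ ∃ G : Finset (𝓞 F), (∀ g ∈ G, g ≠ 0) ∧
      ∀ (T : Type u) [Fintype T] [Nonempty T] (ψ : T → 𝓞 F),
        (∀ g ∈ G, ∀ c : 𝓞 F,
          (Nat.card {p : T × T // 2 * μ * g ∣ ψ p.1 - ψ p.2 - c} : ℝ) * nN (2 * μ * g) ≤
          (1 + ε) * (Fintype.card T : ℝ) ^ 2) →
      ∃ X₀ : ℕ, ∀ X' : ℕ, X₀ ≤ X' → ∃ S : Finset (𝓞 F),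
        (∀ w ∈ S, ∃ j ∈ cube F (N₀ * X'), ∃ (u : 𝓞 F) (τ : T), IsSumFourSq u ∧
          house (u : F) ≤ K * (q * X') ∧
          w = μ * (((N₀ * (q * X') : ℕ) + j) ^ 2 + β * u) + ψ τ) ∧
        (1 / (q : ℝ)) ^ finrank ℚ F * ((N₀ * (q * X') : ℕ) : ℝ) ^ (2 * finrank ℚ F) *
          nN (2 * μ) ≤ S.card * ((1 + ε) ^ 2 + ε) := by
  classical
  obtain ⟨δ₁, hδ₁, hharm⟩ := harmonic_sum_le F ε hε
  obtain ⟨Cb, hCb1, hCb⟩ := exists_house_le_crd F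
  obtain ⟨c₀, hc₀, U₀, hdens⟩ := four_sq_density ht
  set d := finrank ℚ F with hd
  have hd0 : 0 < d := finrank_pos
  refine ⟨min δ₁ (1 / (2 * Cb)), lt_min hδ₁ (by positivity), ?_⟩
  intro q hq hqδ μ β hμ hβ N₀ hN₀
  set δ : ℝ := 1 / (q : ℝ) with hδ
  have hq' : (0 : ℝ) < q := by exact_mod_cast hq
  have hδ0 : 0 < δ := by positivity
  obtain ⟨κ, hκ, hharm⟩ := hharm δ hδ0 (hqδ.trans (min_le_left _ _))
  have hδC : Cb * δ ≤ 1 / 2 := by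
    have h1 := hqδ.trans (min_le_right _ _)
    rw [le_div_iff₀ (by positivity)] at h1
    linarith
  have h2μ : 2 * μ ≠ 0 := mul_ne_zero two_ne_zero hμ
  set N : ℝ := ((nN (2 * μ) : ℕ) : ℝ) with hN
  have hN0 : 0 < N := by rw [hN]; exact_mod_cast Nat.pos_of_ne_zero (nN_ne_zero h2μ)
  have hN₀' : (0 : ℝ) < N₀ := by exact_mod_cast hN₀
  have hN₀1 : (1 : ℝ) ≤ N₀ := by exact_mod_cast hN₀
  set hb := house (β : F) with hhb
  have hb0 : 0 ≤ hb := house_nonneg _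
  set c := 2 * hb + 1 with hc
  -- this density makes the contribution of `Deg` a fraction `ε` of the main term
  set ε' := ε * c₀ / ((N₀ : ℝ) ^ d * N) with hε'
  have hε'0 : 0 < ε' := by positivity
  obtain ⟨K₀, hdeg⟩ := card_degenerate_le F c κ ε' (by positivity) hκ hε'0
  set K := ⌈K₀⌉₊ + 1 with hK
  have hK1 : (1 : ℝ) ≤ K := by rw [hK]; push_cast; linarith [Nat.cast_nonneg (α := ℝ) ⌈K₀⌉₊]
  have hKK : K₀ ≤ K := by rw [hK]; push_cast; linarith [Nat.le_ceil K₀]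
  obtain ⟨Af, hAf⟩ := exists_finset_house_le (F := F) (c * K + 1)
  refine ⟨K, by omega, Af.filter (fun g => g ≠ 0), fun g hg => (Finset.mem_filter.1 hg).2, ?_⟩
  intro T _ _ ψ hT
  set tT : ℝ := (Fintype.card T : ℝ) with htT
  have htT0 : 0 < tT := by rw [htT]; exact_mod_cast Fintype.card_pos
  obtain ⟨Z, hZ⟩ := Finite.exists_le
    (fun p : T × T => house (((ψ p.2 - ψ p.1 : 𝓞 F) : F) / (μ : F)))
  refine ⟨⌈U₀⌉₊ + ⌈Z⌉₊ + 1, fun X' hX' => ?_⟩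
  set X := q * X' with hX
  have hX'X : X' ≤ X := Nat.le_mul_of_pos_left _ hq
  have hXU : U₀ ≤ X := (Nat.le_ceil _).trans (by exact_mod_cast (by omega : ⌈U₀⌉₊ ≤ X))
  have hXZ : Z ≤ X := (Nat.le_ceil _).trans (by exact_mod_cast (by omega : ⌈Z⌉₊ ≤ X))
  have hX0 : (0 : ℝ) < X := by exact_mod_cast (by omega : 0 < X)
  have hKX : (X : ℝ) ≤ K * X := by nlinarith
  obtain ⟨𝒰, h𝒰, h𝒰c⟩ := hdens (K * X) (hXU.trans hKX)
  set C := N₀ * X with hC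
  have hCr : (C : ℝ) = N₀ * X := by rw [hC]; push_cast; ring
  have hC0 : (0 : ℝ) < C := by rw [hCr]; positivity
  have hXC : (X : ℝ) ≤ C := by rw [hCr]; nlinarith
  set ℓ := N₀ * X' with hℓ
  have hℓC : (ℓ : ℝ) = δ * C := by
    rw [hδ, hC, hX, hℓ]; push_cast; field_simp
  set 𝒳 := cube F ℓ with h𝒳
  have h𝒳c : (𝒳.card : ℝ) = (δ * C) ^ d := by
    rw [h𝒳, card_cube, ← hℓC]; push_cast; rfl
  have hCF : ((C : ℕ) : F) ≠ 0 := by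
    have : C ≠ 0 := by intro h; rw [h] at hC0; simp at hC0
    exact_mod_cast this
  have hμF : (μ : F) ≠ 0 := by
    intro h; exact hμ (RingOfIntegers.coe_injective (by simpa using h))
  -- differences `g` with a small conjugate escape `harmonic_sum_le`, but they are rare
  set Deg := Af.filter (fun g : 𝓞 F => ∃ σ : F →+* ℂ, ‖σ (g : F)‖ ≤ κ) with hDeg
  have hDegc : (Deg.card : ℝ) ≤ ε' * (K : ℝ) ^ d := by
    refine hdeg K hKK Deg fun g hg => ?_
    rw [hDeg, Finset.mem_filter] at hg
    exact ⟨(hAf g).1 hg.1, hg.2⟩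
  let y : 𝓞 F → 𝓞 F → F := fun u u' => ((1 / (2 * C) : ℚ) : F) * ((β * (u' - u) : 𝓞 F) : F)
  let Gnd : 𝓞 F → 𝓞 F → Finset (𝓞 F) := fun u u' => Af.filter (fun g : 𝓞 F =>
    (∀ σ : F →+* ℂ, κ < ‖σ (g : F)‖) ∧ ∃ t ζ : F, (g : F) * (1 + t) = y u u' + ζ ∧
      (∀ i, 0 ≤ crd t i ∧ crd t i ≤ δ) ∧ house ζ ≤ 1)
  have hσ0 : Nonempty (F →+* ℂ) := inferInstance
  have hsplit : ∀ j ∈ 𝒳, ∀ j' ∈ 𝒳, ∀ u ∈ 𝒰, ∀ u' ∈ 𝒰, ∀ τ τ' : T,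
      μ * (((C : 𝓞 F) + j) ^ 2 + β * u) + ψ τ = μ * (((C : 𝓞 F) + j') ^ 2 + β * u') + ψ τ' →
        j - j' ∈ Deg ∨ j - j' ∈ Gnd u u' := by
    intro j hj j' hj' u hu u' hu' τ τ' e
    have h1 : house (((ψ τ' - ψ τ : 𝓞 F) : F) / (μ : F)) ≤ Z := hZ (τ, τ')
    obtain ⟨⟨t, ζ, heq, htc, hζ⟩, hhouse⟩ := collision_diff hμ hC0 hXC (by positivity)
      (fun t h => (hCb t δ h).trans hδC)
      (fun i => hℓC ▸ crd_of_mem_cube hj i) (fun i => hℓC ▸ crd_of_mem_cube hj' i)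
      (h𝒰 u hu).2 (h𝒰 u' hu').2 (h1.trans (hXZ.trans hXC)) e
    replace hhouse : house ((j - j' : 𝓞 F) : F) ≤ c * K + 1 :=
      hhouse.trans (by rw [hc]; linarith)
    by_cases hg : ∃ σ : F →+* ℂ, ‖σ ((j - j' : 𝓞 F) : F)‖ ≤ κ
    · left; rw [hDeg, Finset.mem_filter]; exact ⟨(hAf _).2 hhouse, hg⟩
    · right
      push Not at hg
      exact Finset.mem_filter.2 ⟨(hAf _).2 hhouse, hg, t, ζ, heq, htc, hζ⟩
  have hcount : ∀ u ∈ 𝒰, ∀ u' ∈ 𝒰, ∀ g ∈ Gnd u u', g ≠ 0 ∧ ∀ c : 𝓞 F,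
      (Nat.card {p : T × T // 2 * μ * g ∣ ψ p.1 - ψ p.2 - c} : ℝ) ≤
        ((1 + ε) * tT ^ 2 / N) * (1 / nm (g : F)) := by
    intro u _ u' _ g hg
    have hg := Finset.mem_filter.1 hg
    have hg0 : g ≠ 0 := by
      rintro rfl
      obtain ⟨σ⟩ := hσ0
      have := hg.2.1 σ
      have e0 : ((0 : 𝓞 F) : F) = 0 := map_zero (algebraMap (𝓞 F) F)
      rw [e0, map_zero, norm_zero] at this
      linarith
    refine ⟨hg0, fun c => ?_⟩
    have h1 := hT g (Finset.mem_filter.2 ⟨hg.1, hg0⟩) c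
    have hgn : (0 : ℝ) < nN g := by exact_mod_cast Nat.pos_of_ne_zero (nN_ne_zero hg0)
    rw [nN_mul] at h1
    push_cast at h1
    rw [nm_eq_nN, mul_one_div, div_div, le_div_iff₀ (by positivity)]
    exact h1
  have hsum : ∀ u ∈ 𝒰, ∀ u' ∈ 𝒰, ∑ g ∈ Gnd u u', 1 / nm (g : F) ≤ δ ^ d * (1 + ε) := by
    intro u _ u' _
    refine hharm (Gnd u u') (y u u') fun g hg => ?_
    have hg := Finset.mem_filter.1 hg
    obtain ⟨t, ζ, h1, h2, h3⟩ := hg.2.2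
    exact ⟨t, ζ, h1, h2, h3, fun σ => (hg.2.1 σ).le⟩
  have hcol := collision_count T ψ μ β hμ hβ (C : 𝓞 F) 𝒳 𝒰 Deg Gnd ((1 + ε) * tT ^ 2 / N)
    (δ ^ d * (1 + ε)) (by positivity) hsplit hcount hsum
  have hCS := card_sq_le_card_image (𝒳 ×ˢ 𝒰 ×ˢ (Finset.univ : Finset T))
    (fun p => μ * (((C : 𝓞 F) + p.1) ^ 2 + β * p.2.1) + ψ p.2.2)
  set S := (𝒳 ×ˢ 𝒰 ×ˢ (Finset.univ : Finset T)).image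
    (fun p => μ * (((C : 𝓞 F) + p.1) ^ 2 + β * p.2.1) + ψ p.2.2) with hS
  refine ⟨S, ?_, ?_⟩
  · intro w hw
    rw [hS, Finset.mem_image] at hw
    obtain ⟨⟨j, u, τ⟩, hp, rfl⟩ := hw
    simp only [Finset.mem_product, Finset.mem_univ, and_true] at hp
    refine ⟨j, hp.1, u, τ, (h𝒰 u hp.2).1, ?_, rfl⟩
    have := (h𝒰 u hp.2).2
    rw [hX] at this
    push_cast at this
    exact this
  · have hCS' : ((𝒳.card : ℝ) * (𝒰.card * tT)) ^ 2 ≤ S.card *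
        (Deg.card * 𝒳.card * 𝒰.card * tT ^ 2 +
          (𝒰.card : ℝ) ^ 2 * (((1 + ε) * tT ^ 2 / N) * (δ ^ d * (1 + ε)))) := by
      refine le_trans ?_ (mul_le_mul_of_nonneg_left hcol (Nat.cast_nonneg _))
      rw [Finset.card_product, Finset.card_product, Finset.card_univ] at hCS
      rw [htT]
      exact_mod_cast hCS
    have h𝒰0 : (0 : ℝ) < 𝒰.card := lt_of_lt_of_le (by positivity) h𝒰c
    have hdeg2 : (Deg.card : ℝ) * 𝒳.card ≤ ε * 𝒰.card * δ ^ d / N := by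
      calc (Deg.card : ℝ) * 𝒳.card ≤ ε' * (K : ℝ) ^ d * (δ * C) ^ d := by
            rw [h𝒳c]; exact mul_le_mul_of_nonneg_right hDegc (by positivity)
        _ = ε * (c₀ * (K * X) ^ d) * δ ^ d / N := by
            rw [hε', hCr]; field_simp; simp only [mul_pow]; ring
        _ ≤ _ := by gcongr
    have h1 : Deg.card * 𝒳.card * 𝒰.card * tT ^ 2 +
          (𝒰.card : ℝ) ^ 2 * (((1 + ε) * tT ^ 2 / N) * (δ ^ d * (1 + ε))) ≤
        (𝒰.card : ℝ) ^ 2 * tT ^ 2 * (δ ^ d / N) * ((1 + ε) ^ 2 + ε) := by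
      calc _ ≤ (ε * 𝒰.card * δ ^ d / N) * 𝒰.card * tT ^ 2 +
          (𝒰.card : ℝ) ^ 2 * (((1 + ε) * tT ^ 2 / N) * (δ ^ d * (1 + ε))) := by gcongr
        _ = _ := by ring
    have h2 := hCS'.trans (mul_le_mul_of_nonneg_left h1 (Nat.cast_nonneg _))
    rw [h𝒳c] at h2
    have h3 : (0 : ℝ) < (𝒰.card : ℝ) ^ 2 * tT ^ 2 * (δ ^ d / N) := by positivity
    rw [← mul_le_mul_iff_right₀ h3]
    calc _ = ((δ * C) ^ d * (𝒰.card * tT)) ^ 2 := by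
          rw [mul_pow δ]
          field_simp
          ring
      _ ≤ _ := h2
      _ = _ := by ring

end LargeImage

/-! ### The box containing the values -/

section Window
universe u
variable {F : Type u} [Field F] [NumberField F]

/-- The values `w = μ (x² + β u) + p` all lie in a box of side about `2 m δ X²` which depends on
`m` and `X`, but not on `μ = m / a`, provided that `a` is close to `N₀²`. -/
lemma window_crd {Cr Cb : ℝ} (hCr0 : 0 ≤ Cr)
    (hCr : ∀ (x : F) (i : BIdx F), |crd x i| ≤ Cr * house x)
    (hCb : ∀ (x : F) (M : ℝ), (∀ i : BIdx F, |crd x i| ≤ M) → house x ≤ Cb * M)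
    {a μ β j u p w : 𝓞 F} {m N₀ X : ℕ} {δ δ' K Z ε₁ : ℝ} (hm : 0 < m) (hN₀ : 0 < N₀) (hX : 0 < X)
    (hμ : μ * a = m) (hδ' : 0 ≤ δ') (hδ'2 : δ' ≤ 1 / 2)
    (ha : ∀ σ : F →+* ℂ, ‖σ (a : F) - (N₀ : ℂ) ^ 2‖ ≤ δ' * (N₀ : ℝ) ^ 2)
    (hj : ∀ i, 0 ≤ crd (j : F) i ∧ crd (j : F) i ≤ δ * (N₀ * X : ℕ)) (hCbδ : Cb * δ ≤ 1 / 2)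
    (hu : house (u : F) ≤ K * X) (hp : house (p : F) ≤ Z)
    (hw : w = μ * (((N₀ * X : ℕ) + j) ^ 2 + β * u) + p)
    (h1 : Cr * (4 * δ' + 2 * (Cb * δ) ^ 2) ≤ ε₁ * δ)
    (h2 : Cr * (m * house (β : F) * house ((a : F)⁻¹) * (K * X) + Z) ≤ ε₁ * δ * (m * X ^ 2))
    (i : BIdx F) :
    crd ((m * X ^ 2 : ℕ) : F) i - ε₁ * (2 * m * δ * X ^ 2) ≤ crd (w : F) i ∧
    crd (w : F) i ≤ crd ((m * X ^ 2 : ℕ) : F) i + (1 + ε₁) * (2 * m * δ * X ^ 2) := by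
  have hmr : (0 : ℝ) < m := by exact_mod_cast hm
  have hNr : (0 : ℝ) < N₀ := by exact_mod_cast hN₀
  have hXr : (0 : ℝ) < X := by exact_mod_cast hX
  have hmF : (m : F) ≠ 0 := by exact_mod_cast hm.ne'
  have hNF : (N₀ : F) ≠ 0 := by exact_mod_cast hN₀.ne'
  have hXF : (X : F) ≠ 0 := by exact_mod_cast hX.ne'
  have hμF : (μ : F) * (a : F) = m := by
    have := congrArg (algebraMap (𝓞 F) F) hμ
    simpa only [map_mul, map_natCast, ← RingOfIntegers.coe_eq_algebraMap] using this
  have haF : (a : F) ≠ 0 := fun h => hmF (by rw [← hμF, h, mul_zero])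
  set C := N₀ * X with hC
  have hCr' : (C : ℝ) = N₀ * X := by rw [hC]; push_cast; ring
  have hCF : (C : F) = N₀ * X := by rw [hC]; push_cast; ring
  set s : F := (j : F) / C with hs
  set θ : F := (N₀ : F) ^ 2 / a - 1 with hθ
  set η : F := ((m * X ^ 2 : ℕ) : F) * (θ * (1 + 2 * s) + (1 + θ) * s ^ 2) +
    m * (β * (a : F)⁻¹ * u) + p with hη
  have hwF : (w : F) = ((m * X ^ 2 : ℕ) : F) +
      (((2 * m * X ^ 2 / C : ℚ)) : F) * (j : F) + η := by
    have e := congrArg (algebraMap (𝓞 F) F) hw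
    simp only [map_add, map_mul, map_pow, map_natCast, ← RingOfIntegers.coe_eq_algebraMap] at e
    rw [e, hη, hs, hθ, hCF]
    have e2 : (μ : F) = m / a := by rw [← hμF]; field_simp
    rw [e2]
    push_cast
    rw [hCF]
    field_simp
    ring
  have hsh : ∀ σ : F →+* ℂ, ‖σ s‖ ≤ Cb * δ := by
    intro σ
    have e : s = ((1 / C : ℚ) : F) * (j : F) := by rw [hs]; push_cast; ring
    have h3 : house (j : F) ≤ Cb * (δ * C) := hCb _ _ fun i => by
      rw [abs_of_nonneg (hj i).1]; exact (hj i).2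
    refine (norm_embedding_le_house _ σ).trans ?_
    rw [e, house_rat_mul]
    have hC0 : (0 : ℝ) < C := by rw [hCr']; positivity
    have e3 : |((1 / C : ℚ) : ℝ)| = 1 / C := by
      push_cast; rw [abs_of_pos (by positivity)]
    rw [e3, one_div_mul_eq_div, div_le_iff₀ hC0]
    linarith
  have hθh : ∀ σ : F →+* ℂ, ‖σ θ‖ ≤ 2 * δ' := by
    intro σ
    have h3 := ha σ
    have h4 : (1 / 2) * (N₀ : ℝ) ^ 2 ≤ ‖σ (a : F)‖ := by
      have h5 := norm_sub_norm_le ((N₀ : ℂ) ^ 2) ((N₀ : ℂ) ^ 2 - σ (a : F))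
      rw [sub_sub_cancel, norm_sub_rev ((N₀ : ℂ) ^ 2), norm_pow, Complex.norm_natCast] at h5
      have : δ' * (N₀ : ℝ) ^ 2 ≤ 1 / 2 * (N₀ : ℝ) ^ 2 := by gcongr
      linarith
    have e : θ = -((a : F) - (N₀ : F) ^ 2) / a := by rw [hθ]; field_simp; ring
    rw [e, map_div₀, map_neg, norm_div, norm_neg, map_sub, map_pow, map_natCast]
    have h6 : 0 < ‖σ (a : F)‖ := lt_of_lt_of_le (by positivity) h4
    rw [div_le_iff₀ h6]
    nlinarith
  have hηh : house η ≤ (m * X ^ 2) * (4 * δ' + 2 * (Cb * δ) ^ 2) +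
      (m * house (β : F) * house ((a : F)⁻¹) * (K * X) + Z) := by
    refine house_le_of fun σ => ?_
    have hs' := hsh σ
    have hθ' := hθh σ
    have hs0 := norm_nonneg (σ s)
    have hθ0 := norm_nonneg (σ θ)
    have t1 : ‖σ θ * (1 + 2 * σ s)‖ ≤ 4 * δ' := by
      rw [norm_mul]
      have : ‖1 + 2 * σ s‖ ≤ 2 := by
        refine (norm_add_le _ _).trans ?_
        rw [norm_one, norm_mul, Complex.norm_ofNat]; linarith
      calc _ ≤ (2 * δ') * 2 := by gcongr
        _ = _ := by ring
    have t2 : ‖(1 + σ θ) * (σ s) ^ 2‖ ≤ 2 * (Cb * δ) ^ 2 := by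
      rw [norm_mul, norm_pow]
      have : ‖1 + σ θ‖ ≤ 2 := by
        refine (norm_add_le _ _).trans ?_
        rw [norm_one]; linarith
      gcongr
    have t3 : ‖(m : ℂ) * (σ β * σ ((a : F)⁻¹) * σ u)‖ ≤
        m * house (β : F) * house ((a : F)⁻¹) * (K * X) := by
      rw [norm_mul, norm_mul, norm_mul, Complex.norm_natCast]
      have b1 := norm_embedding_le_house (β : F) σ
      have b2 := norm_embedding_le_house ((a : F)⁻¹) σ
      have b3 := (norm_embedding_le_house (u : F) σ).trans hu
      have b4 := house_nonneg (β : F)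
      have b5 := house_nonneg ((a : F)⁻¹)
      calc _ ≤ (m : ℝ) * (house (β : F) * house ((a : F)⁻¹) * (K * X)) := by gcongr
        _ = _ := by ring
    have t4 : ‖σ (p : F)‖ ≤ Z := (norm_embedding_le_house _ σ).trans hp
    have e : σ η = ((m * X ^ 2 : ℕ) : ℂ) * (σ θ * (1 + 2 * σ s) + (1 + σ θ) * (σ s) ^ 2) +
        (m : ℂ) * (σ β * σ ((a : F)⁻¹) * σ u) + σ p := by
      rw [hη]; simp only [map_add, map_mul, map_pow, map_natCast, map_one, map_ofNat]
    rw [e]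
    have t5 : ‖((m * X ^ 2 : ℕ) : ℂ) * (σ θ * (1 + 2 * σ s) + (1 + σ θ) * (σ s) ^ 2)‖ ≤
        (m * X ^ 2) * (4 * δ' + 2 * (Cb * δ) ^ 2) := by
      rw [norm_mul, Complex.norm_natCast]
      have := (norm_add_le (σ θ * (1 + 2 * σ s)) ((1 + σ θ) * (σ s) ^ 2)).trans (add_le_add t1 t2)
      push_cast
      gcongr
    have t6 := norm_add_le (((m * X ^ 2 : ℕ) : ℂ) * (σ θ * (1 + 2 * σ s) + (1 + σ θ) * (σ s) ^ 2) +
        (m : ℂ) * (σ β * σ ((a : F)⁻¹) * σ u)) (σ p)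
    have t7 := norm_add_le (((m * X ^ 2 : ℕ) : ℂ) * (σ θ * (1 + 2 * σ s) + (1 + σ θ) * (σ s) ^ 2))
        ((m : ℂ) * (σ β * σ ((a : F)⁻¹) * σ u))
    linarith
  have hηc : |crd η i| ≤ ε₁ * (2 * m * δ * X ^ 2) := by
    refine (hCr η i).trans ?_
    have h3 := mul_le_mul_of_nonneg_left hηh hCr0
    have h4 := mul_le_mul_of_nonneg_left h1 (show (0 : ℝ) ≤ m * X ^ 2 by positivity)
    linarith
  rw [abs_le] at hηc
  have hjc : 0 ≤ crd ((((2 * m * X ^ 2 / C : ℚ)) : F) * (j : F)) i ∧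
      crd ((((2 * m * X ^ 2 / C : ℚ)) : F) * (j : F)) i ≤ 2 * m * δ * X ^ 2 := by
    have hC0 : (0 : ℝ) < C := by rw [hCr']; positivity
    rw [crd_rat_mul]
    push_cast
    constructor
    · exact mul_nonneg (by positivity) (hj i).1
    · calc _ ≤ 2 * (m : ℝ) * X ^ 2 / C * (δ * C) :=
            mul_le_mul_of_nonneg_left (hj i).2 (by positivity)
        _ = _ := by field_simp
  rw [hwF, crd_add, crd_add]
  constructor <;> linarith [hηc.1, hηc.2, hjc.1, hjc.2]

end Window

/-! ### A value common to two families -/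

section CommonValue
universe u
variable {F : Type u} [Field F] [NumberField F]

lemma exists_one_add_pow_le (d : ℕ) (k : ℝ) (c : ℝ) (hc : 1 < c) :
    ∃ η : ℝ, 0 < η ∧ η ≤ 1 / 2 ∧ (1 + k * η) ^ d ≤ c := by
  have hcont : Filter.Tendsto (fun η : ℝ => (1 + k * η) ^ d) (nhdsWithin 0 (Set.Ioi 0))
      (nhds 1) := by
    have : Continuous fun η : ℝ => (1 + k * η) ^ d := by fun_prop
    simpa using (this.tendsto 0).mono_left nhdsWithin_le_nhds
  have h1 := hcont.eventually (Iic_mem_nhds hc)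
  have h2 : ∀ᶠ η : ℝ in nhdsWithin 0 (Set.Ioi 0), η ∈ Set.Ioc (0 : ℝ) (1 / 2) :=
    Ioc_mem_nhdsGT (by norm_num)
  obtain ⟨η, h, h'⟩ := (h1.and h2).exists
  exact ⟨η, h'.1, h'.2, h⟩

set_option maxHeartbeats 800000 in
/-- The represented values, confined to a box whose shape depends on `m` and `X` only, fill at
least four fifths of the box of side `Y = 2 m X² / q`. -/
lemma exists_image_in_window (ht : ∀ (σ : F →+* ℂ) (x : F), (σ x).im = 0) :
    ∃ (q : ℕ) (ε₁ δ' : ℝ), 0 < q ∧ 0 < ε₁ ∧ (1 + 3 * ε₁) ^ finrank ℚ F ≤ 5 / 4 ∧ 0 < δ' ∧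
      ∀ β : 𝓞 F, β ≠ 0 → ∀ (a μ : 𝓞 F) (m N₀ : ℕ), 0 < m → 0 < N₀ → μ * a = m →
      (∀ σ : F →+* ℂ, ‖σ (a : F) - (N₀ : ℂ) ^ 2‖ ≤ δ' * (N₀ : ℝ) ^ 2) →
      ∃ G : Finset (𝓞 F), (∀ g ∈ G, g ≠ 0) ∧
      ∀ (T : Type u) [Fintype T] [Nonempty T] (ψ : T → 𝓞 F),
        (∀ g ∈ G, ∀ c : 𝓞 F,
          (Nat.card {p : T × T // 2 * μ * g ∣ ψ p.1 - ψ p.2 - c} : ℝ) * nN (2 * μ * g) ≤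
          (1 + 1 / 30) * (Fintype.card T : ℝ) ^ 2) →
      ∃ X₀ : ℕ, ∀ X' : ℕ, X₀ ≤ X' → ∃ S : Finset (𝓞 F),
        (∀ w ∈ S, ∃ (x u : 𝓞 F) (τ : T), IsSumFourSq u ∧ w = μ * (x ^ 2 + β * u) + ψ τ) ∧
        (∀ w ∈ S, ∀ i, crd ((m * (q * X') ^ 2 : ℕ) : F) i
            - ε₁ * (2 * m * (1 / q) * (q * X' : ℕ) ^ 2) ≤ crd (w : F) i ∧
          crd (w : F) i ≤ crd ((m * (q * X') ^ 2 : ℕ) : F) i +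
            (1 + ε₁) * (2 * m * (1 / q) * (q * X' : ℕ) ^ 2)) ∧
        ((2 * m * (1 / q) * (q * X' : ℕ) ^ 2 : ℝ)) ^ finrank ℚ F ≤ S.card * (5 / 4) := by
  classical
  obtain ⟨Cr, hCr1, hCr⟩ := exists_crd_le_house F
  obtain ⟨Cb, hCb1, hCb⟩ := exists_house_le_crd F
  obtain ⟨δ₀, hδ₀, himg⟩ := exists_large_image ht (1 / 30) (by norm_num)
  obtain ⟨ε₁, hε₁, -, hε₁'⟩ := exists_one_add_pow_le (finrank ℚ F) 3 (5 / 4) (by norm_num)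
  -- the choice of `q` makes the quadratic error term of `window_crd` harmless
  obtain ⟨q, hq⟩ := exists_nat_gt (1 / δ₀ + 2 * Cb + 4 * Cr * Cb ^ 2 / ε₁)
  have hA : 0 < 1 / δ₀ := by positivity
  have hB : 0 ≤ 4 * Cr * Cb ^ 2 / ε₁ := by positivity
  have hqr : (0 : ℝ) < q := by linarith
  have hq0 : 0 < q := by exact_mod_cast hqr
  obtain ⟨δ₁, hδ₁, hδ₁', hδ₁''⟩ := exists_one_add_pow_le (finrank ℚ F) 1 (9 / 8) (by norm_num)
  set δ : ℝ := 1 / q with hδ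
  have hδ0 : 0 < δ := by positivity
  have hδδ₀ : δ ≤ δ₀ := by
    rw [hδ, div_le_iff₀ hqr]
    have : 1 / δ₀ ≤ q := by linarith
    rwa [div_le_iff₀ hδ₀, mul_comm] at this
  have hCbδ : Cb * δ ≤ 1 / 2 := by
    rw [hδ, mul_one_div, div_le_iff₀ hqr]; linarith
  have hCrδ : Cr * (2 * (Cb * δ) ^ 2) ≤ ε₁ * δ / 2 := by
    have h : 4 * Cr * Cb ^ 2 / ε₁ ≤ q := by linarith
    rw [div_le_iff₀ hε₁] at h
    have h' : (4 * Cr * Cb ^ 2) * δ ≤ ε₁ := by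
      rw [hδ, mul_one_div, div_le_iff₀ hqr]; linarith
    nlinarith [mul_le_mul_of_nonneg_right h' hδ0.le]
  have hδ'd : 0 < ε₁ * δ / (8 * Cr) := by positivity
  refine ⟨q, ε₁, min δ₁ (ε₁ * δ / (8 * Cr)), hq0, hε₁, hε₁', lt_min hδ₁ hδ'd, ?_⟩
  set δ' := min δ₁ (ε₁ * δ / (8 * Cr)) with hδ'
  have hδ'0 : 0 < δ' := lt_min hδ₁ hδ'd
  have hδ'1 : δ' ≤ δ₁ := min_le_left _ _
  have hδ'2 : δ' ≤ ε₁ * δ / (8 * Cr) := min_le_right _ _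
  have h1 : Cr * (4 * δ' + 2 * (Cb * δ) ^ 2) ≤ ε₁ * δ := by
    rw [le_div_iff₀ (by positivity)] at hδ'2
    nlinarith
  intro β hβ a μ m N₀ hm hN₀ hμa ha
  have hm0 : (m : 𝓞 F) ≠ 0 := by exact_mod_cast hm.ne'
  have hμ : μ ≠ 0 := fun h => hm0 (by rw [← hμa, h, zero_mul])
  obtain ⟨K, hK, G, hG, hT⟩ := himg q hq0 hδδ₀ μ β hμ hβ N₀ hN₀
  refine ⟨G, hG, fun T _ _ ψ hψ => ?_⟩
  obtain ⟨X₀, hX₀⟩ := hT T ψ hψ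
  obtain ⟨Z, hZ⟩ := Finite.exists_le fun τ : T => house (ψ τ : F)
  have hZ0 : 0 ≤ Z := (house_nonneg _).trans (hZ (Classical.arbitrary T))
  have hmr : (0 : ℝ) < m := by exact_mod_cast hm
  have hNr : (0 : ℝ) < N₀ := by exact_mod_cast hN₀
  obtain ⟨X₁, hX₁⟩ := exists_nat_gt
    ((Cr * (m * house (β : F) * house ((a : F)⁻¹) * K) + Cr * Z) / (ε₁ * δ * m))
  have hβh := house_nonneg (β : F)
  have hah := house_nonneg ((a : F)⁻¹)
  refine ⟨max (max X₀ X₁) 1, fun X' hX' => ?_⟩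
  obtain ⟨S, hS1, hS2⟩ := hX₀ X' (by omega)
  have hX0 : 0 < q * X' := Nat.mul_pos hq0 (by omega)
  have hXr : (1 : ℝ) ≤ (q * X' : ℕ) := by exact_mod_cast hX0
  have h2 : Cr * (m * house (β : F) * house ((a : F)⁻¹) * (K * (q * X' : ℕ)) + Z) ≤
      ε₁ * δ * (m * ((q * X' : ℕ) : ℝ) ^ 2) := by
    rw [div_lt_iff₀ (by positivity)] at hX₁
    have h3 : (X₁ : ℝ) ≤ (q * X' : ℕ) := by
      have : X₁ ≤ q * X' := le_trans (by omega : X₁ ≤ X') (Nat.le_mul_of_pos_left _ hq0)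
      exact_mod_cast this
    generalize ((q * X' : ℕ) : ℝ) = X at *
    have h4 : 0 ≤ Cr * (m * house (β : F) * house ((a : F)⁻¹) * K) := by positivity
    have h5 : 0 ≤ Cr * Z := by positivity
    have h6 : X₁ * (ε₁ * δ * m) ≤ X * (ε₁ * δ * m) := by gcongr
    calc _ = Cr * (m * house (β : F) * house ((a : F)⁻¹) * K) * X + Cr * Z * 1 := by ring
      _ ≤ Cr * (m * house (β : F) * house ((a : F)⁻¹) * K) * X + Cr * Z * X := by gcongr
      _ = (Cr * (m * house (β : F) * house ((a : F)⁻¹) * K) + Cr * Z) * X := by ring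
      _ ≤ (X * (ε₁ * δ * m)) * X := by gcongr; linarith
      _ = _ := by ring
  refine ⟨S, fun w hw => ?_, fun w hw i => ?_, ?_⟩
  · obtain ⟨j, -, u, τ, hu, -, e⟩ := hS1 w hw
    exact ⟨_, u, τ, hu, e⟩
  · obtain ⟨j, hj, u, τ, -, hu, e⟩ := hS1 w hw
    refine window_crd (by linarith) hCr hCb hm hN₀ hX0 hμa hδ'0.le (by linarith) ha
      (fun i => ?_) hCbδ (by push_cast; exact hu) (hZ τ) e h1 h2 i
    have := crd_of_mem_cube hj i
    refine ⟨this.1, this.2.trans (le_of_eq ?_)⟩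
    rw [hδ]; push_cast; field_simp
  · have e1 : (nN (2 * μ) : ℝ) * nN a = (2 * m) ^ finrank ℚ F := by
      have : nN (2 * μ) * nN a = (2 * m) ^ finrank ℚ F := by
        rw [← nN_mul, mul_assoc, hμa, ← nN_natCast]; push_cast; rfl
      exact_mod_cast this
    have e2 : (nN a : ℝ) ≤ ((1 + δ') * N₀ ^ 2) ^ finrank ℚ F := by
      have := nm_le_of (a : F) 1 ((1 + δ') * N₀ ^ 2) fun σ => by
        rw [map_one, norm_one, mul_one]
        calc ‖σ (a : F)‖ = ‖(σ (a : F) - (N₀ : ℂ) ^ 2) + (N₀ : ℂ) ^ 2‖ := by rw [sub_add_cancel]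
          _ ≤ _ := norm_add_le _ _
          _ ≤ δ' * (N₀ : ℝ) ^ 2 + (N₀ : ℝ) ^ 2 := by
            refine add_le_add (ha σ) ?_
            rw [norm_pow, Complex.norm_natCast]
          _ = _ := by ring
      rwa [nm_one, mul_one, nm_eq_nN] at this
    have e3 : (1 + δ') ^ finrank ℚ F ≤ 9 / 8 := by
      refine le_trans ?_ hδ₁''
      rw [one_mul]
      gcongr
    set d := finrank ℚ F with hd
    have e4 : δ ^ d * ((N₀ * (q * X') : ℕ) : ℝ) ^ (2 * d) * (2 * m) ^ d ≤
        S.card * (10 / 9) * ((9 / 8) * (N₀ ^ 2 : ℝ) ^ d) := by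
      rw [← e1]
      calc _ = (δ ^ d * ((N₀ * (q * X') : ℕ) : ℝ) ^ (2 * d) * nN (2 * μ)) * nN a := by ring
        _ ≤ (S.card * (10 / 9)) * ((9 / 8) * (N₀ ^ 2 : ℝ) ^ d) := by
          refine mul_le_mul (hS2.trans ?_) (e2.trans ?_) (by positivity) (by positivity)
          · gcongr; norm_num
          · rw [mul_pow]; gcongr
    have e5 : (N₀ ^ 2 : ℝ) ^ d * ((2 * m * δ * (q * X' : ℕ) ^ 2 : ℝ)) ^ d ≤
        (N₀ ^ 2 : ℝ) ^ d * (S.card * (5 / 4)) := by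
      calc _ = δ ^ d * ((N₀ * (q * X') : ℕ) : ℝ) ^ (2 * d) * (2 * m) ^ d := by
            rw [pow_mul, ← mul_pow, ← mul_pow, ← mul_pow]; push_cast; ring
        _ ≤ _ := e4
        _ = _ := by ring
    exact le_of_mul_le_mul_left e5 (by positivity)

set_option maxHeartbeats 800000 in
/-- Two sets of represented values, one attached to a modulus `m / a` with `a` close to a square
in all real places and one attached to the modulus `m`, meet: each of them fills more than half of
a common box. -/
lemma exists_common_value (ht : ∀ (σ : F →+* ℂ) (x : F), (σ x).im = 0) :
    ∃ δ' : ℝ, 0 < δ' ∧ ∀ β : 𝓞 F, β ≠ 0 → ∀ (a μ : 𝓞 F) (m N₀ : ℕ), 0 < m → 0 < N₀ → μ * a = m →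
      (∀ σ : F →+* ℂ, ‖σ (a : F) - (N₀ : ℂ) ^ 2‖ ≤ δ' * (N₀ : ℝ) ^ 2) →
      ∃ G₁ G₂ : Finset (𝓞 F), (∀ g ∈ G₁, g ≠ 0) ∧ (∀ g ∈ G₂, g ≠ 0) ∧
      ∀ (T₁ T₂ : Type u) [Fintype T₁] [Nonempty T₁] [Fintype T₂] [Nonempty T₂]
        (ψ₁ : T₁ → 𝓞 F) (ψ₂ : T₂ → 𝓞 F),
        (∀ g ∈ G₁, ∀ c : 𝓞 F,
          (Nat.card {p : T₁ × T₁ // 2 * μ * g ∣ ψ₁ p.1 - ψ₁ p.2 - c} : ℝ) * nN (2 * μ * g) ≤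
          (1 + 1 / 30) * (Fintype.card T₁ : ℝ) ^ 2) →
        (∀ g ∈ G₂, ∀ c : 𝓞 F,
          (Nat.card {p : T₂ × T₂ // 2 * (m : 𝓞 F) * g ∣ ψ₂ p.1 - ψ₂ p.2 - c} : ℝ) *
            nN (2 * (m : 𝓞 F) * g) ≤ (1 + 1 / 30) * (Fintype.card T₂ : ℝ) ^ 2) →
      ∃ w : 𝓞 F, 1 + 4 * m * w ≠ 0 ∧
        (∃ (x u : 𝓞 F) (τ : T₁), IsSumFourSq u ∧ w = μ * (x ^ 2 + β * u) + ψ₁ τ) ∧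
        (∃ (x u : 𝓞 F) (τ : T₂), IsSumFourSq u ∧ w = m * (x ^ 2 + β * u) + ψ₂ τ) := by
  classical
  obtain ⟨q, ε₁, δ', hq, hε₁, hε₁', hδ', H⟩ := exists_image_in_window ht
  refine ⟨δ', hδ', fun β hβ a μ m N₀ hm hN₀ hμa ha => ?_⟩
  obtain ⟨G₁, hG₁, H₁⟩ := H β hβ a μ m N₀ hm hN₀ hμa ha
  obtain ⟨G₂, hG₂, H₂⟩ := H β hβ 1 m m 1 hm one_pos (mul_one _) fun σ => by
    simpa using hδ'.le
  refine ⟨G₁, G₂, hG₁, hG₂, fun T₁ T₂ _ _ _ _ ψ₁ ψ₂ hψ₁ hψ₂ => ?_⟩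
  obtain ⟨X₁, hX₁⟩ := H₁ T₁ ψ₁ hψ₁
  obtain ⟨X₂, hX₂⟩ := H₂ T₂ ψ₂ hψ₂
  have hmr : (1 : ℝ) ≤ m := by exact_mod_cast hm
  have hqr : (1 : ℝ) ≤ q := by exact_mod_cast hq
  obtain ⟨X₃, hX₃⟩ := exists_nat_gt (6 + 1 / ε₁)
  obtain ⟨S₁, h1, h1', h1''⟩ := hX₁ (max X₁ (max X₂ X₃)) (le_max_left _ _)
  obtain ⟨S₂, h2, h2', h2''⟩ := hX₂ (max X₁ (max X₂ X₃))
    ((le_max_left _ _).trans (le_max_right _ _))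
  have hX' : X₃ ≤ max X₁ (max X₂ X₃) := (le_max_right _ _).trans (le_max_right _ _)
  generalize max X₁ (max X₂ X₃) = X' at *
  have hX'r : 6 + 1 / ε₁ ≤ (X' : ℝ) := hX₃.le.trans (by exact_mod_cast hX')
  have hε₁i : 0 < 1 / ε₁ := by positivity
  have hY : 6 + 1 / ε₁ ≤ (2 * m * (1 / q) * (q * X' : ℕ) ^ 2 : ℝ) := by
    have e : (2 * m * (1 / q) * (q * X' : ℕ) ^ 2 : ℝ) = X' * (2 * m * q * X') := by
      push_cast; field_simp
    rw [e]
    have h1 : (1 : ℝ) ≤ 2 * m * q * X' := by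
      have : (1 : ℝ) ≤ X' := by linarith
      have h3 : (1 : ℝ) ≤ 2 * m := by linarith
      exact one_le_mul_of_one_le_of_one_le (one_le_mul_of_one_le_of_one_le h3 hqr) this
    nlinarith
  generalize (2 * m * (1 / q) * (q * X' : ℕ) ^ 2 : ℝ) = Y at *
  have hY0 : 0 < Y := by linarith
  have hbox := card_box_le (S₁ ∪ S₂) (fun i => crd ((m * (q * X') ^ 2 : ℕ) : F) i - ε₁ * Y)
    ((1 + 2 * ε₁) * Y) (by positivity) fun w hw i => by
      rcases Finset.mem_union.1 hw with h | h
      · exact ⟨(h1' w h i).1, (h1' w h i).2.trans (le_of_eq (by ring))⟩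
      · exact ⟨(h2' w h i).1, (h2' w h i).2.trans (le_of_eq (by ring))⟩
  have hbox' : ((S₁ ∪ S₂).card : ℝ) ≤ 5 / 4 * Y ^ finrank ℚ F := by
    refine hbox.trans ?_
    calc _ ≤ ((1 + 3 * ε₁) * Y) ^ finrank ℚ F := by
          gcongr
          have : 1 ≤ ε₁ * Y := by
            have : 1 / ε₁ ≤ Y := by linarith
            rwa [div_le_iff₀ hε₁, mul_comm] at this
          linarith
      _ ≤ _ := by rw [mul_pow]; gcongr
  have hYd : 6 ≤ Y ^ finrank ℚ F :=
    (by linarith : 6 ≤ Y).trans (le_self_pow₀ (by linarith) finrank_pos.ne')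
  have hcard : ((S₁ ∪ S₂).card : ℝ) + (S₁ ∩ S₂).card = S₁.card + S₂.card := by
    exact_mod_cast Finset.card_union_add_card_inter S₁ S₂
  have hInt : 1 < (S₁ ∩ S₂).card := by
    have : (1 : ℝ) < (S₁ ∩ S₂).card := by linarith
    exact_mod_cast this
  -- at most one `w` has `1 + 4 m w = 0`
  obtain ⟨w, w', hw, hw', hne⟩ := Finset.one_lt_card_iff.1 hInt
  have key : ∃ w ∈ S₁ ∩ S₂, 1 + 4 * (m : 𝓞 F) * w ≠ 0 := by
    by_contra! hcon
    have e := (hcon w hw).trans (hcon w' hw').symm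
    have h4 : (4 * (m : 𝓞 F)) ≠ 0 := mul_ne_zero (by norm_num) (by exact_mod_cast hm.ne')
    exact hne (mul_left_cancel₀ h4 (add_left_cancel e))
  obtain ⟨w, hw, hw0⟩ := key
  exact ⟨w, hw0, h1 w (Finset.mem_inter.1 hw).1, h2 w (Finset.mem_inter.1 hw).2⟩

end CommonValue

/-! ### Elements close to a square -/

section Core
universe u
variable {F : Type u} [Field F] [NumberField F]

lemma IsSumFourSq.map {R S : Type*} [CommRing R] [CommRing S] (f : R →+* S) {u : R}
    (h : IsSumFourSq u) : IsSumFourSq (f u) := by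
  obtain ⟨p, q, r, s, rfl⟩ := h
  exact ⟨f p, f q, f r, f s, by simp⟩

lemma IsSumFourSq.sq_mul {R : Type*} [CommRing R] {u : R} (c : R)
    (h : IsSumFourSq u) : IsSumFourSq (c ^ 2 * u) := by
  obtain ⟨p, q, r, s, rfl⟩ := h
  exact ⟨c * p, c * q, c * r, c * s, by ring⟩

/-- A value of the shape produced by the sieve makes `a (1 + 4 m w)` a value of the form
`Σ₄ x² + α Σ₄ y² + β Σ₄ z²`. -/
lemma value_identity {R : Type*} [CommRing R] {a μ m w₀ wc y z Bl α β w x u ψ E s J : R}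
    {b : Fin 4 → R} (hu : IsSumFourSq u)
    (ha : a = 1 + 2 * w₀) (hμ : μ * a = m) (hwc : 4 * m * a * wc = (1 + (y ^ 2 + z ^ 2)) * w₀ ^ 2)
    (hBl : Bl = 1 + (1 + (y ^ 2 + z ^ 2)) * w₀) (hw : w = μ * (x ^ 2 + β * u) + ψ)
    (hψ : ψ = E * (s * Bl + m * a * E * s ^ 2 * (1 + (y ^ 2 + z ^ 2))) +
        μ * α * J ^ 2 * ∑ i, (b i) ^ 2 + wc) :
    ∃ U V W : R, IsSumFourSq U ∧ IsSumFourSq V ∧ IsSumFourSq W ∧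
      a * (1 + 4 * m * w) = U + α * V + β * W := by
  refine ⟨_, (2 * m * J) ^ 2 * ∑ i, (b i) ^ 2, (2 * m) ^ 2 * u,
    ⟨1 + w₀ + 2 * m * a * E * s, y * (w₀ + 2 * m * a * E * s), z * (w₀ + 2 * m * a * E * s),
      2 * m * x, rfl⟩, IsSumFourSq.sq_mul _ ⟨b 0, b 1, b 2, b 3, Fin.sum_univ_four _⟩,
    hu.sq_mul _, ?_⟩
  rw [hw, hψ]
  generalize ∑ i, (b i) ^ 2 = S
  rw [hBl]
  linear_combination hwc + (4 * m * (x ^ 2 + β * u) + 4 * m * α * J ^ 2 * S) * hμ +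
    ha

/-- The heart of the argument: elements `a` which are close to a square at all real places and
congruent to `1` modulo a suitable power of `2` are quotients of two values of the form
`Σ₄ x² + α Σ₄ y² + β Σ₄ z²`. -/
lemma exists_core (ht : ∀ (σ : F →+* ℂ) (x : F), (σ x).im = 0) :
    ∃ δ' : ℝ, 0 < δ' ∧ ∀ α β : 𝓞 F, α ≠ 0 → β ≠ 0 → ∃ e : ℕ, ∀ (a : 𝓞 F) (N₀ : ℕ), a ≠ 0 → 0 < N₀ →
      (2 : 𝓞 F) ^ e ∣ a - 1 →
      (∀ σ : F →+* ℂ, ‖σ (a : F) - (N₀ : ℂ) ^ 2‖ ≤ δ' * (N₀ : ℝ) ^ 2) →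
      ∀ P : F → Prop, (∀ x y, P x → P y → P (x * y)) → (∀ x, P x → P x⁻¹) →
      (∀ u v w : F, IsSumFourSq u → IsSumFourSq v → IsSumFourSq w → u + α * v + β * w ≠ 0 →
        P (u + α * v + β * w)) → P a := by
  classical
  obtain ⟨δ', hδ', H⟩ := exists_common_value ht
  obtain ⟨B, hB⟩ := exists_tail_le F (1 / 30) (by norm_num)
  have hB : TailBound F B (1 / 30) := hB
  refine ⟨δ', hδ', fun α β hα hβ => ?_⟩
  -- divisibility of `m` by all primes up to `B` leaves only large primes, of total weight `1 / 30`,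
  -- where the quadratic part of `ψ` can fail to be uniformly distributed
  set m0 : ℕ := 2 * (∏ p ∈ (Finset.range (B + 1)).filter Nat.Prime, p) * nN α with hm0
  have hprod : (∏ p ∈ (Finset.range (B + 1)).filter Nat.Prime, p) ≠ 0 :=
    Finset.prod_ne_zero_iff.2 fun p hp => (Finset.mem_filter.1 hp).2.ne_zero
  have hm00 : m0 ≠ 0 := mul_ne_zero (mul_ne_zero two_ne_zero hprod) (nN_ne_zero hα)
  obtain ⟨k, m1, hm1, hk⟩ := Nat.exists_eq_two_pow_mul_odd hm00
  refine ⟨k + 3, fun a N₀ ha hN₀ hae happ P hmul hinv hform => ?_⟩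
  obtain ⟨t, ht'⟩ := hae
  -- `a` is odd, hence so is its norm
  have hcop : IsCoprime a 2 := ⟨1, -(2 ^ (k + 2) * t), by
    linear_combination ht'⟩
  have hodd : Odd (nN a) := odd_nN ha hcop
  obtain ⟨n', hn'⟩ := dvd_nN a
  have hna0 := nN_ne_zero ha
  set m : ℕ := m0 * nN a with hm
  have hm_pos : 0 < m := Nat.pos_of_ne_zero (mul_ne_zero hm00 hna0)
  set μ : 𝓞 F := m0 * n' with hμ
  have hμa : μ * a = m := by rw [hμ, hm]; push_cast; rw [hn']; ring
  have hm0F : (m : 𝓞 F) ≠ 0 := by exact_mod_cast hm_pos.ne'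
  have hμ0 : μ ≠ 0 := fun h => hm0F (by rw [← hμa, h, zero_mul])
  -- `1 + y² + z²` divisible by the odd part of `m` makes `wc` integral and `Bl` prime to `m`
  obtain ⟨y, z, c, hyz⟩ := exists_dvd_one_add_sq (m1 * nN a * nN a) ((hm1.mul hodd).mul hodd)
  have hyz' : (1 + ((y : 𝓞 F) ^ 2 + (z : 𝓞 F) ^ 2)) = m1 * nN a * nN a * c := by
    have := congrArg (Int.cast : ℤ → 𝓞 F) hyz
    push_cast at this
    exact this
  have hmk : (m : 𝓞 F) = 2 ^ k * m1 * nN a := by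
    rw [hm, hk]; push_cast; ring
  set w₀ : 𝓞 F := 2 ^ (k + 2) * t with hw₀
  have haw : a = 1 + 2 * w₀ := by rw [hw₀]; linear_combination ht'
  have h2m : 2 ∣ m := by
    rw [hm, hm0]; exact ((dvd_mul_right 2 _).mul_right _).mul_right _
  have hmB : ∀ p : ℕ, p.Prime → p ≤ B → p ∣ m := fun p hp hpB => by
    have h1 : p ∣ ∏ p ∈ (Finset.range (B + 1)).filter Nat.Prime, p :=
      Finset.dvd_prod_of_mem (fun p => p) (Finset.mem_filter.2 ⟨Finset.mem_range.2 (by omega), hp⟩)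
    rw [hm, hm0]
    exact (((h1.mul_left 2).mul_right _).mul_right _)
  have hαm : α ∣ (m : 𝓞 F) := by
    refine (dvd_nN α).trans ?_
    rw [hm, hm0]; push_cast
    exact (dvd_mul_left _ _).mul_right _
  have hμm : μ ∣ (m : 𝓞 F) := ⟨a, hμa.symm⟩
  set Bl : 𝓞 F := 1 + (1 + ((y : 𝓞 F) ^ 2 + (z : 𝓞 F) ^ 2)) * w₀ with hBl
  have hBlm : IsCoprime Bl (m : 𝓞 F) := ⟨1, -(nN a * c * 4 * t), by
    rw [hBl, hyz', hmk, hw₀]; ring⟩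
  set wc : 𝓞 F := n' * c * 2 ^ (k + 2) * t ^ 2 with hwc
  have hwc' : 4 * (m : 𝓞 F) * a * wc = (1 + ((y : 𝓞 F) ^ 2 + (z : 𝓞 F) ^ 2)) * w₀ ^ 2 := by
    rw [hyz', hwc, hmk, hw₀]
    linear_combination -(4 * 2 ^ k * m1 * nN a * c * 2 ^ (k + 2) * t ^ 2) * hn'
  obtain ⟨G₁, G₂, hG₁, hG₂, HT⟩ := H β hβ a μ m N₀ hm_pos hN₀ hμa happ
  obtain ⟨T₁, _, _, s₁, b₁, E₁, J₁, ψ₁, hψ₁, hT₁⟩ := exists_equidistributed hB m hm_pos h2m hmB a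
    ((y : 𝓞 F) ^ 2 + (z : 𝓞 F) ^ 2) Bl μ α wc hBlm hμ0
    (by rw [sq]; exact mul_dvd_mul hμm hαm) G₁ hG₁
  obtain ⟨T₂, _, _, s₂, b₂, E₂, J₂, ψ₂, hψ₂, hT₂⟩ := exists_equidistributed hB m hm_pos h2m hmB 1
    ((y : 𝓞 F) ^ 2 + (z : 𝓞 F) ^ 2) 1 m α 0 isCoprime_one_left hm0F
    (by rw [sq]; exact mul_dvd_mul dvd_rfl hαm) G₂ hG₂
  obtain ⟨w, hw0, ⟨x₁, u₁, τ₁, hu₁, hw₁⟩, ⟨x₂, u₂, τ₂, hu₂, hw₂⟩⟩ := HT T₁ T₂ ψ₁ ψ₂ hT₁ hT₂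
  have toP : ∀ b : 𝓞 F, b ≠ 0 → (∃ U V W : 𝓞 F, IsSumFourSq U ∧ IsSumFourSq V ∧ IsSumFourSq W ∧
      b = U + α * V + β * W) → P b := by
    rintro b hb ⟨U, V, W, hU, hV, hW, e⟩
    have e' : (b : F) = algebraMap (𝓞 F) F U + α * algebraMap (𝓞 F) F V +
        β * algebraMap (𝓞 F) F W := by
      have := congrArg (algebraMap (𝓞 F) F) e
      simpa only [map_add, map_mul, ← RingOfIntegers.coe_eq_algebraMap] using this
    rw [e']
    refine hform _ _ _ (hU.map _) (hV.map _) (hW.map _) ?_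
    rw [← e']
    exact RingOfIntegers.coe_ne_zero_iff.2 hb
  have P1 : P ((a * (1 + 4 * m * w) : 𝓞 F) : F) :=
    toP _ (mul_ne_zero ha hw0)
      (value_identity (J := (m : 𝓞 F) ^ J₁) (E := E₁) (s := s₁ τ₁) (b := b₁ τ₁)
          hu₁ haw hμa hwc' hBl hw₁
        (by rw [hψ₁, ← pow_mul, mul_comm J₁ 2]))
  -- the second family is the case `a = 1`, `w₀ = 0`
  have P2 : P ((1 + 4 * m * w : 𝓞 F) : F) :=
    toP _ hw0 (by
      have := value_identity (a := 1) (w₀ := 0) (wc := 0) (y := (y : 𝓞 F)) (z := (z : 𝓞 F))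
        (J := (m : 𝓞 F) ^ J₂) (E := E₂) (s := s₂ τ₂) (b := b₂ τ₂) (Bl := 1) hu₂
          (by ring) (mul_one _) (by ring) (by ring)
          hw₂
        (by rw [hψ₂, ← pow_mul, mul_comm J₂ 2])
      rwa [one_mul] at this)
  have e : (a : F) = ((a * (1 + 4 * m * w) : 𝓞 F) : F) * ((1 + 4 * m * w : 𝓞 F) : F)⁻¹ := by
    have h : ((1 + 4 * m * w : 𝓞 F) : F) ≠ 0 := RingOfIntegers.coe_ne_zero_iff.2 hw0
    rw [eq_mul_inv_iff_mul_eq₀ h]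
    exact (map_mul (algebraMap (𝓞 F) F) _ _).symm
  rw [e]
  exact hmul _ _ P1 (hinv _ P2)

end Core

/-! ### Totally positive elements as products of represented values -/

section TotallyPositive
universe u
variable {F : Type u} [Field F]

/-- In a finite commutative ring in which `2` is nilpotent, the norm form `x² + xy + y²`
represents all elements. -/
lemma exists_norm_form (R : Type*) [CommRing R] [Finite R] (h2 : IsNilpotent (2 : R)) (u : R)
    (hu : IsUnit u) : ∃ x y : R, u = x ^ 2 + x * y + y ^ 2 := by
  -- Frobenius is bijective on the reduction
  have hfrob : Function.Surjective fun x : R ⧸ nilradical R => x ^ 2 := by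
    have : Finite (R ⧸ nilradical R) := Finite.of_surjective _ Ideal.Quotient.mk_surjective
    refine Finite.surjective_of_injective fun x y hxy => ?_
    have h20 : (2 : R ⧸ nilradical R) = 0 := by
      have : Ideal.Quotient.mk (nilradical R) 2 = 0 :=
        Ideal.Quotient.eq_zero_iff_mem.2 (mem_nilradical.2 h2)
      rwa [map_ofNat] at this
    have hred : IsReduced (R ⧸ nilradical R) :=
      (Ideal.isRadical_iff_quotient_reduced _).1 (Ideal.radical_isRadical _)
    have h3 : (x - y) ^ 2 = 0 := by
      have hxy : x ^ 2 = y ^ 2 := hxy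
      linear_combination hxy + (y ^ 2 - x * y) * h20
    exact sub_eq_zero.1 (pow_eq_zero_iff (two_ne_zero)|>.1 h3)
  obtain ⟨x', hx'⟩ := hfrob (Ideal.Quotient.mk _ u)
  obtain ⟨x, rfl⟩ := Ideal.Quotient.mk_surjective x'
  have hux : u - x ^ 2 ∈ nilradical R := by
    rw [← Ideal.Quotient.eq_zero_iff_mem, map_sub, map_pow, sub_eq_zero]
    exact hx'.symm
  have hx : IsUnit x := by
    have h := (mem_nilradical.1 hux).isUnit_add_left_of_commute hu.neg (Commute.all _ _)
    have e : -u + (u - x ^ 2) = -(x ^ 2) := by ring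
    rw [e, IsUnit.neg_iff] at h
    exact (isUnit_pow_iff two_ne_zero).1 h
  let f : nilradical R → nilradical R := fun y => ⟨(y : R) ^ 2 + x * y,
    add_mem (Ideal.pow_mem_of_mem _ y.2 _ two_pos) (Ideal.mul_mem_left _ _ y.2)⟩
  have hf : Function.Surjective f := by
    refine Finite.surjective_of_injective fun y z hyz => ?_
    have h := congrArg (Subtype.val) hyz
    simp only [f] at h
    have h1 : (x + ((y : R) + z)) * ((y : R) - z) = 0 := by linear_combination h
    have h2 : IsUnit (x + ((y : R) + z)) :=
      (mem_nilradical.1 (add_mem y.2 z.2)).isUnit_add_left_of_commute hx (Commute.all _ _)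
    exact Subtype.ext (sub_eq_zero.1 ((h2.mul_right_eq_zero).1 h1))
  obtain ⟨y, hy⟩ := hf ⟨_, hux⟩
  refine ⟨x, y, ?_⟩
  have := congrArg Subtype.val hy
  simp only [f] at this
  linear_combination -this

lemma exists_sum_four_sq_approx [NumberField F] (α : 𝓞 F) (hα : IsCoprime α 2) (L : ℕ) :
    ∃ s τ : 𝓞 F, IsSumFourSq (s : F) ∧ 1 + α * s = 2 ^ L * τ := by
  have hL : (2 : 𝓞 F) ^ L ≠ 0 := pow_ne_zero _ two_ne_zero
  have := finite_quot_span hL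
  obtain ⟨p, q, hpq⟩ := (hα.pow_right : IsCoprime α (2 ^ L))
  set π := Ideal.Quotient.mk (Ideal.span {(2 : 𝓞 F) ^ L}) with hπ
  have hπL : π (2 ^ L) = 0 := Ideal.Quotient.eq_zero_iff_mem.2 (Ideal.mem_span_singleton_self _)
  have hunit : IsUnit (π (-p)) := by
    refine .of_mul_eq_one (π (-α)) ?_
    rw [← map_mul]
    have : -p * -α = 1 - q * 2 ^ L := by linear_combination hpq
    rw [this, map_sub, map_mul, hπL, map_one, mul_zero, sub_zero]
  obtain ⟨x', y', hxy⟩ := exists_norm_form (𝓞 F ⧸ Ideal.span {(2 : 𝓞 F) ^ L})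
    ⟨L, by rw [← hπL, map_pow, map_ofNat]⟩ _ hunit
  obtain ⟨x, rfl⟩ := Ideal.Quotient.mk_surjective x'
  obtain ⟨y, rfl⟩ := Ideal.Quotient.mk_surjective y'
  have h : -p - (x ^ 2 + x * y + y ^ 2) ∈ Ideal.span {(2 : 𝓞 F) ^ L} := by
    rw [← Ideal.Quotient.eq_zero_iff_mem, map_sub, sub_eq_zero]
    simpa using hxy
  obtain ⟨τ, hτ⟩ := Ideal.mem_span_singleton.1 h
  refine ⟨x ^ 2 + x * y + y ^ 2, q - α * τ, ⟨x + y / 2, y / 2, y / 2, y / 2, ?_⟩, ?_⟩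
  · have e : ((x ^ 2 + x * y + y ^ 2 : 𝓞 F) : F) = (x : F) ^ 2 + x * y + y ^ 2 := by
      simp only [RingOfIntegers.coe_eq_algebraMap, map_add, map_mul, map_pow]
    rw [e]; ring
  · linear_combination (-α) * hτ - hpq

lemma re_embedding_mul (ht : ∀ (σ : F →+* ℂ) (x : F), (σ x).im = 0) (σ : F →+* ℂ) (x y : F) :
    (σ (x * y)).re = (σ x).re * (σ y).re := by
  rw [map_mul, Complex.mul_re, ht σ x]; ring

lemma re_embedding_sq (ht : ∀ (σ : F →+* ℂ) (x : F), (σ x).im = 0) (σ : F →+* ℂ) (x : F) :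
    (σ (x ^ 2)).re = (σ x).re ^ 2 := by
  rw [sq, re_embedding_mul ht, sq]

lemma re_embedding_inv (ht : ∀ (σ : F →+* ℂ) (x : F), (σ x).im = 0) (σ : F →+* ℂ) (x : F) :
    (σ x⁻¹).re = ((σ x).re)⁻¹ := by
  rw [map_inv₀, Complex.inv_re, Complex.normSq_apply, ht σ x]
  by_cases h : (σ x).re = 0
  · simp [h]
  · field_simp; ring

lemma re_embedding_ne_zero (ht : ∀ (σ : F →+* ℂ) (x : F), (σ x).im = 0) (σ : F →+* ℂ) {x : F}
    (hx : x ≠ 0) : (σ x).re ≠ 0 := fun h =>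
  hx ((map_eq_zero σ).1 (Complex.ext h (ht σ x)))

lemma embedding_eq_re (ht : ∀ (σ : F →+* ℂ) (x : F), (σ x).im = 0) (σ : F →+* ℂ) (x : F) :
    σ x = ((σ x).re : ℂ) := Complex.ext rfl (by rw [ht, Complex.ofReal_im])

lemma IsSumFourSq.re_nonneg (ht : ∀ (σ : F →+* ℂ) (x : F), (σ x).im = 0) (σ : F →+* ℂ) {x : F}
    (hx : IsSumFourSq x) : 0 ≤ (σ x).re := by
  obtain ⟨p, q, r, s, rfl⟩ := hx
  simp only [map_add, Complex.add_re, re_embedding_sq ht]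
  positivity

lemma IsSumFourSq.of_sq {R : Type*} [CommRing R] (x : R) : IsSumFourSq (x ^ 2) :=
  ⟨x, 0, 0, 0, by ring⟩

lemma IsSumFourSq.zero {R : Type*} [CommRing R] : IsSumFourSq (0 : R) :=
  ⟨0, 0, 0, 0, by ring⟩

/-- Weak approximation at the real places: a totally positive integer can be multiplied by the
square of an integer `≡ 1 mod 2 ^ e` so as to become close to the square of a natural number at
all real places. -/
lemma exists_real_approx [NumberField F] (ht : ∀ (σ : F →+* ℂ) (x : F), (σ x).im = 0)
    (δ' : ℝ) (hδ' : 0 < δ')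
    (e : ℕ) (a : 𝓞 F) (ha : ∀ σ : F →+* ℂ, 0 < (σ (a : F)).re) (ha2 : (2 : 𝓞 F) ^ e ∣ a - 1) :
    ∃ (k : 𝓞 F) (N₀ : ℕ), k ≠ 0 ∧ 0 < N₀ ∧ (2 : 𝓞 F) ^ e ∣ a * k ^ 2 - 1 ∧
      ∀ σ : F →+* ℂ, ‖σ ((a * k ^ 2 : 𝓞 F) : F) - (N₀ : ℂ) ^ 2‖ ≤ δ' * (N₀ : ℝ) ^ 2 := by
  obtain ⟨C, hC, happ⟩ := exists_approx ht
  obtain ⟨M, hM⟩ := Finite.exists_le fun σ : F →+* ℂ => Real.sqrt (σ (a : F)).re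
  have hM0 : 0 ≤ M := (Real.sqrt_nonneg _).trans (hM (Classical.arbitrary _))
  set Θ : ℝ := 2 ^ e * C * M with hΘ
  have hΘ0 : 0 ≤ Θ := by positivity
  obtain ⟨N₀, hN₀⟩ := exists_nat_gt (1 + Θ + (2 * Θ + Θ ^ 2) / δ')
  have hfr : 0 ≤ (2 * Θ + Θ ^ 2) / δ' := by positivity
  have hN1 : (1 : ℝ) ≤ N₀ := by linarith
  have hNΘ : Θ < N₀ := by linarith
  obtain ⟨t, ht'⟩ := happ fun σ => (N₀ / Real.sqrt (σ (a : F)).re - 1) / 2 ^ e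
  have key : ∀ σ : F →+* ℂ,
      |(σ ((1 + 2 ^ e * t : 𝓞 F) : F)).re * Real.sqrt (σ (a : F)).re - N₀| ≤ Θ := by
    intro σ
    have hs : 0 < Real.sqrt (σ (a : F)).re := Real.sqrt_pos.2 (ha σ)
    have hs' : Real.sqrt (σ (a : F)).re ≤ M := hM σ
    have e1 : (σ ((1 + 2 ^ e * t : 𝓞 F) : F)).re = 1 + 2 ^ e * (σ (t : F)).re := by
      have e0 : ((1 + 2 ^ e * t : 𝓞 F) : F) = 1 + ((2 ^ e : ℕ) : F) * t := by
        rw [RingOfIntegers.coe_eq_algebraMap]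
        simp only [map_add, map_one, map_mul, map_pow, map_ofNat, Nat.cast_pow, Nat.cast_ofNat]
      rw [e0, map_add, Complex.add_re, map_one, re_embedding_mul ht, map_natCast,
        Complex.natCast_re, Complex.one_re]
      push_cast; ring
    rw [e1]
    have h : |(σ (t : F)).re - (N₀ / Real.sqrt (σ (a : F)).re - 1) / 2 ^ e| ≤ C := ht' σ
    clear ht' hM
    generalize (σ (t : F)).re = r at *
    generalize Real.sqrt (σ (a : F)).re = v at *
    have e2 : (1 + 2 ^ e * r) * v - N₀ = 2 ^ e * (r - (N₀ / v - 1) / 2 ^ e) * v := by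
      field_simp; ring
    rw [e2, abs_mul, abs_mul, abs_of_pos hs, abs_of_pos (by positivity : (0 : ℝ) < 2 ^ e), hΘ]
    gcongr
  have hcoe : ∀ x y : 𝓞 F, ((x * y ^ 2 : 𝓞 F) : F) = (x : F) * (y : F) ^ 2 := fun x y => by
    simp only [RingOfIntegers.coe_eq_algebraMap, map_mul, map_pow]
  refine ⟨1 + 2 ^ e * t, N₀, fun h0 => ?_, by exact_mod_cast (by linarith : (0 : ℝ) < N₀),
    ?_, fun σ => ?_⟩
  · have := key (Classical.arbitrary _)
    rw [h0, RingOfIntegers.coe_eq_algebraMap, map_zero, map_zero, Complex.zero_re, zero_mul,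
      zero_sub, abs_neg, abs_of_pos (by linarith)] at this
    linarith
  · have e1 : a * (1 + 2 ^ e * t) ^ 2 - 1 =
        (a - 1) * (1 + 2 ^ e * t) ^ 2 + 2 ^ e * (2 * t + 2 ^ e * t ^ 2) := by ring
    rw [e1]
    exact dvd_add (ha2.mul_right _) (dvd_mul_right _ _)
  · have h := key σ
    rw [hcoe, embedding_eq_re ht σ (_ * _), re_embedding_mul ht, re_embedding_sq ht]
    have hs := Real.sq_sqrt (ha σ).le
    generalize (σ ((1 + 2 ^ e * t : 𝓞 F) : F)).re = κ at *
    rw [← hs]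
    generalize Real.sqrt (σ (a : F)).re = v at *
    have e3 : ‖((v ^ 2 * κ ^ 2 : ℝ) : ℂ) - (N₀ : ℂ) ^ 2‖ = |v ^ 2 * κ ^ 2 - N₀ ^ 2| := by
      rw [← Real.norm_eq_abs, ← Complex.norm_real]; push_cast; rfl
    rw [e3]
    have e4 : v ^ 2 * κ ^ 2 - (N₀ : ℝ) ^ 2 = (κ * v - N₀) * (2 * N₀ + (κ * v - N₀)) := by ring
    rw [e4, abs_mul]
    have h5 : |2 * (N₀ : ℝ) + (κ * v - N₀)| ≤ 2 * N₀ + Θ := by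
      refine (abs_add_le _ _).trans ?_
      rw [abs_of_pos (by linarith : (0 : ℝ) < 2 * N₀)]; linarith
    calc _ ≤ Θ * (2 * N₀ + Θ) := by gcongr
      _ ≤ (2 * Θ + Θ ^ 2) * N₀ := by
          nlinarith [mul_nonneg (sq_nonneg Θ) (by linarith : 0 ≤ (N₀ : ℝ) - 1)]
      _ ≤ (δ' * N₀) * N₀ := by
        gcongr
        have : (2 * Θ + Θ ^ 2) / δ' ≤ N₀ := by linarith
        rwa [div_le_iff₀ hδ', mul_comm (N₀ : ℝ)] at this
      _ = _ := by ring

/-- Totally positive elements of `F` belong to every subgroup containing the nonzero values of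
`Σ₄ x² + α Σ₄ y² + β Σ₄ z²`, when `α` is odd and totally positive. -/
lemma totally_positive_mem [NumberField F] (ht : ∀ (σ : F →+* ℂ) (x : F), (σ x).im = 0)
    (α β : 𝓞 F) (hα2 : IsCoprime α 2) (hα : ∀ σ : F →+* ℂ, 0 < (σ (α : F)).re) (hβ : β ≠ 0)
    (P : F → Prop) (hmul : ∀ x y, P x → P y → P (x * y)) (hinv : ∀ x, P x → P x⁻¹)
    (hform : ∀ u v w : F, IsSumFourSq u → IsSumFourSq v → IsSumFourSq w → u + α * v + β * w ≠ 0 →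
        P (u + α * v + β * w)) (a : F) (ha : ∀ σ : F →+* ℂ, 0 < (σ a).re) : P a := by
  have hP2 : ∀ x : F, x ≠ 0 → P (x ^ 2) := fun x hx => by
    have := hform (x ^ 2) 0 0 (.of_sq x) .zero .zero
    simp only [mul_zero, add_zero] at this
    exact this (pow_ne_zero _ hx)
  have hsq : ∀ x y : F, x ≠ 0 → P (y * x ^ 2) → P y := fun x y hx h => by
    have e : y = y * x ^ 2 * (x ^ 2)⁻¹ := by field_simp
    rw [e]
    exact hmul _ _ h (hinv _ (hP2 x hx))
  have ne_of_pos : ∀ x : F, (∀ σ : F →+* ℂ, 0 < (σ x).re) → x ≠ 0 := fun x hx h => by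
    have := hx (Classical.arbitrary _)
    rw [h, map_zero, Complex.zero_re] at this
    exact lt_irrefl _ this
  have hα0 : α ≠ 0 := fun h => ne_of_pos α hα (by rw [h]; exact map_zero (algebraMap (𝓞 F) F))
  obtain ⟨δ', hδ', H⟩ := exists_core ht
  obtain ⟨e, He⟩ := H α β hα0 hβ
  -- odd totally positive elements which are `1` modulo a high power of `2`
  have step1 : ∀ a : 𝓞 F, (∀ σ : F →+* ℂ, 0 < (σ (a : F)).re) → (2 : 𝓞 F) ^ e ∣ a - 1 → P a := by
    intro a ha ha2
    obtain ⟨k, N₀, hk, hN₀, h2, h3⟩ := exists_real_approx ht δ' hδ' e a ha ha2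
    have ha0 : a ≠ 0 := fun h => ne_of_pos a ha (by rw [h]; exact map_zero (algebraMap (𝓞 F) F))
    have := He (a * k ^ 2) N₀ (mul_ne_zero ha0 (pow_ne_zero _ hk)) hN₀ h2 h3 P hmul hinv hform
    refine hsq k a (RingOfIntegers.coe_ne_zero_iff.2 hk) ?_
    simpa only [RingOfIntegers.coe_eq_algebraMap, map_mul, map_pow] using this
  -- totally positive integers
  have step2 : ∀ a : 𝓞 F, (∀ σ : F →+* ℂ, 0 < (σ (a : F)).re) → P a := by
    intro a ha
    have ha0 : a ≠ 0 := fun h => ne_of_pos a ha (by rw [h]; exact map_zero (algebraMap (𝓞 F) F))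
    obtain ⟨f, r, hr, hf⟩ := Nat.exists_eq_two_pow_mul_odd (nN_ne_zero ha0)
    obtain ⟨n', hn'⟩ := dvd_nN a
    obtain ⟨s, τ, hs, hsτ⟩ := exists_sum_four_sq_approx α hα2 (e + f + 2)
    obtain ⟨r', q, hr'⟩ : ∃ r' q : ℤ, r * r' = 1 + 2 ^ e * (2 * q) := by
      have : IsCoprime (r : ℤ) (2 ^ (e + 1)) := by
        refine IsCoprime.pow_right ?_
        rw [show (2 : ℤ) = ((2 : ℕ) : ℤ) from rfl, Nat.isCoprime_iff_coprime]
        exact hr.coprime_two_right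
      obtain ⟨x, y, h⟩ := this
      exact ⟨x, -y, by rw [pow_succ] at h; linear_combination h⟩
    have hr'F : (r : 𝓞 F) * r' = 1 + 2 ^ e * (2 * q) := by
      exact_mod_cast congrArg (Int.cast : ℤ → 𝓞 F) hr'
    have hnF : (2 : 𝓞 F) ^ f * r = a * n' := by
      rw [← hn', hf]; push_cast; ring
    set c : 𝓞 F := a + 2 ^ (e + f) * τ * (a - 1) ^ 2 with hc
    have hc4 : (4 : 𝓞 F) * c = (a + 1) ^ 2 + α * (s * (a - 1) ^ 2) := by
      rw [hc]; linear_combination (-(a - 1) ^ 2) * hsτ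
    have hcF : (c : F) = (((a : F) + 1) / 2) ^ 2 + α * ((((a : F) - 1) / 2) ^ 2 * s) := by
      have := congrArg (algebraMap (𝓞 F) F) hc4
      simp only [map_add, map_sub, map_one, map_mul, map_pow, map_ofNat,
        ← RingOfIntegers.coe_eq_algebraMap] at this
      linear_combination this / 4
    have hcpos : ∀ σ : F →+* ℂ, 0 < (σ (c : F)).re := by
      intro σ
      rw [hcF, map_add, Complex.add_re, re_embedding_mul ht, re_embedding_sq ht]
      have h1 : 0 < (σ (((a : F) + 1) / 2)).re := by
        have : ((a : F) + 1) / 2 = ((1 / 2 : ℚ) : F) * (a + 1) := by push_cast; ring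
        rw [this, re_embedding_mul ht, map_ratCast, Complex.ratCast_re, map_add, map_one,
          Complex.add_re, Complex.one_re]
        have := ha σ
        push_cast; positivity
      have h2 := (hs.sq_mul (((a : F) - 1) / 2)).re_nonneg ht σ
      have h3 := hα σ
      positivity
    have hPc : P c := by
      have := hform ((((a : F) + 1) / 2) ^ 2) ((((a : F) - 1) / 2) ^ 2 * s) 0 (.of_sq _)
        (hs.sq_mul _) .zero
      rw [mul_zero, add_zero, ← hcF] at this
      exact this (ne_of_pos _ hcpos)
    -- `b = (r r')² c / a`
    set b : 𝓞 F := r * r' * r' * (r + 2 ^ e * τ * (a - 1) ^ 2 * n') with hb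
    have hba : b * a = (r * r') ^ 2 * c := by
      rw [hb, hc]
      linear_combination -(r * r' * r' * 2 ^ e * τ * (a - 1) ^ 2) * hnF
    have hba' : (b : F) = (r * r' : F) ^ 2 * c * (a : F)⁻¹ := by
      have h : (a : F) ≠ 0 := RingOfIntegers.coe_ne_zero_iff.2 ha0
      have := congrArg (algebraMap (𝓞 F) F) hba
      simp only [map_mul, map_pow, map_natCast, map_intCast,
        ← RingOfIntegers.coe_eq_algebraMap] at this
      rw [eq_mul_inv_iff_mul_eq₀ h, this]
    have hrr' : (r * r' : F) ≠ 0 := by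
      have h : (r : ℤ) * r' ≠ 0 := by
        intro h0
        have e1 : (2 : ℤ) ^ e * (2 * q) = 2 * (2 ^ e * q) := by ring
        rw [h0, e1] at hr'
        omega
      exact_mod_cast h
    have hPb : P b := by
      refine step1 b (fun σ => ?_) ?_
      · rw [hba', re_embedding_mul ht, re_embedding_mul ht, re_embedding_sq ht,
          re_embedding_inv ht]
        have h1 := hcpos σ
        have h2 := ha σ
        have h3 := re_embedding_ne_zero ht σ hrr'
        positivity
      · refine ⟨2 * q * (2 + 2 ^ e * (2 * q)) + r * r' * r' * τ * (a - 1) ^ 2 * n', ?_⟩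
        rw [hb]
        linear_combination (r * r' + 1 + 2 ^ e * (2 * q)) * hr'F
    have hPrc : P ((r * r' : F) ^ 2 * c) := hmul _ _ (hP2 _ hrr') hPc
    have h : (a : F) = (r * r' : F) ^ 2 * c * (b : F)⁻¹ := by
      rw [hba']
      have h : (a : F) ≠ 0 := RingOfIntegers.coe_ne_zero_iff.2 ha0
      have h' := ne_of_pos _ hcpos
      generalize (r * r' : F) = R at *
      field_simp
    rw [h]
    exact hmul _ _ hPrc (hinv _ hPb)
  obtain ⟨R, hR, -, y, hy⟩ := exists_nat_mul_integral a 0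
  have hRF : (R : F) ≠ 0 := by exact_mod_cast hR.ne'
  refine hsq R a hRF ?_
  have e1 : a * (R : F) ^ 2 = ((y * R : 𝓞 F) : F) := by
    have : ((y * R : 𝓞 F) : F) = y * R := by
      simp only [RingOfIntegers.coe_eq_algebraMap, map_mul, map_natCast]
    rw [this, hy]; ring
  rw [e1]
  refine step2 _ fun σ => ?_
  rw [← e1, re_embedding_mul ht, re_embedding_sq ht]
  have := re_embedding_ne_zero ht σ hRF
  have := ha σ
  positivity

end TotallyPositive

/-! ### Multipliers of similitudes -/

section Similitudes
open Matrix
variable {F D : Type*} [Field F] [DivisionRing D] [Algebra F D] [StarRing D]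

/-- `a` is the multiplier of a similitude of the form `Σ x* y` on `ι → D`. -/
def IsMultiplier (D : Type*) [DivisionRing D] [Algebra F D] [StarRing D] (ι : Type*) [Fintype ι]
    [DecidableEq ι] (a : F) : Prop :=
  ∃ M : Matrix ι ι D, Mᴴ * M = a • (1 : Matrix ι ι D) ∧ M * Mᴴ = a • (1 : Matrix ι ι D)

lemma star_smul' (hs : ∀ c : F, star (algebraMap F D c) = algebraMap F D c) (c : F) (d : D) :
    star (c • d) = c • star d := by
  rw [Algebra.smul_def, star_mul, hs, Algebra.smul_def, Algebra.commutes]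

lemma conjTranspose_smul' (hs : ∀ c : F, star (algebraMap F D c) = algebraMap F D c)
    {ι : Type*} (a : F) (M : Matrix ι ι D) : (a • M)ᴴ = a • Mᴴ := by
  ext i j
  simp only [Matrix.conjTranspose_apply, Matrix.smul_apply, Algebra.smul_def, star_mul, hs]
  exact (Algebra.commutes _ _).symm

variable {ι : Type*} [Fintype ι] [DecidableEq ι]

lemma IsMultiplier.mul {a b : F}
    (ha : IsMultiplier D ι a) (hb : IsMultiplier D ι b) : IsMultiplier D ι (a * b) := by
  obtain ⟨M, hM, hM'⟩ := ha
  obtain ⟨N, hN, hN'⟩ := hb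
  refine ⟨M * N, ?_, ?_⟩
  · rw [conjTranspose_mul, mul_assoc, ← mul_assoc Mᴴ, hM, smul_mul_assoc, one_mul, mul_smul_comm,
      hN, smul_smul]
  · rw [conjTranspose_mul, mul_assoc, ← mul_assoc N, hN', smul_mul_assoc, one_mul, mul_smul_comm,
      hM', smul_smul, mul_comm]

lemma IsMultiplier.inv (hs : ∀ c : F, star (algebraMap F D c) = algebraMap F D c) {a : F}
    (ha : IsMultiplier D ι a) : IsMultiplier D ι a⁻¹ := by
  obtain ⟨M, hM, hM'⟩ := ha
  have e : a⁻¹ * (a⁻¹ * a) = a⁻¹ := by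
    by_cases h : a = 0
    · simp [h]
    · field_simp
  refine ⟨a⁻¹ • M, ?_, ?_⟩
  · rw [conjTranspose_smul' hs, smul_mul_smul_comm, hM, smul_smul, mul_assoc, e]
  · rw [conjTranspose_smul' hs, smul_mul_smul_comm, hM', smul_smul, mul_assoc, e]

/-- Pfister's trick: multipliers of `n`-fold forms add up to multipliers of `2n`-fold forms. -/
lemma IsMultiplier.add (hs : ∀ c : F, star (algebraMap F D c) = algebraMap F D c) {a b : F}
    (ha : IsMultiplier D ι a) (hb : IsMultiplier D ι b) : IsMultiplier D (ι ⊕ ι) (a + b) := by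
  obtain ⟨M, hM, hM'⟩ := ha
  obtain ⟨N, hN, hN'⟩ := hb
  have h1 : ∀ c : F, c • (1 : Matrix (ι ⊕ ι) (ι ⊕ ι) D) = fromBlocks (c • 1) 0 0 (c • 1) := by
    intro c
    rw [← fromBlocks_one, fromBlocks_smul]; simp
  by_cases h : a = 0
  · subst h
    refine ⟨fromBlocks N 0 0 N, ?_, ?_⟩ <;>
      simp [h1, fromBlocks_conjTranspose, fromBlocks_multiply, hN, hN']
  refine ⟨fromBlocks M (-(a⁻¹ • (M * Nᴴ * M))) N M, ?_, ?_⟩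
  · rw [fromBlocks_conjTranspose, fromBlocks_multiply, h1, hM, hN]
    congr 1
    · rw [add_smul]
    · rw [mul_neg, mul_smul_comm, mul_assoc M, ← mul_assoc Mᴴ, hM]
      simp [smul_smul, h]
    · rw [conjTranspose_neg, conjTranspose_smul' hs, conjTranspose_mul, conjTranspose_mul,
        conjTranspose_conjTranspose, neg_mul, smul_mul_assoc, mul_assoc, mul_assoc, hM]
      simp [smul_smul, h]
    · rw [conjTranspose_neg, conjTranspose_smul' hs, conjTranspose_mul, conjTranspose_mul,
        conjTranspose_conjTranspose, neg_mul_neg, smul_mul_smul_comm]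
      have e : Mᴴ * (N * Mᴴ) * (M * Nᴴ * M) = (a * (b * a)) • (1 : Matrix ι ι D) := by
        calc _ = Mᴴ * N * (Mᴴ * M) * Nᴴ * M := by simp only [mul_assoc]
          _ = a • (Mᴴ * (N * Nᴴ) * M) := by rw [hM]; simp [mul_assoc]
          _ = _ := by rw [hN']; simp [hM, smul_smul]
      rw [e, smul_smul, add_comm, ← add_smul]
      congr 2
      field_simp
  · rw [fromBlocks_conjTranspose, fromBlocks_multiply, h1, hM', hN']
    rw [conjTranspose_neg, conjTranspose_smul' hs, conjTranspose_mul, conjTranspose_mul,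
        conjTranspose_conjTranspose]
    congr 1
    · rw [neg_mul_neg, smul_mul_smul_comm]
      have e : (M * Nᴴ * M) * (Mᴴ * (N * Mᴴ)) = (a * (b * a)) • (1 : Matrix ι ι D) := by
        calc _ = M * Nᴴ * (M * Mᴴ) * N * Mᴴ := by simp only [mul_assoc]
          _ = a • (M * (Nᴴ * N) * Mᴴ) := by rw [hM']; simp [mul_assoc]
          _ = _ := by rw [hN]; simp [hM', smul_smul]
      rw [e, smul_smul, ← add_smul]
      congr 2
      field_simp
    · rw [neg_mul, smul_mul_assoc, mul_assoc, hM']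
      simp [smul_smul, h]
    · rw [mul_neg, mul_smul_comm, ← mul_assoc M, hM']
      simp [smul_smul, h]
    · rw [add_smul, add_comm]

lemma isMultiplier_unit {d : D} {n : F} (h : d * star d = algebraMap F D n)
    (h' : star d * d = algebraMap F D n) : IsMultiplier D Unit n := by
  refine ⟨Matrix.of fun _ _ => d, ?_, ?_⟩ <;>
  · ext i j
    simp [Matrix.mul_apply, Algebra.smul_def, h, h']

lemma IsMultiplier.reindex {ι κ : Type*} [Fintype ι] [DecidableEq ι] [Fintype κ] [DecidableEq κ]
    (f : ι ≃ κ) {a : F} (h : IsMultiplier D ι a) : IsMultiplier D κ a := by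
  obtain ⟨M, h1, h2⟩ := h
  refine ⟨Matrix.reindex f f M, ?_, ?_⟩
  · rw [conjTranspose_reindex, reindex_apply, reindex_apply,
      submatrix_mul_equiv, h1]
    ext i j; simp [one_apply]
  · rw [conjTranspose_reindex, reindex_apply, reindex_apply,
      submatrix_mul_equiv, h2]
    ext i j; simp [one_apply]

/-- Index type with four elements on which sums of four reduced norms act as multipliers. -/
abbrev Quad : Type := (Unit ⊕ Unit) ⊕ (Unit ⊕ Unit)

end Similitudes

/-! ### The reduced norm -/

section Canonical
variable {F D : Type*} [Field F] [CharZero F] [DivisionRing D] [Algebra F D] [StarRing D]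

lemma star_eq_self (htr : ∀ d : D, ∃ t : F, d + star d = algebraMap F D t) {d : D}
    (hd : star d = d) : ∃ t : F, d = algebraMap F D t := by
  obtain ⟨t, ht⟩ := htr d
  refine ⟨2⁻¹ * t, ?_⟩
  have h2 : algebraMap F D 2⁻¹ * algebraMap F D 2 = 1 := by
    rw [← map_mul, inv_mul_cancel₀ two_ne_zero, map_one]
  rw [map_mul, ← ht, hd, ← two_mul, ← mul_assoc, ← map_ofNat (algebraMap F D) 2, h2,
    one_mul]

lemma exists_nrd (htr : ∀ d : D, ∃ t : F, d + star d = algebraMap F D t) (d : D) :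
    ∃ n : F, d * star d = algebraMap F D n ∧ star d * d = algebraMap F D n := by
  obtain ⟨n, hn⟩ := star_eq_self htr (d := d * star d) (by rw [star_mul, star_star])
  refine ⟨n, hn, ?_⟩
  rw [← hn]
  obtain ⟨t, ht⟩ := htr d
  have e : star d = algebraMap F D t - d := by rw [← ht]; abel
  rw [e, sub_mul, mul_sub, Algebra.commutes]

/-- The reduced norm `d d*`, as an element of `F`. -/
noncomputable def nrd (htr : ∀ d : D, ∃ t : F, d + star d = algebraMap F D t) (d : D) : F :=
  (exists_nrd htr d).choose

variable (htr : ∀ d : D, ∃ t : F, d + star d = algebraMap F D t)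

lemma mul_star_eq (d : D) : d * star d = algebraMap F D (nrd htr d) :=
  (exists_nrd htr d).choose_spec.1

lemma star_mul_eq (d : D) : star d * d = algebraMap F D (nrd htr d) :=
  (exists_nrd htr d).choose_spec.2

lemma nrd_ne_zero {d : D} (hd : d ≠ 0) : nrd htr d ≠ 0 := fun h => by
  have := mul_star_eq htr d
  rw [h, map_zero] at this
  exact mul_ne_zero hd (star_ne_zero.2 hd) this

lemma isMultiplier_sum (hs : ∀ c : F, star (algebraMap F D c) = algebraMap F D c)
    (d : Fin 4 → D) : IsMultiplier D Quad (∑ i, nrd htr (d i)) := by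
  have h : ∀ i, IsMultiplier D Unit (nrd htr (d i)) := fun i =>
    isMultiplier_unit (mul_star_eq htr _) (star_mul_eq htr _)
  rw [Fin.sum_univ_four, add_assoc]
  exact ((h 0).add hs (h 1)).add hs ((h 2).add hs (h 3))

lemma nrd_of_orthogonal (hs : ∀ c : F, star (algebraMap F D c) = algebraMap F D c)
    {i j : D} (hi : star i = -i) (hj : star j = -j) (hij : i * j = -(j * i)) (x y z : F) :
    nrd htr (x • (1 : D) + y • i + z • j) = x ^ 2 + nrd htr i * y ^ 2 + nrd htr j * z ^ 2 := by
  apply (algebraMap F D).injective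
  rw [← mul_star_eq]
  have hi' : i * i = -(nrd htr i • (1 : D)) := by
    rw [← Algebra.algebraMap_eq_smul_one, ← mul_star_eq, hi, mul_neg, neg_neg]
  have hj' : j * j = -(nrd htr j • (1 : D)) := by
    rw [← Algebra.algebraMap_eq_smul_one, ← mul_star_eq, hj, mul_neg, neg_neg]
  simp only [star_add, star_smul' hs, star_one, hi, hj, add_mul, mul_add, smul_mul_smul_comm,
    one_mul, mul_one, mul_neg, hij, hi', hj', Algebra.algebraMap_eq_smul_one]
  module

lemma nrd_smul (hs : ∀ c : F, star (algebraMap F D c) = algebraMap F D c) (c : F) (d : D) :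
    nrd htr (c • d) = c ^ 2 * nrd htr d := by
  apply (algebraMap F D).injective
  rw [← mul_star_eq, star_smul' hs, smul_mul_smul_comm, mul_star_eq htr, Algebra.smul_def,
    sq, map_mul, map_mul, map_mul]

/-- A noncommutative `D` contains nonzero trace-zero elements `i`, and each of these
anticommutes with some other one. -/
lemma exists_anticommuting (htr : ∀ d : D, ∃ t : F, d + star d = algebraMap F D t)
    (hs : ∀ c : F, star (algebraMap F D c) = algebraMap F D c)
    (hc : ∀ d : D, (∀ z, d * z = z * d) → ∃ t : F, d = algebraMap F D t)
    {i : D} (hi : star i = -i) (hi0 : i ≠ 0) :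
    ∃ j : D, j ≠ 0 ∧ star j = -j ∧ i * j = -(j * i) := by
  have hnc : ∃ z, i * z ≠ z * i := by
    by_contra! h
    obtain ⟨t, rfl⟩ := hc i h
    rw [hs] at hi
    have h2 : algebraMap F D (2 * t) = 0 := by
      rw [two_mul, map_add]; exact eq_neg_iff_add_eq_zero.1 hi
    have : t = 0 := by simpa using h2
    exact hi0 (by rw [this, map_zero])
  obtain ⟨z, hz⟩ := hnc
  refine ⟨i * z - z * i, sub_ne_zero.2 hz, ?_, ?_⟩
  · obtain ⟨t, ht⟩ := htr z
    have e : star z = algebraMap F D t - z := by rw [← ht]; abel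
    rw [star_sub, star_mul, star_mul, hi, e, sub_mul, mul_sub, mul_neg, mul_neg, neg_mul, neg_mul,
      Algebra.commutes]
    abel
  · have hi' : i * i = -(algebraMap F D (nrd htr i)) := by
      rw [← mul_star_eq, hi, mul_neg, neg_neg]
    have : i * i * z = z * (i * i) := by
      rw [hi', neg_mul, mul_neg, Algebra.commutes]
    rw [mul_sub, sub_mul, ← mul_assoc, this]
    simp only [mul_assoc]
    abel

end Canonical

/-! ### Positivity of the reduced norm -/

section Definite
variable {F D : Type*} [Field F] [NumberField F] [DivisionRing D] [Algebra F D] [StarRing D]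

/-- The real embedding underlying a complex embedding of a totally real field. -/
noncomputable def realEmb (ht : ∀ (σ : F →+* ℂ) (x : F), (σ x).im = 0) (σ : F →+* ℂ) :
    F →+* ℝ where
  toFun x := (σ x).re
  map_one' := by simp
  map_zero' := by simp
  map_add' x y := by simp
  map_mul' x y := by simp [ht]

lemma exists_hom_quaternion {F D : Type*} [Field F] [DivisionRing D] [Algebra F D] (σ : F →+* ℝ)
    (hdef : letI : Algebra F ℝ := σ.toAlgebra
      Nonempty ((ℝ ⊗[F] D) ≃ₐ[ℝ] Quaternion ℝ)) :
    ∃ g : D →+* Quaternion ℝ, ∀ c : F,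
      g (algebraMap F D c) = algebraMap ℝ (Quaternion ℝ) (σ c) := by
  letI : Algebra F ℝ := σ.toAlgebra
  obtain ⟨e⟩ := hdef
  refine ⟨(e : (ℝ ⊗[F] D) →+* Quaternion ℝ).comp
    (Algebra.TensorProduct.includeRight : D →ₐ[F] ℝ ⊗[F] D).toRingHom, fun c => ?_⟩
  have h : (1 : ℝ) ⊗ₜ[F] (algebraMap F D c) = algebraMap ℝ (ℝ ⊗[F] D) (σ c) := by
    rw [Algebra.algebraMap_eq_smul_one, TensorProduct.tmul_smul, TensorProduct.smul_tmul',
      Algebra.smul_def, mul_one]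
    rfl
  simp only [RingHom.comp_apply]
  change e ((1 : ℝ) ⊗ₜ[F] (algebraMap F D c)) = _
  rw [h]
  exact e.commutes _

/-- The reduced norm of a trace-zero element is totally positive: otherwise its image in `ℍ` would
have a nonnegative real square, hence be real and so central. -/
lemma nrd_pure_pos (htr : ∀ d : D, ∃ t : F, d + star d = algebraMap F D t)
    (hs : ∀ c : F, star (algebraMap F D c) = algebraMap F D c)
    (hc : ∀ d : D, (∀ z, d * z = z * d) → ∃ t : F, d = algebraMap F D t)
    (σ : F →+* ℝ)
    (hdef : letI : Algebra F ℝ := σ.toAlgebra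
      Nonempty ((ℝ ⊗[F] D) ≃ₐ[ℝ] Quaternion ℝ))
    {i : D} (hi : star i = -i) (hi0 : i ≠ 0) : 0 < σ (nrd htr i) := by
  obtain ⟨g, hg⟩ := exists_hom_quaternion σ hdef
  by_contra! hneg
  have hsq : i * i = -(algebraMap F D (nrd htr i)) := by
    rw [← mul_star_eq, hi, mul_neg, neg_neg]
  have h1 : g i * g i = algebraMap ℝ (Quaternion ℝ) (-σ (nrd htr i)) := by
    rw [← map_mul, hsq, map_neg, hg, map_neg]
  set r := Real.sqrt (-σ (nrd htr i)) with hr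
  have hrr : r * r = -σ (nrd htr i) := Real.mul_self_sqrt (by linarith)
  have h2 : (g i - algebraMap ℝ _ r) * (g i + algebraMap ℝ _ r) = 0 := by
    rw [sub_mul, mul_add, mul_add, h1, ← map_mul, hrr, Algebra.commutes]
    abel
  have h3 : ∃ s : ℝ, g i = algebraMap ℝ _ s := by
    rcases mul_eq_zero.1 h2 with h | h
    · exact ⟨r, sub_eq_zero.1 h⟩
    · exact ⟨-r, by rw [map_neg]; exact eq_neg_of_add_eq_zero_left h⟩
  obtain ⟨s, h3⟩ := h3
  obtain ⟨j, hj0, -, hij⟩ := exists_anticommuting htr hs hc hi hi0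
  have h4 : g (i * j) = g (j * i) := by
    rw [map_mul, map_mul, h3, Algebra.commutes]
  have h5 := g.injective h4
  rw [hij] at h5
  have h6 : (2 : D) * (j * i) = 0 := by
    rw [two_mul]; nth_rw 1 [← h5]; simp
  have h20 : (2 : D) ≠ 0 := by
    rw [← map_ofNat (algebraMap F D) 2]
    exact (map_ne_zero_iff _ (algebraMap F D).injective).2 two_ne_zero
  exact mul_ne_zero h20 (mul_ne_zero hj0 hi0) h6

end Definite

/-! ### Ternary forms representing an element prime to 2 -/

section Dyadic
open IsDedekindDomain WithZero
variable {R : Type*} [CommRing R] [IsDedekindDomain R]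

lemma exists_exp_eq (v : HeightOneSpectrum R) {r : R} (hr : r ≠ 0) :
    ∃ n : ℕ, v.intValuation r = exp (-(n : ℤ)) :=
  ⟨_, v.intValuation_eq_exp_neg_multiplicity hr⟩

lemma exists_val_eq (v : HeightOneSpectrum R) (n : ℕ) :
    ∃ r : R, v.intValuation r = exp (-(n : ℤ)) := by
  obtain ⟨π, hπ⟩ := v.intValuation_exists_uniformizer
  refine ⟨π ^ n, ?_⟩
  rw [map_pow, hπ, ← exp_nsmul]
  simp

/-- One of the exponents of `A`, `B` and `A * B` at a given prime is even, so one of the three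
terms of the ternary form takes any prescribed large even exponent. -/
lemma exists_local_value (v : HeightOneSpectrum R) {A B : R} {a b : ℕ}
    (hA : v.intValuation A = exp (-(a : ℤ))) (hB : v.intValuation B = exp (-(b : ℤ)))
    {m : ℕ} (hm : a + b ≤ m) :
    ∃ x y z : R, v.intValuation (A * x ^ 2 + B * y ^ 2 + A * B * z ^ 2)
      = exp (-((2 * m : ℕ) : ℤ)) := by
  have key : ∀ (C : R) (c : ℕ), v.intValuation C = exp (-(c : ℤ)) → c ≤ m → Even c →
      ∃ x : R, v.intValuation (C * x ^ 2) = exp (-((2 * m : ℕ) : ℤ)) := by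
    rintro C c hC hcm ⟨d, hd⟩
    obtain ⟨x, hx⟩ := exists_val_eq v (m - d)
    refine ⟨x, ?_⟩
    rw [map_mul, map_pow, hC, hx, ← exp_nsmul, ← exp_add]
    congr 1
    push_cast [Nat.cast_sub (show d ≤ m by omega)]
    rw [nsmul_eq_mul]; push_cast; subst hd; push_cast; ring
  by_cases ha : Even a
  · obtain ⟨x, hx⟩ := key A a hA (by omega) ha
    exact ⟨x, 0, 0, by simpa using hx⟩
  by_cases hb : Even b
  · obtain ⟨x, hx⟩ := key B b hB (by omega) hb
    exact ⟨0, x, 0, by simpa using hx⟩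
  · obtain ⟨x, hx⟩ := key (A * B) (a + b)
      (by rw [map_mul, hA, hB, ← exp_add]; congr 1; push_cast; ring)
      hm (Nat.even_add.2 (by tauto))
    exact ⟨0, 0, x, by simpa using hx⟩

/-- The form `A x² + B y² + A B z²` represents, up to a power of `p²`, an element prime to `p`. -/
lemma exists_coprime_value {p A B : R} (hp : p ≠ 0) (hA : A ≠ 0) (hB : B ≠ 0) :
    ∃ (N : ℕ) (x y z γ : R), A * x ^ 2 + B * y ^ 2 + A * B * z ^ 2 = p ^ (2 * N) * γ ∧
      IsCoprime γ p := by
  have hpI : (Ideal.span {p} : Ideal R) ≠ 0 := by simpa using hp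
  have hfin := Ideal.finite_factors hpI
  set S : Finset (HeightOneSpectrum R) := hfin.toFinset with hS
  have hmem : ∀ v : HeightOneSpectrum R, v ∈ S ↔ p ∈ v.asIdeal := by
    intro v
    rw [hS, Set.Finite.mem_toFinset, Set.mem_ofPred_eq, Ideal.dvd_span_singleton]
  choose a ha using fun v : HeightOneSpectrum R => exists_exp_eq v hA
  choose b hb using fun v : HeightOneSpectrum R => exists_exp_eq v hB
  choose e he using fun v : HeightOneSpectrum R => exists_exp_eq v hp
  have he1 : ∀ v ∈ S, 1 ≤ e v := by
    intro v hv
    have := (v.intValuation_lt_one_iff_mem p).2 ((hmem v).1 hv)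
    rw [he, ← exp_zero, exp_lt_exp] at this
    omega
  set N : ℕ := ∑ v ∈ S, (a v + b v) with hN
  have hNe : ∀ v ∈ S, a v + b v ≤ N * e v := by
    intro v hv
    calc a v + b v ≤ N :=
          Finset.single_le_sum (f := fun v => a v + b v) (fun _ _ => by positivity) hv
      _ ≤ N * e v := Nat.le_mul_of_pos_right _ (he1 v hv)
  have hloc : ∀ v : S, ∃ x y z : R,
      (v : HeightOneSpectrum R).intValuation (A * x ^ 2 + B * y ^ 2 + A * B * z ^ 2)
        = exp (-((2 * (N * e v) : ℕ) : ℤ)) := fun v =>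
    exists_local_value v.1 (ha v) (hb v) (hNe v.1 v.2)
  choose x0 y0 z0 h0 using hloc
  have hcrt := fun f : S → R => IsDedekindDomain.exists_forall_sub_mem_ideal (s := S)
    (fun v : HeightOneSpectrum R => v.asIdeal) (fun v => 2 * (N * e v) + 1)
    (fun v _ => v.prime) (fun v _ w _ hvw h => hvw (HeightOneSpectrum.ext h)) f
  obtain ⟨x, hx⟩ := hcrt x0
  obtain ⟨y, hy⟩ := hcrt y0
  obtain ⟨z, hz⟩ := hcrt z0
  set V := A * x ^ 2 + B * y ^ 2 + A * B * z ^ 2 with hV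
  have hval : ∀ v ∈ S, v.intValuation V = exp (-((2 * (N * e v) : ℕ) : ℤ)) := by
    intro v hv
    have hd : V - (A * x0 ⟨v, hv⟩ ^ 2 + B * y0 ⟨v, hv⟩ ^ 2 + A * B * z0 ⟨v, hv⟩ ^ 2)
        ∈ v.asIdeal ^ (2 * (N * e v) + 1) := by
      have e1 : V - (A * x0 ⟨v, hv⟩ ^ 2 + B * y0 ⟨v, hv⟩ ^ 2 + A * B * z0 ⟨v, hv⟩ ^ 2)
        = A * (x + x0 ⟨v, hv⟩) * (x - x0 ⟨v, hv⟩) + B * (y + y0 ⟨v, hv⟩) * (y - y0 ⟨v, hv⟩)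
          + A * B * (z + z0 ⟨v, hv⟩) * (z - z0 ⟨v, hv⟩) := by rw [hV]; ring
      rw [e1]
      exact add_mem (add_mem (Ideal.mul_mem_left _ _ (hx v hv)) (Ideal.mul_mem_left _ _ (hy v hv)))
        (Ideal.mul_mem_left _ _ (hz v hv))
    have hlt := (v.intValuation_le_pow_iff_mem _ _).2 hd
    have h00 := h0 ⟨v, hv⟩
    rw [← h00]
    have e2 := Valuation.map_add_eq_of_lt_right (v := v.intValuation)
      (x := V - (A * x0 ⟨v, hv⟩ ^ 2 + B * y0 ⟨v, hv⟩ ^ 2 + A * B * z0 ⟨v, hv⟩ ^ 2))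
      (y := A * x0 ⟨v, hv⟩ ^ 2 + B * y0 ⟨v, hv⟩ ^ 2 + A * B * z0 ⟨v, hv⟩ ^ 2)
      (lt_of_le_of_lt hlt (by rw [h00, exp_lt_exp]; push_cast; linarith))
    rw [← e2, sub_add_cancel]
  have hpow : ∀ v : HeightOneSpectrum R, v.intValuation (p ^ (2 * N))
      = exp (-((2 * (N * e v) : ℕ) : ℤ)) := by
    intro v
    rw [map_pow, he, ← exp_nsmul, nsmul_eq_mul]
    congr 1; push_cast; ring
  let K := FractionRing R
  have hpK : algebraMap R K (p ^ (2 * N)) ≠ 0 :=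
    (map_ne_zero_iff _ (IsFractionRing.injective R K)).2 (pow_ne_zero _ hp)
  obtain ⟨γ, hγ⟩ := HeightOneSpectrum.mem_integers_of_valuation_le_one (R := R) K
    (algebraMap R K V / algebraMap R K (p ^ (2 * N))) (by
      intro v
      rw [map_div₀, HeightOneSpectrum.valuation_of_algebraMap,
        HeightOneSpectrum.valuation_of_algebraMap]
      by_cases hv : v ∈ S
      · rw [hval v hv, hpow v, div_self exp_ne_zero]
      · have : v.intValuation p = 1 := by
          rw [HeightOneSpectrum.intValuation_eq_one_iff]
          exact fun h => hv ((hmem v).2 h)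
        rw [map_pow, this, one_pow, div_one]
        exact v.intValuation_le_one _)
  have hVγ : V = p ^ (2 * N) * γ := by
    apply IsFractionRing.injective R K
    rw [map_mul, hγ, mul_div_cancel₀ _ hpK]
  refine ⟨N, x, y, z, γ, hVγ, ?_⟩
  rw [← Ideal.isCoprime_span_singleton_iff, Ideal.isCoprime_iff_sup_eq]
  by_contra hne
  obtain ⟨P, hP, hle⟩ := Ideal.exists_le_maximal _ hne
  have hγP : γ ∈ P := hle (Ideal.mem_sup_left (Ideal.mem_span_singleton_self _))
  have hpP : p ∈ P := hle (Ideal.mem_sup_right (Ideal.mem_span_singleton_self _))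
  let v : HeightOneSpectrum R := ⟨P, hP.isPrime, fun h => hp (by simpa [h] using hpP)⟩
  have hvS : v ∈ S := (hmem v).2 hpP
  have h1 := hval v hvS
  rw [hVγ, map_mul, hpow v] at h1
  have h2 : v.intValuation γ = 1 := by
    apply mul_left_cancel₀ (exp_ne_zero (a := -((2 * (N * e v) : ℕ) : ℤ)))
    rw [h1, mul_one]
  exact (ne_of_lt ((v.intValuation_lt_one_iff_mem γ).2 hγP)) h2

end Dyadic

/-! ### Totally positive elements are multipliers -/

section TotallyPositiveMultipliers
universe u
variable {F : Type u} [Field F] {D : Type*} [DivisionRing D] [Algebra F D] [StarRing D]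

lemma not_isUnit_two [NumberField F] : ¬ IsUnit (2 : 𝓞 F) := by
  intro h
  obtain ⟨y, hy⟩ := h.exists_right_inv
  have e : (y : F) = algebraMap ℚ F (1 / 2) := by
    have e := congrArg (algebraMap (𝓞 F) F) hy
    simp only [map_mul, map_ofNat, map_one, ← RingOfIntegers.coe_eq_algebraMap] at e
    rw [map_div₀, map_one, map_ofNat]
    field_simp
    linear_combination e
  have hInt : IsIntegral ℤ (y : F) := y.isIntegral_coe
  rw [e, isIntegral_algebraMap_iff (algebraMap ℚ F).injective,
    IsIntegrallyClosed.isIntegral_iff] at hInt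
  obtain ⟨n, hn⟩ := hInt
  have h2 : (2 * n : ℚ) = 1 := by
    have : (n : ℚ) = 1 / 2 := by simpa using hn
    linarith
  have h3 : 2 * n = 1 := by exact_mod_cast h2
  omega

/-- A trace-zero element may be rescaled so that its reduced norm becomes integral. -/
lemma exists_integral_nrd [NumberField F] (htr : ∀ d : D, ∃ t : F, d + star d = algebraMap F D t)
    (hs : ∀ c : F, star (algebraMap F D c) = algebraMap F D c) {i : D} (hi0 : i ≠ 0) :
    ∃ (c : F) (A : 𝓞 F), c ≠ 0 ∧ A ≠ 0 ∧ nrd htr (c • i) = (A : F) := by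
  obtain ⟨R, hR, -, y, hy⟩ := exists_nat_mul_integral (nrd htr i) 0
  have hR' : (R : F) ≠ 0 := Nat.cast_ne_zero.2 hR.ne'
  have e : nrd htr ((R : F) • i) = (((R : 𝓞 F) * y : 𝓞 F) : F) := by
    rw [nrd_smul htr hs]
    simp only [RingOfIntegers.coe_eq_algebraMap, map_mul, map_natCast] at hy ⊢
    rw [hy]; ring
  refine ⟨R, R * y, hR', ?_, e⟩
  have := nrd_ne_zero htr (smul_ne_zero hR' hi0)
  rw [e] at this
  exact RingOfIntegers.coe_ne_zero_iff.1 this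

/-- `D` contains a trace-zero element whose reduced norm is an integer prime to `2`. -/
lemma exists_pure_coprime [NumberField F]
    (htr : ∀ d : D, ∃ t : F, d + star d = algebraMap F D t)
    (hs : ∀ c : F, star (algebraMap F D c) = algebraMap F D c)
    (hc : ∀ d : D, (∀ z, d * z = z * d) → ∃ t : F, d = algebraMap F D t)
    (hnF : ∃ d : D, ∀ t : F, d ≠ algebraMap F D t) :
    ∃ (i : D) (α : 𝓞 F), i ≠ 0 ∧ star i = -i ∧ nrd htr i = (α : F) ∧ IsCoprime α 2 := by
  obtain ⟨d, hd⟩ := hnF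
  obtain ⟨i₀, hi₀, hi₀s⟩ : ∃ i : D, i ≠ 0 ∧ star i = -i := by
    refine ⟨d - star d, fun h => ?_, by rw [star_sub, star_star, neg_sub]⟩
    obtain ⟨t, ht⟩ := star_eq_self htr (sub_eq_zero.1 h).symm
    exact hd t ht
  obtain ⟨j₀, hj₀, hj₀s, hij₀⟩ := exists_anticommuting htr hs hc hi₀s hi₀
  obtain ⟨c, A, hc0, hA, hcA⟩ := exists_integral_nrd htr hs hi₀
  obtain ⟨c', B, hc0', hB, hcB⟩ := exists_integral_nrd htr hs hj₀
  set i := c • i₀ with hidef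
  set j := c' • j₀ with hjdef
  have his : star i = -i := by rw [hidef, star_smul' hs, hi₀s, smul_neg]
  have hjs : star j = -j := by rw [hjdef, star_smul' hs, hj₀s, smul_neg]
  have hij : i * j = -(j * i) := by
    rw [hidef, hjdef, smul_mul_smul_comm, smul_mul_smul_comm, hij₀, smul_neg, mul_comm c]
  have hi2 : i * i = -algebraMap F D (nrd htr i) := by
    rw [← mul_star_eq, his, mul_neg, neg_neg]
  have hj2 : j * j = -algebraMap F D (nrd htr j) := by
    rw [← mul_star_eq, hjs, mul_neg, neg_neg]
  obtain ⟨N, x, y, z, γ, hγ, hcop⟩ := exists_coprime_value (R := 𝓞 F) (p := 2) two_ne_zero hA hB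
  have hks : star (i * j) = -(i * j) := by
    rw [star_mul, his, hjs, neg_mul_neg, hij, neg_neg]
  set w : D := (x : F) • i + (y : F) • j + (z : F) • (i * j) with hw
  have hws : star w = -w := by
    rw [hw]
    simp only [star_add, star_smul' hs, his, hjs, hks, smul_neg]
    abel
  have hik : i * (i * j) = -((i * j) * i) := by
    rw [hij, neg_mul, mul_neg, ← mul_assoc, hij, neg_mul, mul_assoc]
  have hjk : j * (i * j) = -((i * j) * j) := by
    rw [mul_assoc, ← mul_assoc j i j, eq_neg_of_add_eq_zero_left (a := j * i) (b := i * j)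
      (by rw [hij]; abel), neg_mul, mul_assoc]
  have hwn : nrd htr w = (A : F) * x ^ 2 + B * y ^ 2 + A * B * z ^ 2 := by
    apply (algebraMap F D).injective
    rw [← mul_star_eq, hws, mul_neg, hw]
    have hk2 : (i * j) * (i * j) = -((A * B : F) • (1 : D)) := by
      have : (i * j) * (i * j) = -((i * i) * (j * j)) := by
        rw [mul_assoc, hjk, mul_neg]; simp only [mul_assoc]
      rw [this, hi2, hj2, neg_mul_neg, ← map_mul, hcA, hcB, Algebra.algebraMap_eq_smul_one]
    have hi2' : i * i = -((A : F) • (1 : D)) := by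
      rw [hi2, hcA, Algebra.algebraMap_eq_smul_one]
    have hj2' : j * j = -((B : F) • (1 : D)) := by
      rw [hj2, hcB, Algebra.algebraMap_eq_smul_one]
    have hji : j * i = -(i * j) := by rw [hij, neg_neg]
    generalize hk : i * j = k at hks hw hik hjk hk2 hji ⊢
    simp only [add_mul, mul_add, smul_mul_smul_comm, hik, hjk, hk2, hi2', hj2', hji, hk,
      Algebra.algebraMap_eq_smul_one (R := F) (A := D)]
    module
  have h2N : ((2 : F) ^ N) ≠ 0 := pow_ne_zero _ two_ne_zero
  have hn : nrd htr (((2 : F) ^ N)⁻¹ • w) = (γ : F) := by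
    have e := congrArg (algebraMap (𝓞 F) F) hγ
    simp only [map_add, map_mul, map_pow, map_ofNat, ← RingOfIntegers.coe_eq_algebraMap] at e
    rw [nrd_smul htr hs, hwn, e, pow_mul']
    field_simp
  refine ⟨((2 : F) ^ N)⁻¹ • w, γ, ?_, ?_, hn, hcop⟩
  · intro h0
    have h1 := mul_star_eq htr (((2 : F) ^ N)⁻¹ • w)
    rw [hn, h0, zero_mul] at h1
    have hγ0 : γ = 0 := by
      apply RingOfIntegers.coe_injective
      rw [map_zero]
      exact (map_eq_zero_iff _ (algebraMap F D).injective).1 h1.symm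
    rw [hγ0, isCoprime_zero_left] at hcop
    exact not_isUnit_two hcop
  · rw [star_smul' hs, hws, smul_neg]

/-- Every totally positive element of `F` is the multiplier of a similitude of the unit form of
rank four. -/
theorem isMultiplier_of_totally_positive [NumberField F]
    (ht : ∀ (σ : F →+* ℂ) (x : F), (σ x).im = 0)
    (htr : ∀ d : D, ∃ t : F, d + star d = algebraMap F D t)
    (hs : ∀ c : F, star (algebraMap F D c) = algebraMap F D c)
    (hc : ∀ d : D, (∀ z, d * z = z * d) → ∃ t : F, d = algebraMap F D t)
    (hnF : ∃ d : D, ∀ t : F, d ≠ algebraMap F D t)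
    (hdef : ∀ σ : F →+* ℝ,
      letI : Algebra F ℝ := σ.toAlgebra
      Nonempty ((ℝ ⊗[F] D) ≃ₐ[ℝ] Quaternion ℝ))
    (a : F) (ha : ∀ σ : F →+* ℂ, 0 < (σ a).re) : IsMultiplier D Quad a := by
  obtain ⟨i, α, hi0, his, hiα, hcop⟩ := exists_pure_coprime htr hs hc hnF
  obtain ⟨j₀, hj₀, hj₀s, hij₀⟩ := exists_anticommuting htr hs hc his hi0
  obtain ⟨c, β, hc0, hβ, hcβ⟩ := exists_integral_nrd htr hs hj₀
  have hα : ∀ σ : F →+* ℂ, 0 < (σ (α : F)).re := by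
    intro σ
    rw [← hiα]
    exact nrd_pure_pos htr hs hc (realEmb ht σ) (hdef _) his hi0
  refine totally_positive_mem ht α β hcop hα hβ (IsMultiplier D Quad)
    (fun x y hx hy => hx.mul hy) (fun x hx => hx.inv hs) ?_ a ha
  rintro u v w ⟨p₀, p₁, p₂, p₃, rfl⟩ ⟨q₀, q₁, q₂, q₃, rfl⟩ ⟨r₀, r₁, r₂, r₃, rfl⟩ -
  have hjs : star (c • j₀) = -(c • j₀) := by rw [star_smul' hs, hj₀s, smul_neg]
  have hij : i * (c • j₀) = -((c • j₀) * i) := by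
    rw [mul_smul_comm, smul_mul_assoc, hij₀, smul_neg]
  have := isMultiplier_sum htr hs (fun l => ![p₀, p₁, p₂, p₃] l • (1 : D)
    + ![q₀, q₁, q₂, q₃] l • i + ![r₀, r₁, r₂, r₃] l • (c • j₀))
  simp only [nrd_of_orthogonal htr hs his hjs hij, Fin.sum_univ_four, hiα, hcβ] at this
  convert this using 1
  simp
  ring

end TotallyPositiveMultipliers

/-! ### Positivity of traces -/

section TracePositivity
variable {F : Type*} [Field F] [NumberField F]

lemma algTraceQ_algebraMap {D : Type*} [DivisionRing D] [CharZero D] [Algebra F D]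
    [FiniteDimensional F D] (z : F) :
    algTraceQ D (algebraMap F D z) = finrank F D * Algebra.trace ℚ F z := by
  classical
  set b := Module.finBasis ℚ F
  set B := Module.finBasis F D
  rw [algTraceQ, LinearMap.trace_eq_matrix_trace ℚ (b.smulTower B), Algebra.trace_apply,
    LinearMap.trace_eq_matrix_trace ℚ b, Matrix.trace, Matrix.trace, Fintype.sum_prod_type_right]
  have h : ∀ (j : Fin (finrank F D)) (i : Fin (finrank ℚ F)),
      (LinearMap.toMatrix (b.smulTower B) (b.smulTower B)
        (LinearMap.mulLeft ℚ (algebraMap F D z))).diag (i, j)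
      = (LinearMap.toMatrix b b (LinearMap.mulLeft ℚ z)).diag i := by
    intro j i
    rw [Matrix.diag_apply, Matrix.diag_apply, LinearMap.toMatrix_apply, LinearMap.toMatrix_apply,
      Basis.smulTower_repr, Basis.smulTower_apply, LinearMap.mulLeft_apply, LinearMap.mulLeft_apply,
      ← Algebra.smul_def, smul_smul, map_smul]
    simp
  simp only [h, Finset.sum_const, Finset.card_univ, Fintype.card_fin, nsmul_eq_mul]
  rfl

lemma trace_eq_sum_re (x : F) :
    ((Algebra.trace ℚ F x : ℚ) : ℝ) = ∑ σ : F →+* ℂ, (σ x).re := by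
  have h := trace_eq_sum_embeddings (K := ℚ) (L := F) ℂ (x := x)
  have h2 : ∑ σ : F →ₐ[ℚ] ℂ, σ x = ∑ σ : F →+* ℂ, σ x :=
    (Fintype.sum_equiv (RingHom.equivRatAlgHom F ℂ) (fun σ => σ x) (fun σ => σ x)
      (fun σ => by simp [RingHom.equivRatAlgHom_apply])).symm
  rw [h2] at h
  have h3 := congrArg Complex.re h
  rw [Complex.re_sum] at h3
  rw [← h3]
  simp

/-- If `Tr (c² a) > 0` for all `c ≠ 0` then `a` is totally positive: `c` can be chosen to be huge at
one given embedding and bounded at all the others. -/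
lemma totally_positive_of_trace (ht : ∀ (σ : F →+* ℂ) (x : F), (σ x).im = 0) {a : F}
    (h : ∀ c : F, c ≠ 0 → 0 < Algebra.trace ℚ F (c ^ 2 * a)) (σ₀ : F →+* ℂ) :
    0 < (σ₀ a).re := by
  classical
  by_contra! hneg
  have ha0 : a ≠ 0 := by
    rintro rfl
    simpa using h 1 one_ne_zero
  have hlt : (σ₀ a).re < 0 := lt_of_le_of_ne hneg (re_embedding_ne_zero ht σ₀ ha0)
  obtain ⟨C, hC, happ⟩ := exists_approx ht
  set S : ℝ := ∑ σ : F →+* ℂ, C ^ 2 * |(σ a).re| with hS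
  have hS0 : 0 ≤ S := Finset.sum_nonneg fun _ _ => by positivity
  set M : ℝ := 1 + S / (-(σ₀ a).re) with hM
  have hM1 : 1 ≤ M := by
    have : 0 ≤ S / (-(σ₀ a).re) := div_nonneg hS0 (by linarith)
    linarith
  obtain ⟨k, hk⟩ := happ (fun σ => if σ = σ₀ then C + M else 0)
  have hk0 : M ≤ (σ₀ (k : F)).re := by
    have := hk σ₀
    rw [if_pos rfl, abs_le] at this
    linarith [this.1]
  have hkne : (k : F) ≠ 0 := by
    intro h0
    rw [h0, map_zero, Complex.zero_re] at hk0
    linarith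
  have hpos : (0 : ℝ) < ((Algebra.trace ℚ F ((k : F) ^ 2 * a) : ℚ) : ℝ) := by
    exact_mod_cast h k hkne
  rw [trace_eq_sum_re, ← Finset.add_sum_erase _ _ (Finset.mem_univ σ₀)] at hpos
  have h1 : ∑ σ ∈ Finset.univ.erase σ₀, (σ ((k : F) ^ 2 * a)).re ≤ S := by
    refine le_trans (Finset.sum_le_sum (g := fun σ : F →+* ℂ => C ^ 2 * |(σ a).re|) ?_)
      (Finset.sum_le_sum_of_subset_of_nonneg (Finset.erase_subset _ _)
        fun _ _ _ => by positivity)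
    intro σ hσ
    have := hk σ
    rw [if_neg (Finset.ne_of_mem_erase hσ), sub_zero] at this
    rw [re_embedding_mul ht, re_embedding_sq ht, ← sq_abs]
    have h2 : |(σ (k : F)).re| ^ 2 ≤ C ^ 2 := by gcongr
    calc _ ≤ |(σ (k : F)).re| ^ 2 * |(σ a).re| :=
          mul_le_mul_of_nonneg_left (le_abs_self _) (sq_nonneg _)
      _ ≤ _ := mul_le_mul_of_nonneg_right h2 (abs_nonneg _)
  rw [re_embedding_mul ht, re_embedding_sq ht] at hpos
  have h3 : M ≤ (σ₀ (k : F)).re ^ 2 := by nlinarith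
  have h4 : (σ₀ (k : F)).re ^ 2 * (σ₀ a).re ≤ M * (σ₀ a).re :=
    mul_le_mul_of_nonpos_right h3 hlt.le
  have h5 : M * (σ₀ a).re = (σ₀ a).re - S := by
    rw [hM]; field_simp [hlt.ne]; ring
  linarith

end TracePositivity

/-! ### Hermitian forms over the quaternion algebra -/

section HermitianForms
variable {D : Type*} [DivisionRing D] [CharZero D] [StarRing D]
  {V : Type*} [AddCommGroup V] [Module Dᵐᵒᵖ V]

lemma form_zero_right {ψ : V → V → D} (h : IsHermitianForm D V star ψ) (v : V) : ψ v 0 = 0 := by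
  have := h.2.1 v 0 0
  rw [add_zero] at this
  exact left_eq_add.1 this

lemma form_sum_right {ψ : V → V → D} (h : IsHermitianForm D V star ψ) {ι : Type*}
    (s : Finset ι) (v : V) (w : ι → V) : ψ v (∑ i ∈ s, w i) = ∑ i ∈ s, ψ v (w i) := by
  classical
  induction s using Finset.induction_on with
  | empty => simp [form_zero_right h]
  | insert i s hi ih => rw [Finset.sum_insert hi, Finset.sum_insert hi, h.2.1, ih]

lemma form_sum_left {ψ : V → V → D} (h : IsHermitianForm D V star ψ) {ι : Type*}
    (s : Finset ι) (v : ι → V) (w : V) : ψ (∑ i ∈ s, v i) w = ∑ i ∈ s, ψ (v i) w := by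
  rw [h.2.2.2.2 w, form_sum_right h, star_sum]
  exact Finset.sum_congr rfl fun i _ => (h.2.2.2.2 _ _).symm

lemma form_self_ne_zero {ψ : V → V → D} (h : IsPosDefHermitianForm D V star ψ) {v : V}
    (hv : v ≠ 0) : ψ v v ≠ 0 := by
  intro h0
  have := h.2 v hv
  rw [h0, algTraceQ] at this
  simp at this

/-- Gram–Schmidt orthogonalisation. -/
lemma exists_orthogonal [Module.Finite Dᵐᵒᵖ V] {ψ : V → V → D}
    (h : IsPosDefHermitianForm D V star ψ) (n : ℕ) (hn : n ≤ finrank Dᵐᵒᵖ V) :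
    ∃ e : Fin n → V, (∀ i, e i ≠ 0) ∧ ∀ i j, i ≠ j → ψ (e i) (e j) = 0 := by
  induction n with
  | zero => exact ⟨Fin.elim0, fun i => i.elim0, fun i => i.elim0⟩
  | succ n ih =>
    obtain ⟨e, he0, he⟩ := ih (by omega)
    have hspan : Submodule.span Dᵐᵒᵖ (Set.range e) ≠ ⊤ := by
      intro htop
      have := finrank_range_le_card (R := Dᵐᵒᵖ) (b := e)
      rw [Set.finrank, htop, finrank_top, Fintype.card_fin] at this
      omega
    obtain ⟨v, hv⟩ : ∃ v, v ∉ Submodule.span Dᵐᵒᵖ (Set.range e) := by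
      by_contra! hall
      exact hspan (eq_top_iff.2 fun x _ => hall x)
    set u : V := ∑ i, op (-((ψ (e i) (e i))⁻¹ * ψ (e i) v)) • e i with hu
    have hu_mem : u ∈ Submodule.span Dᵐᵒᵖ (Set.range e) :=
      Submodule.sum_mem _ fun i _ => Submodule.smul_mem _ _ (Submodule.subset_span ⟨i, rfl⟩)
    have hort : ∀ j, ψ (e j) (v + u) = 0 := by
      intro j
      rw [h.1.2.1, hu, form_sum_right h.1, Finset.sum_eq_single j]
      · rw [h.1.2.2.2.1, mul_neg, ← mul_assoc, mul_inv_cancel₀ (form_self_ne_zero h (he0 j)),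
          one_mul,
          add_neg_cancel]
      · intro i _ hij
        rw [h.1.2.2.2.1, he j i hij.symm, zero_mul]
      · simp
    refine ⟨Fin.cons (v + u) e, ?_, ?_⟩
    · refine Fin.cases ?_ ?_
      · rw [Fin.cons_zero]
        intro h0
        exact hv (by rw [eq_neg_of_add_eq_zero_left h0]; exact neg_mem hu_mem)
      · intro i; rw [Fin.cons_succ]; exact he0 i
    · refine Fin.cases ?_ ?_
      · refine Fin.cases ?_ ?_
        · simp
        · intro j _
          rw [Fin.cons_zero, Fin.cons_succ, h.1.2.2.2.2, hort, star_zero]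
      · intro i
        refine Fin.cases ?_ ?_
        · intro _
          rw [Fin.cons_zero, Fin.cons_succ, hort]
        · intro j hij
          rw [Fin.cons_succ, Fin.cons_succ]
          exact he i j (fun h => hij (by rw [h]))

lemma exists_orthogonal_basis [Nontrivial V] [Module.Finite Dᵐᵒᵖ V] {ψ : V → V → D}
    (h : IsPosDefHermitianForm D V star ψ) :
    ∃ e : Basis (Fin (finrank Dᵐᵒᵖ V)) Dᵐᵒᵖ V, ∀ i j, i ≠ j → ψ (e i) (e j) = 0 := by
  obtain ⟨e, he0, he⟩ := exists_orthogonal h _ le_rfl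
  have : Nonempty (Fin (finrank Dᵐᵒᵖ V)) := ⟨⟨0, finrank_pos⟩⟩
  have hli : LinearIndependent Dᵐᵒᵖ e := by
    rw [Fintype.linearIndependent_iff]
    intro g hg j
    have h1 : ψ (e j) (∑ i, g i • e i) = 0 := by rw [hg, form_zero_right h.1]
    rw [form_sum_right h.1, Finset.sum_eq_single j] at h1
    · rw [← op_unop (g j), h.1.2.2.2.1] at h1
      have := (mul_eq_zero.1 h1).resolve_left (form_self_ne_zero h (he0 j))
      rw [← op_unop (g j), this, op_zero]
    · intro i _ hij
      rw [← op_unop (g i), h.1.2.2.2.1, he j i hij.symm, zero_mul]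
    · simp
  refine ⟨basisOfLinearIndependentOfCardEqFinrank hli (by simp), ?_⟩
  simpa using he

variable {F : Type*} [Field F] [NumberField F] [Algebra F D] [FiniteDimensional F D]

/-- The values `ψ(v,v)`, `v ≠ 0`, of a positive definite form are totally positive elements
of `F`. -/
lemma exists_form_self_eq (ht : ∀ (σ : F →+* ℂ) (x : F), (σ x).im = 0)
    (htr : ∀ d : D, ∃ t : F, d + star d = algebraMap F D t)
    (hs : ∀ c : F, star (algebraMap F D c) = algebraMap F D c)
    {ψ : V → V → D} (h : IsPosDefHermitianForm D V star ψ) {v : V} (hv : v ≠ 0) :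
    ∃ a : F, ψ v v = algebraMap F D a ∧ ∀ σ : F →+* ℂ, 0 < (σ a).re := by
  obtain ⟨a, ha⟩ := star_eq_self htr (h.1.2.2.2.2 v v).symm
  refine ⟨a, ha, totally_positive_of_trace ht fun c hc => ?_⟩
  have hc' : op (algebraMap F D c) ≠ 0 := by
    rw [Ne, op_eq_zero_iff]
    exact (map_ne_zero_iff _ (algebraMap F D).injective).2 hc
  have h1 := h.2 (op (algebraMap F D c) • v) (smul_ne_zero hc' hv)
  rw [h.1.2.2.1, h.1.2.2.2.1, hs, ha, ← map_mul, ← map_mul, algTraceQ_algebraMap,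
    show c * (a * c) = c ^ 2 * a by ring] at h1
  exact pos_of_mul_pos_right h1 (by positivity)

open Matrix in
/-- If every totally positive element is the multiplier of a similitude of the unit form on
`ι → D`, then orthogonal bases for two positive definite forms can be matched up to similitudes,
which makes their `ι`-fold multiples isometric. -/
theorem exists_isometry (ht : ∀ (σ : F →+* ℂ) (x : F), (σ x).im = 0)
    (htr : ∀ d : D, ∃ t : F, d + star d = algebraMap F D t)
    (hs : ∀ c : F, star (algebraMap F D c) = algebraMap F D c)
    {ι : Type*} [Fintype ι] [DecidableEq ι]
    (hP : ∀ a : F, (∀ σ : F →+* ℂ, 0 < (σ a).re) → IsMultiplier D ι a)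
    [Nontrivial V] [Module.Finite Dᵐᵒᵖ V] {ψ₁ ψ₂ : V → V → D}
    (h₁ : IsPosDefHermitianForm D V star ψ₁) (h₂ : IsPosDefHermitianForm D V star ψ₂) :
    ∃ f : (ι → V) ≃ₗ[Dᵐᵒᵖ] (ι → V),
      ∀ x y : ι → V, ∑ i, ψ₂ (f x i) (f y i) = ∑ i, ψ₁ (x i) (y i) := by
  obtain ⟨e, he⟩ := exists_orthogonal_basis h₁
  obtain ⟨e', he'⟩ := exists_orthogonal_basis h₂
  choose a ha hapos using fun l => exists_form_self_eq ht htr hs h₁ (e.ne_zero l)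
  choose a' ha' hapos' using fun l => exists_form_self_eq ht htr hs h₂ (e'.ne_zero l)
  have hM : ∀ l, IsMultiplier D ι (a l / a' l) := fun l => hP _ fun σ => by
    rw [div_eq_mul_inv, re_embedding_mul ht, re_embedding_inv ht]
    exact mul_pos (hapos l σ) (inv_pos.2 (hapos' l σ))
  choose M hM _ using hM
  have ha0 : ∀ l, a' l ≠ 0 := fun l h0 => by
    have := hapos' l (Classical.arbitrary _)
    rw [h0, map_zero, Complex.zero_re] at this
    exact lt_irrefl _ this
  -- coordinates with respect to the first basis
  let c : (ι → V) → Fin (finrank Dᵐᵒᵖ V) → ι → D := fun x l j => unop (e.repr (x j) l)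
  let g : (ι → V) →ₗ[Dᵐᵒᵖ] (ι → V) :=
    { toFun := fun x i => ∑ l, op ((M l *ᵥ c x l) i) • e' l
      map_add' := fun x y => by
        funext i
        rw [Pi.add_apply, ← Finset.sum_add_distrib]
        refine Finset.sum_congr rfl fun l _ => ?_
        rw [← add_smul, ← op_add]
        congr 2
        rw [← Pi.add_apply, ← mulVec_add]
        congr 2
        funext j
        simp [c]
      map_smul' := fun d x => by
        funext i
        rw [RingHom.id_apply, Pi.smul_apply, Finset.smul_sum]
        refine Finset.sum_congr rfl fun l _ => ?_
        rw [smul_smul]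
        congr 1
        apply unop_injective
        simp only [unop_op, unop_mul, mulVec, dotProduct, Finset.sum_mul, c, Pi.smul_apply,
          map_smul,
          Finsupp.smul_apply, smul_eq_mul, mul_assoc] }
  have hform₁ : ∀ x y : ι → V, ∑ i, ψ₁ (x i) (y i)
      = ∑ l, star (c x l) ⬝ᵥ (a l • c y l) := by
    intro x y
    simp only [dotProduct]
    rw [Finset.sum_comm]
    refine Finset.sum_congr rfl fun i _ => ?_
    conv_lhs => rw [← e.sum_repr (x i), ← e.sum_repr (y i)]
    rw [form_sum_left h₁.1]
    refine Finset.sum_congr rfl fun l _ => ?_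
    rw [form_sum_right h₁.1, Finset.sum_eq_single l]
    · rw [← op_unop (e.repr (x i) l), ← op_unop (e.repr (y i) l), h₁.1.2.2.1, h₁.1.2.2.2.1, ha,
        ← Algebra.smul_def]
      rfl
    · intro k _ hk
      rw [← op_unop (e.repr (x i) l), ← op_unop (e.repr (y i) k), h₁.1.2.2.1, h₁.1.2.2.2.1,
        he l k hk.symm, zero_mul, mul_zero]
    · simp
  have hform₂ : ∀ x y : ι → V, ∑ i, ψ₂ (g x i) (g y i)
      = ∑ l, star (M l *ᵥ c x l) ⬝ᵥ (a' l • (M l *ᵥ c y l)) := by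
    intro x y
    simp only [dotProduct]
    rw [Finset.sum_comm]
    refine Finset.sum_congr rfl fun i _ => ?_
    change ψ₂ (∑ l, op ((M l *ᵥ c x l) i) • e' l) (∑ l, op ((M l *ᵥ c y l) i) • e' l) = _
    rw [form_sum_left h₂.1]
    refine Finset.sum_congr rfl fun l _ => ?_
    rw [form_sum_right h₂.1, Finset.sum_eq_single l]
    · rw [h₂.1.2.2.1, h₂.1.2.2.2.1, ha', ← Algebra.smul_def]
      rfl
    · intro k _ hk
      rw [h₂.1.2.2.1, h₂.1.2.2.2.1, he' l k hk.symm, zero_mul, mul_zero]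
    · simp
  have hiso : ∀ x y : ι → V, ∑ i, ψ₂ (g x i) (g y i) = ∑ i, ψ₁ (x i) (y i) := by
    intro x y
    rw [hform₁, hform₂]
    refine Finset.sum_congr rfl fun l _ => ?_
    rw [star_mulVec, ← dotProduct_mulVec, mulVec_smul, mulVec_mulVec, hM, smul_mulVec,
      one_mulVec, smul_smul, mul_div_cancel₀ _ (ha0 l)]
  have hinj : Function.Injective g := by
    rw [injective_iff_map_eq_zero]
    intro x hx
    funext j
    by_contra hj
    apply form_self_ne_zero h₁ hj
    have h3 := hiso x (Pi.single j (x j))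
    rw [hx, Finset.sum_eq_single_of_mem (s := Finset.univ) (f := fun i => ψ₁ (x i) _) j
      (by simp)] at h3
    · rw [Pi.single_eq_same] at h3
      rw [← h3]
      refine Finset.sum_eq_zero fun i _ => ?_
      rw [h₂.1.2.2.2.2, Pi.zero_apply, form_zero_right h₂.1, star_zero]
    · intro i _ hij
      rw [Pi.single_eq_of_ne hij, form_zero_right h₁.1]
  exact ⟨LinearEquiv.ofInjectiveEndo g hinj, fun x y => hiso x y⟩

end HermitianForms

end FourthPower

/-- **Albert type III case of the fourth-power Hermitian form theorem**:
`D` is a totally definite quaternion division algebra over a totally real number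
field `F`, with its canonical involution. -/
theorem fourth_power_hermitian_form_type_III
    (F : Type*) [Field F] [NumberField F]
    (htotreal : ∀ (σ : F →+* ℂ) (x : F), (σ x).im = 0)
    (D : Type*) [DivisionRing D] [CharZero D] [Algebra F D]
    [FiniteDimensional F D] [FiniteDimensional ℚ D]
    (hquat : Module.finrank F D = 4)
    (hcentral : Subalgebra.center F D = ⊥)
    (hdef : ∀ σ : F →+* ℝ,
      letI : Algebra F ℝ := σ.toAlgebra
      Nonempty ((ℝ ⊗[F] D) ≃ₐ[ℝ] Quaternion ℝ))
    -- `st` is the canonical (quaternion conjugation) involution of `D`: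
    (st : D → D)
    (hadd : ∀ x y : D, st (x + y) = st x + st y)
    (hmul : ∀ x y : D, st (x * y) = st y * st x)
    (hinv : ∀ x : D, st (st x) = x)
    (hstF : ∀ c : F, st (algebraMap F D c) = algebraMap F D c)
    (htrace : ∀ d : D, ∃ t : F, d + st d = algebraMap F D t)
    (V : Type*) [AddCommGroup V] [Module Dᵐᵒᵖ V] [Nontrivial V] [Module.Finite Dᵐᵒᵖ V]
    (ψ₁ ψ₂ : V → V → D)
    (h₁ : IsPosDefHermitianForm D V st ψ₁)
    (h₂ : IsPosDefHermitianForm D V st ψ₂) :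
    ∃ f : (Fin 4 → V) ≃ₗ[Dᵐᵒᵖ] (Fin 4 → V),
      ∀ x y : Fin 4 → V, ∑ i, ψ₂ (f x i) (f y i) = ∑ i, ψ₁ (x i) (y i) := by
  letI : StarRing D :=
    { star := st
      star_involutive := hinv
      star_mul := hmul
      star_add := hadd }
  have hc : ∀ d : D, (∀ z, d * z = z * d) → ∃ t : F, d = algebraMap F D t := by
    intro d hd
    have : d ∈ Subalgebra.center F D := Subalgebra.mem_center_iff.2 fun z => (hd z).symm
    rw [hcentral, Algebra.mem_bot] at this
    obtain ⟨t, rfl⟩ := this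
    exact ⟨t, rfl⟩
  have hnF : ∃ d : D, ∀ t : F, d ≠ algebraMap F D t := by
    by_contra! hall
    have hle : Module.finrank F D ≤ Module.finrank F F :=
      LinearMap.finrank_le_finrank_of_surjective (f := Algebra.linearMap F D)
        fun d => (hall d).imp fun t h => h.symm
    rw [hquat, Module.finrank_self] at hle
    omega
  exact FourthPower.exists_isometry htotreal htrace hstF
    (fun a ha => (FourthPower.isMultiplier_of_totally_positive htotreal htrace hstF hc hnF hdef a
      ha).reindex (Fintype.equivFinOfCardEq (by simp))) h₁ h₂
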